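/- arXiv:2406.08400 — 3 statements merged into one kernel-verified Lean document; each statement's English description precedes it below -/
import Mathlib

section
/- Let s > 3/4 and b > 1/2. There exists a constant C > 0 such that for every T with 0 < T ≤ 1 and every Schwartz function U : ℝ² → ℂ one has ( ∫_ℝ ( sup_{|t| ≤ T} |U(x,t)| )² dx )^{1/2} ≤ C · ( ∫_{ℝ²} (1+|ξ|)^{2s} (1+|τ−ξ³|)^{2b} |Û(ξ,τ)|² dξ dτ )^{1/2}. -/
open MeasureTheory ENNReal

/-!
Linearise the supremum by a measurable choice `t(x)`, so that it suffices to bound `U(x, t(x))` in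
`L²ₓ` uniformly in `t`. Writing `U` as the inverse Fourier integral of `Û` and substituting
`τ = ξ³ + σ`, the weight `(1 + |σ|)^{-2b}` is integrable because `2b > 1`, which reduces matters to
free solutions with weight `(1 + |ξ|)^{-2s}` at frequency `ξ`. By `TT*`, a free estimate follows
from Schur's test once `∫ e^{i(zξ + rξ³)} (1 + |ξ|)^{-2s} dξ` has a majorant in `L¹(dz)`, uniform in
the time difference `r`.

At frequencies `|ξ| ~ N` the unweighted kernel is `O(N)` for `|z| ≲ 1 / N` and decays like
`1 / (N z²)` for `|z| ≫ N²|r|`, by non-stationary phase. For `|z| ≲ N²|r|` van der Corput's lemma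
gives `(N|r|)^{-1/2} ≲ (N / |z|)^{1/2}`, which no longer depends on `r`. For bounded `r` the
majorant has `L¹` norm `O(N^{3/2})`, and summing over dyadic `N` converges exactly when `2s > 3/2`.
-/

open Complex (I)
open scoped ComplexConjugate

namespace Airy

section OscillatoryIntegral

variable {φ φ' φ'' φ''' : ℝ → ℝ} {f f' f'' : ℝ → ℂ} {l r : ℝ}

theorem integral_cexp_mul_deriv_mul
    (hφ : ∀ η ∈ Set.uIcc l r, HasDerivAt φ (φ' η) η) (hφ' : ContinuousOn φ' (Set.uIcc l r))
    (hf : ∀ η ∈ Set.uIcc l r, HasDerivAt f (f' η) η) (hf' : ContinuousOn f' (Set.uIcc l r)) :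
    ∫ η in l..r, Complex.exp (φ η * I) * (φ' η * f η) =
      I * ((∫ η in l..r, Complex.exp (φ η * I) * f' η) -
        (Complex.exp (φ r * I) * f r - Complex.exp (φ l * I) * f l)) := by
  have hφc : ContinuousOn φ (Set.uIcc l r) := HasDerivAt.continuousOn hφ
  have parts := intervalIntegral.integral_mul_deriv_eq_deriv_mul hf
    (fun η hη ↦ ((hφ η hη).ofReal_comp.mul_const I).cexp) hf'.intervalIntegrable
    (ContinuousOn.intervalIntegrable (by fun_prop))
  have hI : ∫ η in l..r, f η * (Complex.exp (φ η * I) * (φ' η * I)) =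
      I * ∫ η in l..r, Complex.exp (φ η * I) * (φ' η * f η) := by
    rw [← intervalIntegral.integral_const_mul]
    congr! 2
    ring
  simp only [mul_comm (f' _)] at parts
  rw [hI] at parts
  linear_combination (-I) * parts +
    (∫ η in l..r, Complex.exp (φ η * I) * (φ' η * f η)) * Complex.I_sq

theorem integral_cexp_mul_eq_of_deriv_ne_zero
    (hφ : ∀ η ∈ Set.uIcc l r, HasDerivAt φ (φ' η) η)
    (hφ' : ∀ η ∈ Set.uIcc l r, HasDerivAt φ' (φ'' η) η) (hφ'' : ContinuousOn φ'' (Set.uIcc l r))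
    (hne : ∀ η ∈ Set.uIcc l r, φ' η ≠ 0)
    (hf : ∀ η ∈ Set.uIcc l r, HasDerivAt f (f' η) η) (hf' : ContinuousOn f' (Set.uIcc l r))
    (hl : f l = 0) (hr : f r = 0) :
    ∫ η in l..r, Complex.exp (φ η * I) * f η =
      I * ∫ η in l..r, Complex.exp (φ η * I) * (f' η / φ' η - f η * φ'' η / φ' η ^ 2) := by
  have hne' : ∀ η ∈ Set.uIcc l r, (φ' η : ℂ) ≠ 0 := fun η hη ↦ mod_cast hne η hη
  have hφ'c : ContinuousOn φ' (Set.uIcc l r) := HasDerivAt.continuousOn hφ'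
  have hfc : ContinuousOn f (Set.uIcc l r) := HasDerivAt.continuousOn hf
  have hquot : ∀ η ∈ Set.uIcc l r, HasDerivAt (fun η ↦ f η / φ' η)
      (f' η / φ' η - f η * φ'' η / φ' η ^ 2) η := fun η hη ↦ by
    refine ((hf η hη).div (hφ' η hη).ofReal_comp (hne' η hη)).congr_deriv ?_
    have := hne' η hη
    field_simp
  have parts := integral_cexp_mul_deriv_mul hφ hφ'c hquot (by fun_prop (disch := simpa))
  simp only [hl, hr, zero_div, mul_zero, sub_zero] at parts
  rw [← parts]
  refine intervalIntegral.integral_congr fun η hη ↦ ?_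
  simp only [mul_div_cancel₀ _ (hne' η hη)]

theorem integral_cexp_mul_eq_of_deriv_ne_zero_twice
    (hφ : ∀ η ∈ Set.uIcc l r, HasDerivAt φ (φ' η) η)
    (hφ' : ∀ η ∈ Set.uIcc l r, HasDerivAt φ' (φ'' η) η)
    (hφ'' : ∀ η ∈ Set.uIcc l r, HasDerivAt φ'' (φ''' η) η)
    (hφ''' : ContinuousOn φ''' (Set.uIcc l r)) (hne : ∀ η ∈ Set.uIcc l r, φ' η ≠ 0)
    (hf : ∀ η ∈ Set.uIcc l r, HasDerivAt f (f' η) η)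
    (hf' : ∀ η ∈ Set.uIcc l r, HasDerivAt f' (f'' η) η) (hf'' : ContinuousOn f'' (Set.uIcc l r))
    (hl : f l = 0) (hr : f r = 0) (hl' : f' l = 0) (hr' : f' r = 0) :
    ∫ η in l..r, Complex.exp (φ η * I) * f η =
      -∫ η in l..r, Complex.exp (φ η * I) * (f'' η / φ' η ^ 2 - 3 * f' η * φ'' η / φ' η ^ 3 -
        f η * φ''' η / φ' η ^ 3 + 3 * f η * φ'' η ^ 2 / φ' η ^ 4) := by
  have hne' : ∀ η ∈ Set.uIcc l r, (φ' η : ℂ) ≠ 0 := fun η hη ↦ mod_cast hne η hη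
  have hφ'c : ContinuousOn φ' (Set.uIcc l r) := HasDerivAt.continuousOn hφ'
  have hφ''c : ContinuousOn φ'' (Set.uIcc l r) := HasDerivAt.continuousOn hφ''
  have hfc : ContinuousOn f (Set.uIcc l r) := HasDerivAt.continuousOn hf
  have hf'c : ContinuousOn f' (Set.uIcc l r) := HasDerivAt.continuousOn hf'
  have hg : ∀ η ∈ Set.uIcc l r, HasDerivAt (fun η ↦ f' η / φ' η - f η * φ'' η / φ' η ^ 2)
      (f'' η / φ' η - 2 * f' η * φ'' η / φ' η ^ 2 - f η * φ''' η / φ' η ^ 2 +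
        2 * f η * φ'' η ^ 2 / φ' η ^ 3) η := fun η hη ↦ by
    have hp := (hφ' η hη).ofReal_comp
    refine (((hf' η hη).div hp (hne' η hη)).sub
      (((hf η hη).mul (hφ'' η hη).ofReal_comp).div (hp.pow 2)
        (pow_ne_zero 2 (hne' η hη)))).congr_deriv ?_
    have := hne' η hη
    simp only [Pi.pow_apply, Pi.mul_apply]
    field_simp
    push_cast
    ring
  rw [integral_cexp_mul_eq_of_deriv_ne_zero hφ hφ' hφ''c hne hf hf'c hl hr,
    integral_cexp_mul_eq_of_deriv_ne_zero hφ hφ' hφ''c hne hg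
      (by fun_prop (disch := simpa)) (by simp [hl, hl']) (by simp [hr, hr']),
    ← mul_assoc, Complex.I_mul_I, neg_one_mul]
  refine congrArg _ (intervalIntegral.integral_congr fun η hη ↦ ?_)
  have := hne' η hη
  field_simp
  ring

theorem norm_integral_cexp_mul_le_of_le_abs_deriv {a κ M : ℝ} (hlr : l ≤ r) (ha : 0 < a)
    (hφ : ∀ η ∈ Set.Icc l r, HasDerivAt φ (φ' η) η)
    (hφ' : ∀ η ∈ Set.Icc l r, HasDerivAt φ' (φ'' η) η)
    (hφ'' : ∀ η ∈ Set.Icc l r, HasDerivAt φ'' (φ''' η) η)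
    (hφ''' : ContinuousOn φ''' (Set.Icc l r)) (hφ'_ge : ∀ η ∈ Set.Icc l r, a ≤ |φ' η|)
    (hφ''_le : ∀ η ∈ Set.Icc l r, |φ'' η| ≤ κ * a) (hφ'''_le : ∀ η ∈ Set.Icc l r, |φ''' η| ≤ κ * a)
    (hf : ∀ η ∈ Set.Icc l r, HasDerivAt f (f' η) η)
    (hf' : ∀ η ∈ Set.Icc l r, HasDerivAt f' (f'' η) η) (hf'' : ContinuousOn f'' (Set.Icc l r))
    (hf_le : ∀ η ∈ Set.Icc l r, ‖f η‖ ≤ M) (hf'_le : ∀ η ∈ Set.Icc l r, ‖f' η‖ ≤ M)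
    (hf''_le : ∀ η ∈ Set.Icc l r, ‖f'' η‖ ≤ M)
    (hl : f l = 0) (hr : f r = 0) (hl' : f' l = 0) (hr' : f' r = 0) :
    ‖∫ η in l..r, Complex.exp (φ η * I) * f η‖ ≤
      (1 + κ) * (1 + 3 * κ) * M * (r - l) / a ^ 2 := by
  have hne : ∀ η ∈ Set.Icc l r, φ' η ≠ 0 := fun η hη ↦ abs_pos.mp (ha.trans_le (hφ'_ge η hη))
  rw [← Set.uIcc_of_le hlr] at hφ hφ' hφ'' hφ''' hf hf' hf'' hne
  rw [integral_cexp_mul_eq_of_deriv_ne_zero_twice hφ hφ' hφ'' hφ''' hne hf hf' hf'' hl hr hl' hr',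
    norm_neg]
  have hpt : ∀ η ∈ Set.uIoc l r, ‖Complex.exp (φ η * I) * (f'' η / φ' η ^ 2 -
      3 * f' η * φ'' η / φ' η ^ 3 - f η * φ''' η / φ' η ^ 3 +
        3 * f η * φ'' η ^ 2 / φ' η ^ 4)‖ ≤ (1 + κ) * (1 + 3 * κ) * M / a ^ 2 := fun η hη ↦ by
    replace hη : η ∈ Set.Icc l r := Set.Ioc_subset_Icc_self (by rwa [Set.uIoc_of_le hlr] at hη)
    have hM : 0 ≤ M := (norm_nonneg _).trans (hf_le η hη)
    have hκ : 0 ≤ κ * a := (abs_nonneg _).trans (hφ''_le η hη)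
    rw [norm_mul, Complex.norm_exp_ofReal_mul_I, one_mul]
    calc _ ≤ ‖f'' η‖ / |φ' η| ^ 2 + 3 * ‖f' η‖ * |φ'' η| / |φ' η| ^ 3 +
          ‖f η‖ * |φ''' η| / |φ' η| ^ 3 + 3 * ‖f η‖ * |φ'' η| ^ 2 / |φ' η| ^ 4 := by
          refine (norm_add_le _ _).trans (add_le_add ((norm_sub_le _ _).trans
            (add_le_add ((norm_sub_le _ _).trans ?_) ?_)) ?_) <;> simp
      _ ≤ M / a ^ 2 + 3 * M * (κ * a) / a ^ 3 + M * (κ * a) / a ^ 3 +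
          3 * M * (κ * a) ^ 2 / a ^ 4 := by
          gcongr
          exacts [hf''_le η hη, hφ'_ge η hη, hf'_le η hη, hφ''_le η hη, hφ'_ge η hη, hf_le η hη,
            hφ'''_le η hη, hφ'_ge η hη, hf_le η hη, hφ''_le η hη, hφ'_ge η hη]
      _ = (1 + κ) * (1 + 3 * κ) * M / a ^ 2 := by field_simp; ring
  refine (intervalIntegral.norm_integral_le_of_norm_le_const hpt).trans_eq ?_
  rw [abs_of_nonneg (sub_nonneg.mpr hlr)]
  ring

theorem integral_deriv_div_sq_add_le {lam : ℝ} (hlam : 0 < lam) (hlr : l ≤ r)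
    (hφ' : ∀ η ∈ Set.Icc l r, HasDerivAt φ' (φ'' η) η) (hφ'' : ContinuousOn φ'' (Set.Icc l r)) :
    ∫ η in l..r, φ'' η / (φ' η ^ 2 + lam) ≤ Real.pi / √lam := by
  have hsqrt : 0 < √lam := Real.sqrt_pos.mpr hlam
  rw [← Set.uIcc_of_le hlr] at hφ' hφ''
  have hφ'c : ContinuousOn φ' (Set.uIcc l r) := HasDerivAt.continuousOn hφ'
  have harctan : ∀ η ∈ Set.uIcc l r, HasDerivAt (fun η ↦ Real.arctan (φ' η / √lam) / √lam)
      (φ'' η / (φ' η ^ 2 + lam)) η := fun η hη ↦ by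
    refine (((hφ' η hη).div_const _).arctan.div_const _).congr_deriv ?_
    have : (0 : ℝ) < φ' η ^ 2 + lam := by positivity
    rw [div_pow, Real.sq_sqrt hlam.le]
    field_simp
    rw [Real.sq_sqrt hlam.le]
    field_simp
    ring
  rw [intervalIntegral.integral_eq_sub_of_hasDerivAt harctan (ContinuousOn.intervalIntegrable
    (hφ''.div (by fun_prop) fun η _ ↦ by positivity)), ← sub_div]
  gcongr
  linarith [Real.arctan_lt_pi_div_two (φ' r / √lam), Real.neg_pi_div_two_lt_arctan (φ' l / √lam)]

theorem hasDerivAt_div_sq_add {p : ℝ → ℝ} {p' lam η : ℝ} (hlam : 0 < lam)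
    (hp : HasDerivAt p p' η) :
    HasDerivAt (fun η ↦ p η / (p η ^ 2 + lam))
      (p' * (lam - p η ^ 2) / (p η ^ 2 + lam) ^ 2) η := by
  refine (hp.div ((hp.pow 2).add_const lam) (by positivity : p η ^ 2 + lam ≠ 0)).congr_deriv ?_
  simp only [Pi.pow_apply]
  ring

theorem abs_div_sq_add_le {lam : ℝ} (hlam : 0 < lam) (p : ℝ) :
    |p / (p ^ 2 + lam)| ≤ 1 / (2 * √lam) := by
  have : 0 < √lam := Real.sqrt_pos.mpr hlam
  rw [abs_div, abs_of_pos (by positivity : 0 < p ^ 2 + lam),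
    div_le_div_iff₀ (by positivity) (by positivity)]
  nlinarith [sq_nonneg (|p| - √lam), Real.sq_sqrt hlam.le, sq_abs p]

theorem abs_mul_sub_sq_div_sq_le {lam d : ℝ} (hlam : 0 < lam) (hd : 0 ≤ d) (p : ℝ) :
    |d * (lam - p ^ 2) / (p ^ 2 + lam) ^ 2| ≤ d / (p ^ 2 + lam) := by
  have : 0 < p ^ 2 + lam := by positivity
  have habs : |lam - p ^ 2| ≤ p ^ 2 + lam := by
    rw [abs_le]; constructor <;> nlinarith [sq_nonneg p]
  rw [abs_div, abs_mul, abs_of_nonneg hd, abs_of_pos (by positivity : 0 < (p ^ 2 + lam) ^ 2)]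
  calc _ ≤ d * (p ^ 2 + lam) / (p ^ 2 + lam) ^ 2 := by gcongr
    _ = d / (p ^ 2 + lam) := by field_simp

theorem integral_cexp_mul_eq_of_multiplier {q q' : ℝ → ℝ}
    (hφ : ∀ η ∈ Set.uIcc l r, HasDerivAt φ (φ' η) η) (hφ' : ContinuousOn φ' (Set.uIcc l r))
    (hq : ∀ η ∈ Set.uIcc l r, HasDerivAt q (q' η) η) (hq' : ContinuousOn q' (Set.uIcc l r))
    (hf : ∀ η ∈ Set.uIcc l r, HasDerivAt f (f' η) η) (hf' : ContinuousOn f' (Set.uIcc l r)) :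
    ∫ η in l..r, Complex.exp (φ η * I) * f η =
      (∫ η in l..r, Complex.exp (φ η * I) *
        (I * (q' η * f η + q η * f' η) + (1 - φ' η * q η) * f η)) -
      I * (Complex.exp (φ r * I) * (q r * f r) - Complex.exp (φ l * I) * (q l * f l)) := by
  have hφc : ContinuousOn φ (Set.uIcc l r) := HasDerivAt.continuousOn hφ
  have hqc : ContinuousOn q (Set.uIcc l r) := HasDerivAt.continuousOn hq
  have hfc : ContinuousOn f (Set.uIcc l r) := HasDerivAt.continuousOn hf
  have parts := integral_cexp_mul_deriv_mul hφ hφ'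
    (fun η hη ↦ (hq η hη).ofReal_comp.mul (hf η hη)) (by fun_prop)
  simp only [Pi.mul_apply] at parts
  calc _ = (∫ η in l..r, Complex.exp (φ η * I) * (φ' η * (q η * f η))) +
        ∫ η in l..r, Complex.exp (φ η * I) * ((1 - φ' η * q η) * f η) := by
        rw [← intervalIntegral.integral_add (ContinuousOn.intervalIntegrable (by fun_prop))
          (ContinuousOn.intervalIntegrable (by fun_prop))]
        congr! 2
        ring
    _ = (I * ∫ η in l..r, Complex.exp (φ η * I) * (q' η * f η + q η * f' η)) +
        (∫ η in l..r, Complex.exp (φ η * I) * ((1 - φ' η * q η) * f η)) -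
        I * (Complex.exp (φ r * I) * (q r * f r) - Complex.exp (φ l * I) * (q l * f l)) := by
        rw [parts]
        ring
    _ = _ := by
        rw [← intervalIntegral.integral_const_mul, ← intervalIntegral.integral_add
          (ContinuousOn.intervalIntegrable (by fun_prop))
          (ContinuousOn.intervalIntegrable (by fun_prop))]
        congr! 3
        ring

theorem norm_regularized_amplitude_le {lam d : ℝ} (hlam : 0 < lam) (hd : lam ≤ d) (p : ℝ)
    (u v : ℂ) :
    ‖I * ((d * (lam - p ^ 2) / (p ^ 2 + lam) ^ 2 : ℝ) * u + (p / (p ^ 2 + lam) : ℝ) * v) +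
        (1 - p * (p / (p ^ 2 + lam) : ℝ)) * u‖ ≤
      2 * ‖u‖ * (d / (p ^ 2 + lam)) + 1 / (2 * √lam) * ‖v‖ := by
  have hd0 : 0 ≤ d := hlam.le.trans hd
  have hden : (p ^ 2 + lam : ℝ) ≠ 0 := by positivity
  have hrem : |1 - p * (p / (p ^ 2 + lam))| ≤ d / (p ^ 2 + lam) := by
    rw [show 1 - p * (p / (p ^ 2 + lam)) = lam / (p ^ 2 + lam) by field_simp; ring,
      abs_of_nonneg (by positivity)]
    gcongr
  calc _ ≤ |d * (lam - p ^ 2) / (p ^ 2 + lam) ^ 2| * ‖u‖ + |p / (p ^ 2 + lam)| * ‖v‖ +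
        |1 - p * (p / (p ^ 2 + lam))| * ‖u‖ := by
        simp only [← Real.norm_eq_abs, ← Complex.norm_real, ← norm_mul, Complex.ofReal_sub,
          Complex.ofReal_one, Complex.ofReal_mul]
        refine (norm_add_le _ _).trans (add_le_add_left ?_ _)
        rw [norm_mul I, Complex.norm_I, one_mul]
        exact norm_add_le _ _
    _ ≤ d / (p ^ 2 + lam) * ‖u‖ + 1 / (2 * √lam) * ‖v‖ + d / (p ^ 2 + lam) * ‖u‖ := by
        gcongr
        exacts [abs_mul_sub_sq_div_sq_le hlam hd0 p, abs_div_sq_add_le hlam p]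
    _ = _ := by ring

-- The multiplier `φ' / (φ'² + lam)` is a regularised `1 / φ'`, so that zeros of `φ'` do no harm.
theorem norm_integral_cexp_mul_le_of_le_deriv2 {A B lam : ℝ} (hlr : l ≤ r) (hlam : 0 < lam)
    (hφ : ∀ η ∈ Set.Icc l r, HasDerivAt φ (φ' η) η)
    (hφ' : ∀ η ∈ Set.Icc l r, HasDerivAt φ' (φ'' η) η) (hφ'' : ContinuousOn φ'' (Set.Icc l r))
    (hφ''_ge : ∀ η ∈ Set.Icc l r, lam ≤ φ'' η)
    (hf : ∀ η ∈ Set.Icc l r, HasDerivAt f (f' η) η) (hf' : ContinuousOn f' (Set.Icc l r))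
    (hf_le : ∀ η ∈ Set.Icc l r, ‖f η‖ ≤ A) (hf'_le : ∀ η ∈ Set.Icc l r, ‖f' η‖ ≤ B) :
    ‖∫ η in l..r, Complex.exp (φ η * I) * f η‖ ≤
      ((2 * Real.pi + 1) * A + (r - l) * B / 2) / √lam := by
  have hA : 0 ≤ A := (norm_nonneg _).trans (hf_le l ⟨le_rfl, hlr⟩)
  have harctan := mul_le_mul_of_nonneg_left (integral_deriv_div_sq_add_le hlam hlr hφ' hφ'')
    (by positivity : 0 ≤ 2 * A)
  have hboundary : ∀ η ∈ Set.Icc l r, ‖Complex.exp (φ η * I) *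
      ((φ' η / (φ' η ^ 2 + lam) : ℝ) * f η)‖ ≤ 1 / (2 * √lam) * A := fun η hη ↦ by
    rw [norm_mul, Complex.norm_exp_ofReal_mul_I, one_mul, norm_mul, Complex.norm_real]
    exact mul_le_mul (abs_div_sq_add_le hlam _) (hf_le η hη) (norm_nonneg _) (by positivity)
  have hq := fun η hη ↦ hasDerivAt_div_sq_add hlam (hφ' η hη)
  have hpt : ∀ η ∈ Set.Icc l r, ‖Complex.exp (φ η * I) *
      (I * ((φ'' η * (lam - φ' η ^ 2) / (φ' η ^ 2 + lam) ^ 2 : ℝ) * f η +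
        (φ' η / (φ' η ^ 2 + lam) : ℝ) * f' η) + (1 - φ' η * (φ' η / (φ' η ^ 2 + lam) : ℝ)) * f η)‖ ≤
      2 * A * (φ'' η / (φ' η ^ 2 + lam)) + 1 / (2 * √lam) * B := fun η hη ↦ by
    have : 0 ≤ φ'' η := hlam.le.trans (hφ''_ge η hη)
    rw [norm_mul, Complex.norm_exp_ofReal_mul_I, one_mul]
    refine (norm_regularized_amplitude_le hlam (hφ''_ge η hη) _ _ _).trans ?_
    gcongr
    exacts [hf_le η hη, hf'_le η hη]
  rw [← Set.uIcc_of_le hlr] at hφ hφ' hφ'' hf hf' hq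
  have hφ'c : ContinuousOn φ' (Set.uIcc l r) := HasDerivAt.continuousOn hφ'
  have hint : IntervalIntegrable (fun η ↦ φ'' η / (φ' η ^ 2 + lam)) volume l r :=
    (hφ''.div (by fun_prop) fun η _ ↦ by positivity).intervalIntegrable
  have hbulk := intervalIntegral.norm_integral_le_of_norm_le hlr
    (.of_forall fun η hη ↦ hpt η (Set.Ioc_subset_Icc_self hη))
    ((hint.const_mul (2 * A)).add (intervalIntegrable_const (c := 1 / (2 * √lam) * B)))
  rw [intervalIntegral.integral_add (hint.const_mul _) intervalIntegrable_const,
    intervalIntegral.integral_const_mul, intervalIntegral.integral_const, smul_eq_mul] at hbulk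
  rw [integral_cexp_mul_eq_of_multiplier hφ hφ'c hq
    (.div (by fun_prop) (by fun_prop) fun η _ ↦ by positivity) hf hf']
  calc _ ≤ (2 * A * (Real.pi / √lam) + (r - l) * (1 / (2 * √lam) * B)) +
        (1 / (2 * √lam) * A + 1 / (2 * √lam) * A) := by
        refine (norm_sub_le _ _).trans (add_le_add (hbulk.trans (by linarith)) ?_)
        rw [norm_mul, Complex.norm_I, one_mul]
        exact (norm_sub_le _ _).trans
          (add_le_add (hboundary r ⟨hlr, le_rfl⟩) (hboundary l ⟨le_rfl, hlr⟩))
    _ = _ := by field_simp; ring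

end OscillatoryIntegral

/-- The kernel of the operator `w(-i∂ₓ)` followed by the Airy flow at time `r`: up to a factor `2π`,
the value at `z` of the inverse Fourier transform of `w(ξ) e^{irξ³}`. -/
noncomputable def airyKernel (w : ℝ → ℝ) (z r : ℝ) : ℂ :=
  ∫ ξ, Complex.exp ((z * ξ + r * ξ ^ 3 : ℝ) * I) * w ξ

section AiryKernel

variable {χ : ℝ → ℝ}

theorem norm_airyKernel_le_integral_abs (w : ℝ → ℝ) (z r : ℝ) :
    ‖airyKernel w z r‖ ≤ ∫ ξ, |w ξ| := by
  refine (norm_integral_le_integral_norm _).trans_eq ?_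
  simp only [norm_mul, Complex.norm_exp_ofReal_mul_I, one_mul, Complex.norm_real, Real.norm_eq_abs]

theorem norm_airyKernel_neg_neg (w : ℝ → ℝ) (z r : ℝ) :
    ‖airyKernel w (-z) (-r)‖ = ‖airyKernel w z r‖ := by
  rw [airyKernel, airyKernel, ← Complex.norm_conj (∫ _, _), ← integral_conj]
  congr! 3
  simp only [map_mul, ← Complex.exp_conj, Complex.conj_ofReal, Complex.conj_I]
  congr 2
  push_cast
  ring

theorem airyKernel_comp_neg (w : ℝ → ℝ) (z r : ℝ) :
    airyKernel (fun ξ ↦ w (-ξ)) z r = airyKernel w (-z) (-r) := by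
  rw [airyKernel, airyKernel, ← integral_neg_eq_self]
  congr! 2 with ξ
  rw [neg_neg]
  congr! 4
  ring

theorem airyKernel_comp_div {N : ℝ} (hN : 0 < N) (w : ℝ → ℝ) (z r : ℝ) :
    airyKernel (fun ξ ↦ w (ξ / N)) z r = N * airyKernel w (N * z) (N ^ 3 * r) := by
  have hscale := Measure.integral_comp_div
    (fun ξ ↦ Complex.exp ((N * z * ξ + N ^ 3 * r * ξ ^ 3 : ℝ) * I) * w ξ) N
  rw [abs_of_pos hN, Complex.real_smul] at hscale
  rw [airyKernel, airyKernel, ← hscale]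
  congr! 6
  field_simp

theorem airyKernel_eq_intervalIntegral {l r : ℝ} (hsupp : tsupport χ ⊆ Set.Ioo l r) (a c : ℝ) :
    airyKernel χ a c = ∫ ξ in l..r, Complex.exp ((a * ξ + c * ξ ^ 3 : ℝ) * I) * χ ξ := by
  refine (intervalIntegral.integral_eq_integral_of_support_subset fun ξ hξ ↦ ?_).symm
  have hξ' : χ ξ ≠ 0 := fun h ↦ hξ (by simp [h])
  exact Set.Ioo_subset_Ioc_self (hsupp (subset_tsupport χ hξ'))

theorem hasDerivAt_airyPhase (a c ξ : ℝ) :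
    HasDerivAt (fun ξ ↦ a * ξ + c * ξ ^ 3) (a + 3 * c * ξ ^ 2) ξ := by
  refine (((hasDerivAt_id ξ).const_mul a).add ((hasDerivAt_pow 3 ξ).const_mul c)).congr_deriv ?_
  push_cast
  ring

theorem hasDerivAt_deriv_airyPhase (a c ξ : ℝ) :
    HasDerivAt (fun ξ ↦ a + 3 * c * ξ ^ 2) (6 * c * ξ) ξ := by
  refine (((hasDerivAt_pow 2 ξ).const_mul (3 * c)).const_add a).congr_deriv ?_
  push_cast
  ring

theorem exists_norm_airyKernel_le_div_sqrt {l r : ℝ} (hl : 0 < l) (hlr : l ≤ r)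
    (hχ : ContDiff ℝ 1 χ) (hsupp : tsupport χ ⊆ Set.Ioo l r) :
    ∃ C, ∀ a c, c ≠ 0 → ‖airyKernel χ a c‖ ≤ C / √|c| := by
  have hcompact : HasCompactSupport χ :=
    isCompact_Icc.of_isClosed_subset isClosed_closure (hsupp.trans Set.Ioo_subset_Icc_self)
  obtain ⟨A, hA⟩ := hcompact.exists_bound_of_continuous hχ.continuous
  obtain ⟨B, hB⟩ := hcompact.deriv.exists_bound_of_continuous hχ.continuous_deriv_one
  have hpos : ∀ a c, 0 < c → ‖airyKernel χ a c‖ ≤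
      ((2 * Real.pi + 1) * A + (r - l) * B / 2) / √(6 * l) / √|c| := fun a c hc ↦ by
    rw [airyKernel_eq_intervalIntegral hsupp, div_div, ← Real.sqrt_mul (by positivity),
      abs_of_pos hc]
    refine norm_integral_cexp_mul_le_of_le_deriv2 hlr (by positivity)
      (fun η _ ↦ hasDerivAt_airyPhase a c η) (fun η _ ↦ hasDerivAt_deriv_airyPhase a c η)
      (by fun_prop) (fun η hη ↦ ?_)
      (fun η _ ↦ (hχ.differentiable one_ne_zero).differentiableAt.hasDerivAt.ofReal_comp)
      (Complex.continuous_ofReal.comp hχ.continuous_deriv_one).continuousOn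
      (fun η _ ↦ (Complex.norm_real _).trans_le (hA η))
      (fun η _ ↦ (Complex.norm_real _).trans_le (hB η))
    calc 6 * l * c = 6 * c * l := by ring
      _ ≤ 6 * c * η := by gcongr; exact hη.1
  refine ⟨_, fun a c hc ↦ hc.lt_or_gt.elim (fun hneg ↦ ?_) (hpos a c)⟩
  rw [← norm_airyKernel_neg_neg, ← abs_neg]
  exact hpos (-a) (-c) (neg_pos.mpr hneg)

theorem norm_airyKernel_le_div_sq {a c M ρ : ℝ} (hρ : 1 ≤ ρ) (ha : a ≠ 0)
    (hac : 6 * ρ ^ 2 * |c| ≤ |a|) (hχ : ContDiff ℝ 2 χ) (hsupp : tsupport χ ⊆ Set.Ioo (-ρ) ρ)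
    (hM : ∀ ξ, |χ ξ| ≤ M) (hM' : ∀ ξ, |deriv χ ξ| ≤ M) (hM'' : ∀ ξ, |deriv (deriv χ) ξ| ≤ M) :
    ‖airyKernel χ a c‖ ≤ 168 * M * ρ / a ^ 2 := by
  have hχ' : ContDiff ℝ 1 (deriv χ) := ContDiff.deriv' hχ
  have hend : ∀ ξ ∉ Set.Ioo (-ρ) ρ, χ ξ = 0 ∧ deriv χ ξ = 0 := fun ξ hξ ↦
    ⟨image_eq_zero_of_notMem_tsupport fun h ↦ hξ (hsupp h),
      image_eq_zero_of_notMem_tsupport fun h ↦ hξ (hsupp (tsupport_deriv_subset h))⟩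
  have hl := hend (-ρ) (by simp)
  have hr := hend ρ (by simp)
  have hc : 3 * |c| * ρ ^ 2 ≤ |a| / 2 := by linarith
  have hcρ : |c| * ρ ≤ |c| * ρ ^ 2 := by gcongr; exact le_self_pow₀ hρ two_ne_zero
  have hca : 6 * |c| * ρ ≤ 2 * (|a| / 2) := by linarith
  have habs : ∀ ξ ∈ Set.Icc (-ρ) ρ, |ξ| ≤ ρ := fun ξ hξ ↦ abs_le.mpr hξ
  have hreal : ∀ x : ℝ, ‖(x : ℂ)‖ = |x| := Complex.norm_real
  rw [airyKernel_eq_intervalIntegral hsupp]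
  refine (norm_integral_cexp_mul_le_of_le_abs_deriv (by linarith) (a := |a| / 2) (by positivity)
    (κ := 2) (M := M) (fun η _ ↦ hasDerivAt_airyPhase a c η)
    (fun η _ ↦ hasDerivAt_deriv_airyPhase a c η) (fun η _ ↦ (hasDerivAt_id η).const_mul (6 * c))
    (by fun_prop) (fun η hη ↦ ?_) (fun η hη ↦ ?_) (fun η _ ↦ ?_)
    (fun η _ ↦ (hχ.differentiable two_ne_zero).differentiableAt.hasDerivAt.ofReal_comp)
    (fun η _ ↦ (hχ'.differentiable one_ne_zero).differentiableAt.hasDerivAt.ofReal_comp)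
    (Complex.continuous_ofReal.comp hχ'.continuous_deriv_one).continuousOn
    (fun η _ ↦ (hreal _).trans_le (hM η)) (fun η _ ↦ (hreal _).trans_le (hM' η))
    (fun η _ ↦ (hreal _).trans_le (hM'' η))
    (by simp [hl]) (by simp [hr]) (by simp [hl]) (by simp [hr])).trans_eq ?_
  · have hterm : |3 * c * η ^ 2| ≤ |a| / 2 := by
      rw [abs_mul, abs_mul, abs_pow, abs_of_pos (by positivity : (0 : ℝ) < 3)]
      exact hc.trans' (by gcongr; exact habs η hη)
    have htri := abs_sub_abs_le_abs_sub a (-(3 * c * η ^ 2))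
    rw [abs_neg, sub_neg_eq_add] at htri
    linarith
  · rw [abs_mul, abs_mul, abs_of_pos (by positivity : (0 : ℝ) < 6)]
    exact hca.trans' (by gcongr; exact habs η hη)
  · rw [mul_one, abs_mul, abs_of_pos (by positivity : (0 : ℝ) < 6)]
    linarith [le_mul_of_one_le_right (abs_nonneg c) hρ]
  · rw [div_pow, sq_abs]
    field_simp
    ring

theorem exists_norm_airyKernel_le_div_one_add_sq (hχ : ContDiff ℝ 2 χ)
    (hsupp : HasCompactSupport χ) :
    ∃ L C, ∀ a c, L * |c| ≤ |a| → ‖airyKernel χ a c‖ ≤ C / (1 + a ^ 2) := by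
  obtain ⟨ρ, hρ, hball⟩ := hsupp.isCompact.isBounded.subset_ball_lt 1 0
  rw [Real.ball_zero_eq_Ioo] at hball
  have hχ' : ContDiff ℝ 1 (deriv χ) := ContDiff.deriv' hχ
  obtain ⟨A, hA⟩ := hsupp.exists_bound_of_continuous hχ.continuous
  obtain ⟨B, hB⟩ := hsupp.deriv.exists_bound_of_continuous hχ'.continuous
  obtain ⟨D, hD⟩ := hsupp.deriv.deriv.exists_bound_of_continuous hχ'.continuous_deriv_one
  set M := max A (max B D)
  have hM : 0 ≤ M := (norm_nonneg (χ 0)).trans ((hA 0).trans (le_max_left _ _))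
  refine ⟨6 * ρ ^ 2, (∫ ξ, |χ ξ|) + 168 * M * ρ, fun a c hac ↦ ?_⟩
  have hbound : ‖airyKernel χ a c‖ * a ^ 2 ≤ 168 * M * ρ := by
    obtain rfl | ha := eq_or_ne a 0
    · simp only [ne_eq, OfNat.ofNat_ne_zero, not_false_eq_true, zero_pow, mul_zero]
      positivity
    · exact (le_div_iff₀ (by positivity)).mp (norm_airyKernel_le_div_sq hρ.le ha hac hχ hball
        (fun ξ ↦ le_max_of_le_left (hA ξ)) (fun ξ ↦ le_max_of_le_right (le_max_of_le_left (hB ξ)))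
        (fun ξ ↦ le_max_of_le_right (le_max_of_le_right (hD ξ))))
  rw [le_div_iff₀ (by positivity), mul_add, mul_one]
  exact add_le_add (norm_airyKernel_le_integral_abs χ a c) hbound

end AiryKernel

theorem lintegral_ofReal_div_one_add_sq {C : ℝ} (hC : 0 ≤ C) :
    ∫⁻ z : ℝ, ENNReal.ofReal (C / (1 + z ^ 2)) = ENNReal.ofReal (C * Real.pi) := by
  simp only [div_eq_mul_inv]
  rw [← ofReal_integral_eq_lintegral_ofReal (integrable_inv_one_add_sq.const_mul C)
    (.of_forall fun z ↦ by positivity), integral_const_mul, integral_univ_inv_one_add_sq]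

theorem lintegral_Icc_ofReal_div_sqrt_abs {A D : ℝ} (hA : 0 ≤ A) (hD : 0 ≤ D) :
    ∫⁻ z in Set.Icc (-A) A, ENNReal.ofReal (D / √|z|) = ENNReal.ofReal (4 * D * √A) := by
  have hpow : ∀ z ∈ Set.uIcc 0 A, D / √|z| = D * z ^ (-(1 / 2) : ℝ) := fun z hz ↦ by
    rw [Set.uIcc_of_le hA] at hz
    rw [abs_of_nonneg hz.1, Real.rpow_neg hz.1, ← Real.sqrt_eq_rpow, div_eq_mul_inv]
  have hright : IntervalIntegrable (fun z ↦ D / √|z|) volume 0 A :=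
    (intervalIntegrable_congr fun z hz ↦ hpow z (Set.uIoc_subset_uIcc hz)).mpr
      ((intervalIntegral.intervalIntegrable_rpow' (by norm_num)).const_mul D)
  have hleft : IntervalIntegrable (fun z ↦ D / √|z|) volume (-A) 0 := by
    simpa only [neg_zero, abs_neg] using
      (IntervalIntegrable.iff_comp_neg (f := fun z ↦ D / √|z|)).mp hright.symm
  have hint : ∫ z in 0..A, D / √|z| = 2 * D * √A := by
    rw [intervalIntegral.integral_congr hpow, intervalIntegral.integral_const_mul,
      integral_rpow (by norm_num), Real.sqrt_eq_rpow]
    norm_num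
    ring
  have hint' : ∫ z in (-A)..0, D / √|z| = 2 * D * √A := by
    rw [← hint]
    simpa using (intervalIntegral.integral_comp_neg (a := 0) (b := A) fun z ↦ D / √|z|).symm
  rw [Measure.restrict_congr_set Ioc_ae_eq_Icc.symm, ← ofReal_integral_eq_lintegral_ofReal
    (hleft.trans hright).1 (.of_forall fun z ↦ by positivity),
    ← intervalIntegral.integral_of_le (by linarith),
    ← intervalIntegral.integral_add_adjacent_intervals hleft hright, hint, hint']
  ring_nf

/-- `HasKernelMajorant R w K` says that the convolution kernels `airyKernel w · r`, `|r| ≤ R`, of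
the frequency weight `w` have a common majorant of integral at most `K`. -/
structure HasKernelMajorant (R : ℝ) (w : ℝ → ℝ) (K : ℝ≥0∞) : Prop where
  integrable : Integrable w
  exists_majorant : ∃ Φ : ℝ → ℝ≥0∞, Measurable Φ ∧ ∫⁻ z, Φ z ≤ K ∧
    ∀ z r, |r| ≤ R → ‖airyKernel w z r‖ₑ ≤ Φ z

theorem integrable_cexp_mul {w : ℝ → ℝ} (hw : Integrable w) (z r : ℝ) :
    Integrable fun ξ ↦ Complex.exp ((z * ξ + r * ξ ^ 3 : ℝ) * I) * w ξ :=
  hw.ofReal.bdd_mul (c := 1) (by fun_prop) (.of_forall fun ξ ↦ (Complex.norm_exp_ofReal_mul_I _).le)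

theorem integrable_tsum_of_summable_integral_norm {α E ι : Type*} [MeasurableSpace α]
    {μ : Measure α} [NormedAddCommGroup E] [CompleteSpace E] [SecondCountableTopology E]
    [Countable ι] {f : ι → α → E} (hf : ∀ i, Integrable (f i) μ)
    (hsum : Summable fun i ↦ ∫ a, ‖f i a‖ ∂μ) : Integrable (fun a ↦ ∑' i, f i a) μ := by
  borelize E
  refine ⟨(AEMeasurable.tsum fun i ↦ (hf i).aestronglyMeasurable.aemeasurable).aestronglyMeasurable,
    ?_⟩
  calc ∫⁻ a, ‖∑' i, f i a‖ₑ ∂μ ≤ ∫⁻ a, ∑' i, ‖f i a‖ₑ ∂μ :=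
        lintegral_mono fun a ↦ enorm_tsum_le_tsum_enorm
    _ = ∑' i, ENNReal.ofReal (∫ a, ‖f i a‖ ∂μ) := by
        rw [lintegral_tsum fun i ↦ (hf i).aestronglyMeasurable.enorm]
        exact tsum_congr fun i ↦ (ofReal_integral_norm_eq_lintegral_enorm (hf i)).symm
    _ < ∞ := hsum.tsum_ofReal_lt_top

namespace HasKernelMajorant

variable {R : ℝ} {w w₁ w₂ : ℝ → ℝ} {K K₁ K₂ : ℝ≥0∞}

theorem add (h₁ : HasKernelMajorant R w₁ K₁) (h₂ : HasKernelMajorant R w₂ K₂) :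
    HasKernelMajorant R (fun ξ ↦ w₁ ξ + w₂ ξ) (K₁ + K₂) := by
  obtain ⟨hw₁, Φ₁, hΦ₁, hK₁, hle₁⟩ := h₁
  obtain ⟨hw₂, Φ₂, hΦ₂, hK₂, hle₂⟩ := h₂
  refine ⟨hw₁.add hw₂, fun z ↦ Φ₁ z + Φ₂ z, hΦ₁.add hΦ₂, ?_, fun z r hr ↦ ?_⟩
  · rw [lintegral_add_left hΦ₁]
    gcongr
  · have hsplit : airyKernel (fun ξ ↦ w₁ ξ + w₂ ξ) z r =
        airyKernel w₁ z r + airyKernel w₂ z r := by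
      simp only [airyKernel, Complex.ofReal_add (w₁ _), mul_add]
      exact integral_add (integrable_cexp_mul hw₁ z r) (integrable_cexp_mul hw₂ z r)
    rw [hsplit]
    exact (enorm_add_le _ _).trans (add_le_add (hle₁ z r hr) (hle₂ z r hr))

theorem const_mul (h : HasKernelMajorant R w K) (a : ℝ) :
    HasKernelMajorant R (fun ξ ↦ a * w ξ) (‖a‖ₑ * K) := by
  obtain ⟨hw, Φ, hΦ, hK, hle⟩ := h
  refine ⟨hw.const_mul a, fun z ↦ ‖a‖ₑ * Φ z, hΦ.const_mul _, ?_, fun z r hr ↦ ?_⟩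
  · rw [lintegral_const_mul _ hΦ]
    gcongr
  · have hpull : airyKernel (fun ξ ↦ a * w ξ) z r = a * airyKernel w z r := by
      simp only [airyKernel, Complex.ofReal_mul a, mul_left_comm _ (a : ℂ)]
      exact integral_const_mul _ _
    rw [hpull, enorm_mul, ← ofReal_norm (a : ℂ), Complex.norm_real, ofReal_norm]
    exact mul_le_mul_right (hle z r hr) _

theorem comp_neg (h : HasKernelMajorant R w K) : HasKernelMajorant R (fun ξ ↦ w (-ξ)) K := by
  obtain ⟨hw, Φ, hΦ, hK, hle⟩ := h
  refine ⟨hw.comp_neg, Φ, hΦ, hK, fun z r hr ↦ ?_⟩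
  rw [airyKernel_comp_neg, ← ofReal_norm, norm_airyKernel_neg_neg, ofReal_norm]
  exact hle z r hr

theorem comp_div {N : ℝ} (hN : 0 < N) (h : HasKernelMajorant (N ^ 3 * R) w K) :
    HasKernelMajorant R (fun ξ ↦ w (ξ / N)) K := by
  obtain ⟨hw, Φ, hΦ, hK, hle⟩ := h
  refine ⟨hw.comp_div hN.ne', fun z ↦ ENNReal.ofReal N * Φ (N * z), by fun_prop, ?_,
    fun z r hr ↦ ?_⟩
  · rw [lintegral_const_mul _ (by fun_prop)]
    rwa [← Real.smul_map_volume_mul_left hN.ne', lintegral_smul_measure,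
      lintegral_map hΦ (by fun_prop), abs_of_pos hN] at hK
  · rw [airyKernel_comp_div hN, enorm_mul, ← ofReal_norm (N : ℂ), Complex.norm_real,
      Real.norm_of_nonneg hN.le]
    refine mul_le_mul_right (hle _ _ ?_) _
    rw [abs_mul, abs_of_pos (by positivity)]
    gcongr

theorem tsum {w : ℕ → ℝ → ℝ} {K : ℕ → ℝ≥0∞} (h : ∀ k, HasKernelMajorant R (w k) (K k))
    (hsum : Summable fun k ↦ ∫ ξ, ‖w k ξ‖) :
    HasKernelMajorant R (fun ξ ↦ ∑' k, w k ξ) (∑' k, K k) := by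
  choose hw Φ hΦ hK hle using fun k ↦ (⟨(h k).1, (h k).2⟩ : _ ∧ _)
  refine ⟨integrable_tsum_of_summable_integral_norm hw hsum, fun z ↦ ∑' k, Φ k z, .tsum hΦ, ?_,
    fun z r hr ↦ ?_⟩
  · rw [lintegral_tsum fun k ↦ (hΦ k).aemeasurable]
    exact ENNReal.tsum_le_tsum hK
  · have hswap : airyKernel (fun ξ ↦ ∑' k, w k ξ) z r = ∑' k, airyKernel (w k) z r := by
      simp only [airyKernel, Complex.ofReal_tsum, ← tsum_mul_left]
      refine (integral_tsum_of_summable_integral_norm (fun k ↦ integrable_cexp_mul (hw k) z r)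
        ?_).symm
      simpa only [norm_mul, Complex.norm_exp_ofReal_mul_I, one_mul, Complex.norm_real] using hsum
    rw [hswap]
    exact enorm_tsum_le_tsum_enorm.trans (ENNReal.tsum_le_tsum fun k ↦ hle k z r hr)

end HasKernelMajorant

theorem exists_hasKernelMajorant_of_hasCompactSupport {χ : ℝ → ℝ} (hχ : ContDiff ℝ 2 χ)
    (hsupp : HasCompactSupport χ) (R : ℝ) : ∃ K ≠ ∞, HasKernelMajorant R χ K := by
  obtain ⟨L, C, hC⟩ := exists_norm_airyKernel_le_div_one_add_sq hχ hsupp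
  set D := ∫ ξ, |χ ξ|
  set Φ : ℝ → ℝ≥0∞ := fun z ↦ ENNReal.ofReal (max C 0 / (1 + z ^ 2)) +
    (Set.Icc (-(|L| * R)) (|L| * R)).indicator (fun _ ↦ ENNReal.ofReal D) z
  have hΦ : Measurable Φ := .fun_add (by fun_prop) (measurable_const.indicator measurableSet_Icc)
  refine ⟨∫⁻ z, Φ z, ?_, hχ.continuous.integrable_of_hasCompactSupport hsupp, Φ, hΦ, le_rfl,
    fun z r hr ↦ ?_⟩
  · rw [lintegral_add_left (by fun_prop), lintegral_ofReal_div_one_add_sq (le_max_right _ _),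
      lintegral_indicator_const measurableSet_Icc, Real.volume_Icc]
    finiteness
  · rw [← ofReal_norm]
    by_cases hz : z ∈ Set.Icc (-(|L| * R)) (|L| * R)
    · refine le_add_left ?_
      rw [Set.indicator_of_mem hz]
      exact ENNReal.ofReal_le_ofReal (norm_airyKernel_le_integral_abs χ z r)
    · refine le_add_right (ENNReal.ofReal_le_ofReal ((hC z r ?_).trans (by gcongr; simp)))
      rw [Set.mem_Icc, ← abs_le, not_le] at hz
      calc L * |r| ≤ |L| * R := by gcongr; exact le_abs_self L
        _ ≤ |z| := hz.le

theorem exists_enorm_airyKernel_le_add_indicator {χ : ℝ → ℝ} {l r : ℝ} (hl : 0 < l) (hlr : l ≤ r)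
    (hχ : ContDiff ℝ 2 χ) (hsupp : tsupport χ ⊆ Set.Ioo l r) :
    ∃ C ≥ 0, ∃ D ≥ 0, ∃ L ≥ 0, ∀ R z c, |c| ≤ R → ‖airyKernel χ z c‖ₑ ≤
      ENNReal.ofReal (C / (1 + z ^ 2)) +
        (Set.Icc (-(L * R)) (L * R)).indicator (fun z ↦ ENNReal.ofReal (D / √|z|)) z := by
  have hcompact : HasCompactSupport χ :=
    isCompact_Icc.of_isClosed_subset isClosed_closure (hsupp.trans Set.Ioo_subset_Icc_self)
  obtain ⟨L, C₁, hfar⟩ := exists_norm_airyKernel_le_div_one_add_sq hχ hcompact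
  obtain ⟨C₂, hnear⟩ := exists_norm_airyKernel_le_div_sqrt hl hlr (hχ.of_le one_le_two) hsupp
  have hC₁ : 0 ≤ C₁ := by simpa using (norm_nonneg _).trans (hfar 0 0 (by simp))
  have hC₂ : 0 ≤ C₂ := by simpa using (norm_nonneg _).trans (hnear 0 1 one_ne_zero)
  have hzero : 0 ≤ ∫ ξ, |χ ξ| := integral_nonneg fun ξ ↦ abs_nonneg _
  refine ⟨C₁ + ∫ ξ, |χ ξ|, by positivity, C₂ * √|L|, by positivity, |L|, abs_nonneg L,
    fun R z c hc ↦ ?_⟩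
  rw [← ofReal_norm]
  by_cases hz : L * |c| ≤ |z|
  · refine le_add_right (ENNReal.ofReal_le_ofReal ((hfar z c hz).trans ?_))
    gcongr
    exact le_add_of_nonneg_right hzero
  obtain rfl | hz0 := eq_or_ne z 0
  · refine le_add_right (ENNReal.ofReal_le_ofReal
      ((norm_airyKernel_le_integral_abs χ 0 c).trans ?_))
    simpa using hC₁
  have hzc : |z| ≤ |L| * |c| :=
    (not_le.mp hz).le.trans (mul_le_mul_of_nonneg_right (le_abs_self L) (abs_nonneg c))
  have hc0 : c ≠ 0 := by
    rintro rfl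
    simp [hz0] at hzc
  have hmem : z ∈ Set.Icc (-(|L| * R)) (|L| * R) := abs_le.mp (hzc.trans (by gcongr))
  rw [Set.indicator_of_mem hmem]
  refine le_add_left (ENNReal.ofReal_le_ofReal ((hnear z c hc0).trans ?_))
  rw [div_le_div_iff₀ (by positivity) (by positivity), mul_assoc, ← Real.sqrt_mul (abs_nonneg L)]
  gcongr

theorem exists_hasKernelMajorant_one_add_sqrt {χ : ℝ → ℝ} {l r : ℝ} (hl : 0 < l) (hlr : l ≤ r)
    (hχ : ContDiff ℝ 2 χ) (hsupp : tsupport χ ⊆ Set.Ioo l r) :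
    ∃ C, ∀ R, 0 ≤ R → HasKernelMajorant R χ (ENNReal.ofReal (C * (1 + √R))) := by
  have hcompact : HasCompactSupport χ :=
    isCompact_Icc.of_isClosed_subset isClosed_closure (hsupp.trans Set.Ioo_subset_Icc_self)
  obtain ⟨C, hC, D, hD, L, hL, hle⟩ := exists_enorm_airyKernel_le_add_indicator hl hlr hχ hsupp
  refine ⟨C * Real.pi + 4 * D * √L, fun R hR ↦
    ⟨hχ.continuous.integrable_of_hasCompactSupport hcompact, _,
      .fun_add (by fun_prop) (.indicator (by fun_prop) measurableSet_Icc), ?_, hle R⟩⟩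
  rw [lintegral_add_left (by fun_prop), lintegral_ofReal_div_one_add_sq hC,
    lintegral_indicator measurableSet_Icc, lintegral_Icc_ofReal_div_sqrt_abs (by positivity) hD,
    ← ENNReal.ofReal_add (by positivity) (by positivity), Real.sqrt_mul hL]
  refine ENNReal.ofReal_le_ofReal ?_
  linarith [(by positivity : 0 ≤ C * Real.pi * √R), (by positivity : 0 ≤ 4 * D * √L)]

theorem one_add_sqrt_mul_le (R : ℝ) (k : ℕ) :
    1 + √((2 ^ k) ^ 3 * R) ≤ √8 ^ k * (1 + √R) := by
  have hsq : ((2 : ℝ) ^ k) ^ 3 = (√8 ^ k) ^ 2 := by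
    rw [pow_right_comm, pow_right_comm _ k, Real.sq_sqrt (by norm_num)]
    norm_num
  rw [hsq, Real.sqrt_mul (by positivity), Real.sqrt_sq (by positivity), mul_add, mul_one]
  gcongr
  exact one_le_pow₀ (Real.one_le_sqrt.mpr (by norm_num))

theorem exists_hasKernelMajorant_tsum_dyadic {χ : ℝ → ℝ} {C ρ R : ℝ} (hρ : 0 ≤ ρ)
    (hρ8 : ρ * √8 < 1) (hR : 0 ≤ R)
    (hχ : ∀ R, 0 ≤ R → HasKernelMajorant R χ (ENNReal.ofReal (C * (1 + √R)))) :
    ∃ K ≠ ∞, HasKernelMajorant R (fun ξ ↦ ∑' k : ℕ, ρ ^ k * χ (ξ / 2 ^ k)) K := by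
  have hpiece : ∀ k : ℕ, HasKernelMajorant R (fun ξ ↦ ρ ^ k * χ (ξ / 2 ^ k)) _ := fun k ↦
    ((hχ _ (by positivity)).comp_div (N := 2 ^ k) (by positivity)).const_mul (ρ ^ k)
  have hmass : ∀ k : ℕ, ∫ ξ, ‖ρ ^ k * χ (ξ / 2 ^ k)‖ = (ρ * 2) ^ k * ∫ ξ, ‖χ ξ‖ := fun k ↦ by
    simp only [norm_mul, norm_pow, Real.norm_of_nonneg hρ]
    rw [integral_const_mul, Measure.integral_comp_div (fun ξ ↦ ‖χ ξ‖), smul_eq_mul,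
      abs_of_pos (by positivity), mul_pow, mul_assoc]
  have hρ2 : ρ * 2 < 1 := by
    refine hρ8.trans_le' ?_
    gcongr
    exact Real.le_sqrt_of_sq_le (by norm_num)
  refine ⟨_, ne_top_of_le_ne_top (Summable.tsum_ofReal_ne_top
    ((summable_geometric_of_lt_one (by positivity) hρ8).mul_right (|C| * (1 + √R))))
    (ENNReal.tsum_le_tsum fun k ↦ ?_), .tsum hpiece ?_⟩
  · rw [Real.enorm_of_nonneg (by positivity), ← ENNReal.ofReal_mul (by positivity)]
    refine ENNReal.ofReal_le_ofReal ?_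
    calc ρ ^ k * (C * (1 + √((2 ^ k) ^ 3 * R)))
        ≤ ρ ^ k * (|C| * (√8 ^ k * (1 + √R))) := by
          gcongr
          exacts [le_abs_self C, one_add_sqrt_mul_le R k]
      _ = (ρ * √8) ^ k * (|C| * (1 + √R)) := by ring
  · simp only [hmass]
    exact (summable_geometric_of_lt_one (by positivity) hρ2).mul_right _

theorem one_add_rpow_neg_le_tsum_dyadic {χ : ℝ → ℝ} {α M ξ : ℝ} (hα : 0 < α)
    (hχ0 : ∀ η, 0 ≤ χ η) (hχ1 : ∀ η ∈ Set.Icc 1 2, 1 ≤ χ η) (hχM : ∀ η, χ η ≤ M) (hξ : 1 ≤ ξ) :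
    (1 + ξ) ^ (-α) ≤ ∑' k : ℕ, ((2 : ℝ) ^ (-α)) ^ k * χ (ξ / 2 ^ k) := by
  obtain ⟨k, hk, hk'⟩ := exists_nat_pow_near hξ one_lt_two
  have hsum : Summable fun k : ℕ ↦ ((2 : ℝ) ^ (-α)) ^ k * χ (ξ / 2 ^ k) := by
    refine .of_nonneg_of_le (fun k ↦ mul_nonneg (by positivity) (hχ0 _)) (fun k ↦ ?_)
      ((summable_geometric_of_lt_one (by positivity)
        (Real.rpow_lt_one_of_one_lt_of_neg one_lt_two (neg_lt_zero.mpr hα))).mul_right M)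
    gcongr
    exact hχM _
  have hmem : ξ / 2 ^ k ∈ Set.Icc 1 2 := by
    rw [Set.mem_Icc, le_div_iff₀ (by positivity), div_le_iff₀ (by positivity), one_mul,
      ← pow_succ']
    exact ⟨hk, hk'.le⟩
  calc (1 + ξ) ^ (-α) ≤ ((2 : ℝ) ^ k) ^ (-α) :=
        Real.rpow_le_rpow_of_nonpos (by positivity) (by linarith) (by linarith)
    _ = ((2 : ℝ) ^ (-α)) ^ k := (Real.rpow_pow_comm zero_le_two _ _).symm
    _ ≤ ((2 : ℝ) ^ (-α)) ^ k * χ (ξ / 2 ^ k) := le_mul_of_one_le_right (by positivity) (hχ1 _ hmem)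
    _ ≤ _ := hsum.le_tsum k fun j _ ↦ mul_nonneg (by positivity) (hχ0 _)

theorem exists_contDiff_eq_one_on_Icc_one_two : ∃ χ : ℝ → ℝ, ContDiff ℝ 2 χ ∧
    tsupport χ ⊆ Set.Ioo (1 / 4) 3 ∧ (∀ ξ, 0 ≤ χ ξ) ∧ (∀ ξ, χ ξ ≤ 1) ∧
      ∀ ξ ∈ Set.Icc 1 2, χ ξ = 1 := by
  let χ : ContDiffBump (3 / 2 : ℝ) := ⟨1 / 2, 1, by norm_num, by norm_num⟩
  refine ⟨χ, χ.contDiff, ?_, fun ξ ↦ χ.nonneg, fun ξ ↦ χ.le_one, fun ξ hξ ↦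
    χ.one_of_mem_closedBall ?_⟩
  · rw [χ.tsupport_eq, Real.closedBall_eq_Icc]
    exact Set.Icc_subset_Ioo (by norm_num) (by norm_num)
  · rw [Real.closedBall_eq_Icc]
    convert hξ using 2 <;> norm_num

theorem exists_hasKernelMajorant_rpow_le {α R : ℝ} (hα : 3 / 2 < α) (hR : 0 ≤ R) :
    ∃ w K, K ≠ ∞ ∧ HasKernelMajorant R w K ∧ ∀ ξ, (1 + |ξ|) ^ (-α) ≤ w ξ := by
  obtain ⟨χ, hχ, hsupp, hχ0, hχ1, hχeq⟩ := exists_contDiff_eq_one_on_Icc_one_two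
  let θ : ContDiffBump (0 : ℝ) := ⟨1, 2, one_pos, one_lt_two⟩
  obtain ⟨C, hC⟩ := exists_hasKernelMajorant_one_add_sqrt (by norm_num) (by norm_num) hχ hsupp
  have hρ : (2 : ℝ) ^ (-α) * √8 < 1 := by
    rw [show (8 : ℝ) = 2 ^ (3 : ℝ) by norm_num, Real.sqrt_eq_rpow, ← Real.rpow_mul zero_le_two,
      ← Real.rpow_add two_pos]
    exact Real.rpow_lt_one_of_one_lt_of_neg one_lt_two (by linarith)
  obtain ⟨K₁, hK₁, hhigh⟩ := exists_hasKernelMajorant_tsum_dyadic (by positivity) hρ hR hC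
  obtain ⟨K₀, hK₀, hlow⟩ :=
    exists_hasKernelMajorant_of_hasCompactSupport θ.contDiff θ.hasCompactSupport R
  refine ⟨_, _, ENNReal.add_ne_top.mpr ⟨hK₀, ENNReal.add_ne_top.mpr ⟨hK₁, hK₁⟩⟩,
    hlow.add (hhigh.add hhigh.comp_neg), fun ξ ↦ ?_⟩
  have hdyadic : ∀ ξ, 0 ≤ ∑' k : ℕ, ((2 : ℝ) ^ (-α)) ^ k * χ (ξ / 2 ^ k) := fun ξ ↦
    tsum_nonneg fun k ↦ mul_nonneg (by positivity) (hχ0 _)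
  have hlarge : ∀ η, 1 ≤ η → (1 + η) ^ (-α) ≤ ∑' k : ℕ, ((2 : ℝ) ^ (-α)) ^ k * χ (η / 2 ^ k) :=
    fun η ↦ one_add_rpow_neg_le_tsum_dyadic (by linarith) hχ0 (fun η hη ↦ (hχeq η hη).ge) hχ1
  obtain hξ | hξ := le_total |ξ| 1
  · have hθ : θ ξ = 1 := θ.one_of_mem_closedBall (by simpa using hξ)
    have hle : (1 + |ξ|) ^ (-α) ≤ 1 := Real.rpow_le_one_of_one_le_of_nonpos
      (le_add_of_nonneg_right (abs_nonneg ξ)) (by linarith)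
    linarith [hdyadic ξ, hdyadic (-ξ)]
  · have hθ : 0 ≤ θ ξ := θ.nonneg
    obtain habs | habs := abs_choice ξ
    · rw [habs] at hξ ⊢
      linarith [hlarge ξ hξ, hdyadic (-ξ)]
    · rw [habs] at hξ ⊢
      linarith [hlarge (-ξ) hξ, hdyadic ξ]

section TTStar

variable {X P : Type*} [MeasurableSpace X] [MeasurableSpace P] {μ : Measure X} {ν : Measure P}

theorem rpow_one_half_sq (a : ℝ≥0∞) : (a ^ (1 / 2 : ℝ)) ^ 2 = a := by
  rw [← ENNReal.rpow_natCast, ← ENNReal.rpow_mul]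
  norm_num

theorem sq_lintegral_mul_le {f g : X → ℝ≥0∞} (hf : AEMeasurable f μ) (hg : AEMeasurable g μ) :
    (∫⁻ x, f x * g x ∂μ) ^ 2 ≤ (∫⁻ x, f x ^ 2 ∂μ) * ∫⁻ x, g x ^ 2 ∂μ := by
  have holder := pow_left_mono 2
    (ENNReal.lintegral_mul_le_Lp_mul_Lq μ Real.HolderConjugate.two_two hf hg)
  simpa only [mul_pow, rpow_one_half_sq, ENNReal.rpow_ofNat, Pi.mul_apply] using holder

theorem sq_lintegral_mul_le_inv_mul {f g ω : X → ℝ≥0∞} (hf : AEMeasurable f μ)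
    (hg : AEMeasurable g μ) (hω : AEMeasurable ω μ) (hω0 : ∀ x, ω x ≠ 0) (hω' : ∀ x, ω x ≠ ∞) :
    (∫⁻ x, f x * g x ∂μ) ^ 2 ≤ (∫⁻ x, (ω x)⁻¹ * f x ^ 2 ∂μ) * ∫⁻ x, ω x * g x ^ 2 ∂μ := by
  have hcs := sq_lintegral_mul_le (f := fun x ↦ (ω x)⁻¹ ^ (1 / 2 : ℝ) * f x)
    (g := fun x ↦ ω x ^ (1 / 2 : ℝ) * g x) (μ := μ) (by fun_prop) (by fun_prop)
  have hcancel : ∀ x, (ω x)⁻¹ ^ (1 / 2 : ℝ) * ω x ^ (1 / 2 : ℝ) = 1 := fun x ↦ by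
    rw [← ENNReal.mul_rpow_of_nonneg _ _ (by norm_num), ENNReal.inv_mul_cancel (hω0 x) (hω' x),
      ENNReal.one_rpow]
  have hmul : ∀ x, (ω x)⁻¹ ^ (1 / 2 : ℝ) * f x * (ω x ^ (1 / 2 : ℝ) * g x) = f x * g x := fun x ↦ by
    rw [mul_mul_mul_comm, hcancel, one_mul]
  simpa only [mul_pow, rpow_one_half_sq, hmul] using hcs

theorem two_mul_mul_le_sq_add_sq (a b : ℝ≥0∞) : 2 * (a * b) ≤ a ^ 2 + b ^ 2 := by
  wlog hab : a ≤ b generalizing a b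
  · rw [mul_comm a, add_comm]
    exact this b a (le_of_not_ge hab)
  obtain ⟨c, rfl⟩ := exists_add_of_le hab
  calc 2 * (a * (a + c)) ≤ 2 * (a * (a + c)) + c ^ 2 := le_self_add
    _ = a ^ 2 + (a + c) ^ 2 := by ring

theorem lintegral_prod_mul_kernel_le [SFinite μ] {f : X → ℝ≥0∞} {κ : X × X → ℝ≥0∞} {A : ℝ≥0∞}
    (hf : AEMeasurable f μ) (hκ : Measurable κ) (hrow : ∀ x, ∫⁻ y, κ (x, y) ∂μ ≤ A)
    (hcol : ∀ y, ∫⁻ x, κ (x, y) ∂μ ≤ A) :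
    ∫⁻ q, f q.1 * f q.2 * κ q ∂(μ.prod μ) ≤ A * ∫⁻ x, f x ^ 2 ∂μ := by
  have hrow' : ∫⁻ q, f q.1 ^ 2 * κ q ∂(μ.prod μ) ≤ A * ∫⁻ x, f x ^ 2 ∂μ := by
    rw [lintegral_prod _ (by fun_prop), ← lintegral_const_mul'' _ (by fun_prop)]
    refine lintegral_mono fun x ↦ ?_
    simp only [lintegral_const_mul _ (by fun_prop : Measurable fun y ↦ κ (x, y))]
    rw [mul_comm]
    gcongr
    exact hrow x
  have hcol' : ∫⁻ q, f q.2 ^ 2 * κ q ∂(μ.prod μ) ≤ A * ∫⁻ x, f x ^ 2 ∂μ := by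
    rw [lintegral_prod_symm _ (by fun_prop), ← lintegral_const_mul'' _ (by fun_prop)]
    refine lintegral_mono fun y ↦ ?_
    simp only [lintegral_const_mul _ (by fun_prop : Measurable fun x ↦ κ (x, y))]
    rw [mul_comm]
    gcongr
    exact hcol y
  refine (ENNReal.mul_le_mul_iff_right two_ne_zero ENNReal.ofNat_ne_top).mp ?_
  calc 2 * ∫⁻ q, f q.1 * f q.2 * κ q ∂(μ.prod μ)
      = ∫⁻ q, 2 * (f q.1 * f q.2) * κ q ∂(μ.prod μ) := by
        rw [← lintegral_const_mul'' _ (by fun_prop)]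
        simp only [mul_assoc]
    _ ≤ ∫⁻ q, f q.1 ^ 2 * κ q + f q.2 ^ 2 * κ q ∂(μ.prod μ) := by
        refine lintegral_mono fun q ↦ ?_
        rw [← add_mul]
        gcongr
        exact two_mul_mul_le_sq_add_sq _ _
    _ ≤ 2 * (A * ∫⁻ x, f x ^ 2 ∂μ) := by
        rw [lintegral_add_left' (by fun_prop), two_mul]
        exact add_le_add hrow' hcol'

theorem ofReal_mul_norm_sq_integral [SFinite μ] (a : ℝ) (f : X → ℂ) :
    ((a * ‖∫ x, f x ∂μ‖ ^ 2 : ℝ) : ℂ) = ∫ q, a * (f q.1 * conj (f q.2)) ∂(μ.prod μ) := by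
  push_cast
  rw [← Complex.mul_conj', ← integral_conj, ← integral_prod_mul, ← integral_const_mul]

theorem enorm_integral_mul_le {k : X → ℂ} (hk : ∀ x, ‖k x‖ ≤ 1) (f : X → ℂ) :
    ‖∫ x, k x * f x ∂μ‖ₑ ≤ ∫⁻ x, ‖f x‖ₑ ∂μ := by
  refine (enorm_integral_le_lintegral_enorm _).trans (lintegral_mono fun x ↦ ?_)
  rw [enorm_mul, ← ofReal_norm (k x)]
  exact mul_le_of_le_one_left' (ENNReal.ofReal_le_one.mpr (hk x))

theorem lintegral_ofReal_eq_enorm_integral {f : X → ℝ} (hf : Integrable f μ) (hf0 : ∀ x, 0 ≤ f x) :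
    ∫⁻ x, ENNReal.ofReal (f x) ∂μ = ‖∫ x, (f x : ℂ) ∂μ‖ₑ := by
  rw [integral_complex_ofReal, ← ofReal_norm, Complex.norm_real, ofReal_norm,
    Real.enorm_of_nonneg (integral_nonneg hf0),
    ofReal_integral_eq_lintegral_ofReal hf (.of_forall hf0)]

variable {e : X × P → ℂ} {ω : P → ℝ} {κ : X × X → ℝ≥0∞} {A : ℝ≥0∞}

theorem integrable_mul_mul_conj [SFinite μ] [SFinite ν] (he : Measurable e)
    (he1 : ∀ q, ‖e q‖ ≤ 1) (hω : Integrable ω ν) {g : X → ℂ} (hg : Integrable g μ) :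
    Integrable (fun a : P × X × X ↦ ω a.1 * (e (a.2.1, a.1) * g a.2.1 *
      conj (e (a.2.2, a.1) * g a.2.2))) (ν.prod (μ.prod μ)) := by
  have hgg : Integrable (fun q : X × X ↦ g q.1 * conj (g q.2)) (μ.prod μ) :=
    hg.mul_prod (Complex.conjCLE.integrable_comp_iff.mpr hg)
  have hprod : Integrable (fun a : P × X × X ↦ e (a.2.1, a.1) * conj (e (a.2.2, a.1)) *
      (ω a.1 * (g a.2.1 * conj (g a.2.2)))) (ν.prod (μ.prod μ)) := by
    refine (hω.ofReal (𝕜 := ℂ).mul_prod hgg).bdd_mul (c := 1)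
      (Measurable.aestronglyMeasurable (by fun_prop)) (.of_forall fun a ↦ ?_)
    rw [norm_mul, RCLike.norm_conj]
    exact mul_le_one₀ (he1 _) (norm_nonneg _) (he1 _)
  refine hprod.congr (.of_forall fun a ↦ ?_)
  simp only [map_mul]
  ring

theorem integrable_mul_norm_sq_integral [SFinite μ] [SFinite ν] (he : Measurable e)
    (he1 : ∀ q, ‖e q‖ ≤ 1) (hω : Integrable ω ν) {g : X → ℂ} (hg : Integrable g μ) :
    Integrable (fun p ↦ ω p * ‖∫ x, e (x, p) * g x ∂μ‖ ^ 2) ν := by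
  have hcomplex : Integrable (fun p ↦ ((ω p * ‖∫ x, e (x, p) * g x ∂μ‖ ^ 2 : ℝ) : ℂ)) ν := by
    simpa only [ofReal_mul_norm_sq_integral] using
      (integrable_mul_mul_conj he he1 hω hg).integral_prod_left
  exact hcomplex.re

theorem integral_ofReal_mul_norm_sq_integral [SFinite μ] [SFinite ν] (he : Measurable e)
    (he1 : ∀ q, ‖e q‖ ≤ 1) (hω : Integrable ω ν) {g : X → ℂ} (hg : Integrable g μ) :
    ∫ p, ((ω p * ‖∫ x, e (x, p) * g x ∂μ‖ ^ 2 : ℝ) : ℂ) ∂ν = ∫ q, g q.1 * conj (g q.2) *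
      ∫ p, ω p * (e (q.1, p) * conj (e (q.2, p))) ∂ν ∂(μ.prod μ) := by
  simp only [ofReal_mul_norm_sq_integral]
  rw [integral_integral_swap (integrable_mul_mul_conj he he1 hω hg)]
  congr! 2
  rw [← integral_const_mul]
  congr! 2
  rw [map_mul]
  ring

theorem lintegral_mul_enorm_integral_sq_le [SFinite μ] [SFinite ν] (he : Measurable e)
    (he1 : ∀ q, ‖e q‖ ≤ 1) (hω : Integrable ω ν) (hω0 : ∀ p, 0 ≤ ω p) (hκ : Measurable κ)
    (hker : ∀ x y, ‖∫ p, ω p * (e (x, p) * conj (e (y, p))) ∂ν‖ₑ ≤ κ (x, y))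
    (hrow : ∀ x, ∫⁻ y, κ (x, y) ∂μ ≤ A) (hcol : ∀ y, ∫⁻ x, κ (x, y) ∂μ ≤ A)
    {g : X → ℂ} (hg : Integrable g μ) :
    ∫⁻ p, ENNReal.ofReal (ω p) * ‖∫ x, e (x, p) * g x ∂μ‖ₑ ^ 2 ∂ν ≤
      A * ∫⁻ x, ‖g x‖ₑ ^ 2 ∂μ := by
  calc ∫⁻ p, ENNReal.ofReal (ω p) * ‖∫ x, e (x, p) * g x ∂μ‖ₑ ^ 2 ∂ν
      = ‖∫ q, g q.1 * conj (g q.2) *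
          ∫ p, ω p * (e (q.1, p) * conj (e (q.2, p))) ∂ν ∂(μ.prod μ)‖ₑ := by
        rw [← integral_ofReal_mul_norm_sq_integral he he1 hω hg,
          ← lintegral_ofReal_eq_enorm_integral (integrable_mul_norm_sq_integral he he1 hω hg)
            fun p ↦ mul_nonneg (hω0 p) (by positivity)]
        simp only [ENNReal.ofReal_mul (hω0 _), ENNReal.ofReal_pow (norm_nonneg _), ofReal_norm]
    _ ≤ ∫⁻ q, ‖g q.1‖ₑ * ‖g q.2‖ₑ * κ q ∂(μ.prod μ) := by
        refine (enorm_integral_le_lintegral_enorm _).trans (lintegral_mono fun q ↦ ?_)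
        rw [enorm_mul, enorm_mul, RCLike.enorm_conj]
        gcongr
        exact hker q.1 q.2
    _ ≤ A * ∫⁻ x, ‖g x‖ₑ ^ 2 ∂μ := lintegral_prod_mul_kernel_le hg.1.enorm hκ hrow hcol

theorem lintegral_enorm_sq_le_lintegral_mul_dual [SFinite μ] [SFinite ν] (he : Measurable e)
    (he1 : ∀ q, ‖e q‖ ≤ 1) {F : P → ℂ} (hF : Integrable F ν)
    (hu : Integrable (fun x ↦ ∫ p, e (x, p) * F p ∂ν) μ) :
    ∫⁻ x, ‖∫ p, e (x, p) * F p ∂ν‖ₑ ^ 2 ∂μ ≤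
      ∫⁻ p, ‖F p‖ₑ * ‖∫ x, e (x, p) * conj (∫ p, e (x, p) * F p ∂ν) ∂μ‖ₑ ∂ν := by
  set u : X → ℂ := fun x ↦ ∫ p, e (x, p) * F p ∂ν
  have hconj : Integrable (fun x ↦ conj (u x)) μ := Complex.conjCLE.integrable_comp_iff.mpr hu
  have hint : Integrable (fun a : X × P ↦ e a * (conj (u a.1) * F a.2)) (μ.prod ν) :=
    (hconj.mul_prod hF).bdd_mul (c := 1) he.aestronglyMeasurable (.of_forall he1)
  have hpt : ∀ x, ((‖u x‖ ^ 2 : ℝ) : ℂ) = ∫ p, e (x, p) * (conj (u x) * F p) ∂ν := fun x ↦ by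
    simp only [mul_left_comm (e _)]
    rw [integral_const_mul, Complex.conj_mul', Complex.ofReal_pow]
  have hsq : Integrable (fun x ↦ ‖u x‖ ^ 2) μ := by
    have hcomplex := hint.integral_prod_left
    simp only [← hpt] at hcomplex
    exact hcomplex.re
  calc ∫⁻ x, ‖u x‖ₑ ^ 2 ∂μ = ‖∫ x, ((‖u x‖ ^ 2 : ℝ) : ℂ) ∂μ‖ₑ := by
        rw [← lintegral_ofReal_eq_enorm_integral hsq fun x ↦ by positivity]
        simp only [ENNReal.ofReal_pow (norm_nonneg _), ofReal_norm]
    _ = ‖∫ p, F p * ∫ x, e (x, p) * conj (u x) ∂μ ∂ν‖ₑ := by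
        simp only [hpt]
        rw [integral_integral_swap hint]
        simp only [← mul_assoc, integral_mul_const, mul_comm (F _)]
    _ ≤ ∫⁻ p, ‖F p‖ₑ * ‖∫ x, e (x, p) * conj (u x) ∂μ‖ₑ ∂ν :=
        (enorm_integral_le_lintegral_enorm _).trans_eq (by simp only [enorm_mul])

theorem lintegral_enorm_integral_sq_le [SFinite μ] [SFinite ν] (he : Measurable e)
    (he1 : ∀ q, ‖e q‖ ≤ 1) (hω : Integrable ω ν) (hω0 : ∀ p, 0 < ω p) (hκ : Measurable κ)
    (hker : ∀ x y, ‖∫ p, ω p * (e (x, p) * conj (e (y, p))) ∂ν‖ₑ ≤ κ (x, y))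
    (hrow : ∀ x, ∫⁻ y, κ (x, y) ∂μ ≤ A) (hcol : ∀ y, ∫⁻ x, κ (x, y) ∂μ ≤ A)
    {F : P → ℂ} (hF : Integrable F ν) (hu : Integrable (fun x ↦ ∫ p, e (x, p) * F p ∂ν) μ) :
    ∫⁻ x, ‖∫ p, e (x, p) * F p ∂ν‖ₑ ^ 2 ∂μ ≤
      A * ∫⁻ p, (ENNReal.ofReal (ω p))⁻¹ * ‖F p‖ₑ ^ 2 ∂ν := by
  have hdual := lintegral_enorm_sq_le_lintegral_mul_dual he he1 hF hu
  have hbound : ∀ x, ‖∫ p, e (x, p) * F p ∂ν‖ₑ ≤ ∫⁻ p, ‖F p‖ₑ ∂ν := fun x ↦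
    enorm_integral_mul_le (fun p ↦ he1 (x, p)) F
  set u : X → ℂ := fun x ↦ ∫ p, e (x, p) * F p ∂ν
  set v : P → ℂ := fun p ↦ ∫ x, e (x, p) * conj (u x) ∂μ
  set S := ∫⁻ x, ‖u x‖ₑ ^ 2 ∂μ
  set N := ∫⁻ p, (ENNReal.ofReal (ω p))⁻¹ * ‖F p‖ₑ ^ 2 ∂ν
  have hconj : Integrable (fun x ↦ conj (u x)) μ := Complex.conjCLE.integrable_comp_iff.mpr hu
  have hfin : S ≠ ∞ := by
    refine ne_top_of_le_ne_top (ENNReal.mul_ne_top hF.2.ne hu.2.ne) ?_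
    rw [← lintegral_const_mul'' _ hu.1.enorm]
    refine lintegral_mono fun x ↦ ?_
    rw [sq]
    gcongr
    exact hbound x
  have hTT : ∫⁻ p, ENNReal.ofReal (ω p) * ‖v p‖ₑ ^ 2 ∂ν ≤ A * S := by
    simpa only [RCLike.enorm_conj] using
      lintegral_mul_enorm_integral_sq_le he he1 hω (fun p ↦ (hω0 p).le) hκ hker hrow hcol hconj
  have hv : AEStronglyMeasurable v ν := ((he.comp measurable_swap).aestronglyMeasurable.mul
    hconj.1.comp_snd).integral_prod_right'
  have hcs : (∫⁻ p, ‖F p‖ₑ * ‖v p‖ₑ ∂ν) ^ 2 ≤ N * ∫⁻ p, ENNReal.ofReal (ω p) * ‖v p‖ₑ ^ 2 ∂ν :=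
    sq_lintegral_mul_le_inv_mul hF.1.enorm hv.enorm hω.1.aemeasurable.ennreal_ofReal
      (fun p ↦ by simpa using hω0 p) fun p ↦ ENNReal.ofReal_ne_top
  have hsq : S * S ≤ A * N * S :=
    calc S * S ≤ (∫⁻ p, ‖F p‖ₑ * ‖v p‖ₑ ∂ν) ^ 2 := by rw [← sq]; gcongr
      _ ≤ N * (A * S) := hcs.trans (by gcongr)
      _ = A * N * S := by ring
  obtain hS | hS := eq_or_ne S 0
  · simp [hS]
  · exact (ENNReal.mul_le_mul_iff_left hS hfin).mp hsq

end TTStar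

section ModulationWeight

variable {f : ℝ → ℝ}

theorem measurePreserving_sub_comp_fst (hf : Measurable f) :
    MeasurePreserving fun p : ℝ × ℝ ↦ (p.1, p.2 - f p.1) := by
  rw [Measure.volume_eq_prod]
  exact (MeasurePreserving.id volume).skew_product (g := fun x y ↦ y - f x) (by fun_prop)
    (.of_forall fun x ↦ (measurePreserving_sub_right volume (f x)).map_eq)

theorem integrable_mul_comp_sub (hf : Measurable f) {w m : ℝ → ℝ} (hw : Integrable w)
    (hm : Integrable m) : Integrable fun p : ℝ × ℝ ↦ w p.1 * m (p.2 - f p.1) :=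
  (measurePreserving_sub_comp_fst hf).integrable_comp_of_integrable (hw.mul_prod hm)

theorem integral_ofReal_mul_cexp_eq_airyKernel_mul {w m : ℝ → ℝ} (hw : Integrable w)
    (hm : Integrable m) (z r : ℝ) :
    ∫ p : ℝ × ℝ, ((w p.1 * m (p.2 - p.1 ^ 3) : ℝ) : ℂ) * Complex.exp ((z * p.1 + r * p.2 : ℝ) * I) =
      airyKernel w z r * ∫ σ, Complex.exp ((r * σ : ℝ) * I) * m σ := by
  have hshear := measurePreserving_sub_comp_fst (f := (· ^ 3)) (by fun_prop)
  set F : ℝ × ℝ → ℂ := fun p ↦ Complex.exp ((z * p.1 + r * p.1 ^ 3 : ℝ) * I) * w p.1 *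
    (Complex.exp ((r * p.2 : ℝ) * I) * m p.2)
  have hF : AEStronglyMeasurable F volume :=
    ((integrable_cexp_mul hw z r).mul_prod (hm.ofReal.bdd_mul (c := 1) (by fun_prop)
      (.of_forall fun σ ↦ (Complex.norm_exp_ofReal_mul_I _).le))).1
  calc _ = ∫ p : ℝ × ℝ, F (p.1, p.2 - p.1 ^ 3) := by
        congr! 2 with p
        have hphase : ((z * p.1 + r * p.2 : ℝ) : ℂ) * I = (z * p.1 + r * p.1 ^ 3 : ℝ) * I +
            (r * (p.2 - p.1 ^ 3) : ℝ) * I := by push_cast; ring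
        simp only [F]
        rw [hphase, Complex.exp_add, Complex.ofReal_mul]
        ring
    _ = ∫ p, F p ∂volume.map fun p : ℝ × ℝ ↦ (p.1, p.2 - p.1 ^ 3) :=
        (integral_map hshear.aemeasurable (by rw [hshear.map_eq]; exact hF)).symm
    _ = _ := by
        rw [hshear.map_eq]
        exact integral_prod_mul (fun ξ : ℝ ↦ Complex.exp ((z * ξ + r * ξ ^ 3 : ℝ) * I) * w ξ)
          fun σ : ℝ ↦ Complex.exp ((r * σ : ℝ) * I) * m σ

theorem enorm_integral_ofReal_mul_cexp_le {w m : ℝ → ℝ} (hw : Integrable w) (hm : Integrable m)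
    (z r : ℝ) :
    ‖∫ p : ℝ × ℝ, ((w p.1 * m (p.2 - p.1 ^ 3) : ℝ) : ℂ) *
      Complex.exp ((z * p.1 + r * p.2 : ℝ) * I)‖ₑ ≤ ‖airyKernel w z r‖ₑ * ∫⁻ σ, ‖m σ‖ₑ := by
  rw [integral_ofReal_mul_cexp_eq_airyKernel_mul hw hm, enorm_mul]
  gcongr
  exact (enorm_integral_mul_le (fun σ ↦ (Complex.norm_exp_ofReal_mul_I _).le) _).trans_eq
    (by simp only [← ofReal_norm, Complex.norm_real])

theorem cexp_ofReal_mul_I_mul_conj (a b : ℝ) :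
    Complex.exp (a * I) * conj (Complex.exp (b * I)) = Complex.exp ((a - b : ℝ) * I) := by
  rw [← Complex.exp_conj, map_mul, Complex.conj_ofReal, Complex.conj_I, ← Complex.exp_add]
  push_cast
  ring_nf

theorem lintegral_enorm_integral_cexp_mul_sq_le {R : ℝ} {w m : ℝ → ℝ} {K : ℝ≥0∞}
    (hK : HasKernelMajorant (2 * R) w K) (hw0 : ∀ ξ, 0 < w ξ) (hm : Integrable m)
    (hm0 : ∀ σ, 0 < m σ) {t : ℝ → ℝ} (ht : Measurable t) (htR : ∀ x, |t x| ≤ R)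
    {F : ℝ × ℝ → ℂ} (hF : Integrable F)
    (hu : Integrable fun x ↦ ∫ p : ℝ × ℝ, Complex.exp ((x * p.1 + t x * p.2 : ℝ) * I) * F p) :
    ∫⁻ x, ‖∫ p : ℝ × ℝ, Complex.exp ((x * p.1 + t x * p.2 : ℝ) * I) * F p‖ₑ ^ 2 ≤
      (K * ∫⁻ σ, ‖m σ‖ₑ) *
        ∫⁻ p, (ENNReal.ofReal (w p.1 * m (p.2 - p.1 ^ 3)))⁻¹ * ‖F p‖ₑ ^ 2 := by
  obtain ⟨Φ, hΦ, hΦK, hmaj⟩ := hK.exists_majorant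
  have hkernel : ∀ x y, ‖∫ p : ℝ × ℝ, ((w p.1 * m (p.2 - p.1 ^ 3) : ℝ) : ℂ) *
      (Complex.exp ((x * p.1 + t x * p.2 : ℝ) * I) *
        conj (Complex.exp ((y * p.1 + t y * p.2 : ℝ) * I)))‖ₑ ≤ Φ (x - y) * ∫⁻ σ, ‖m σ‖ₑ := by
    intro x y
    simp only [cexp_ofReal_mul_I_mul_conj, add_sub_add_comm, ← sub_mul]
    refine (enorm_integral_ofReal_mul_cexp_le hK.integrable hm _ _).trans ?_
    gcongr
    refine hmaj _ _ ?_
    linarith [abs_sub (t x) (t y), htR x, htR y]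
  refine lintegral_enorm_integral_sq_le (ω := fun p ↦ w p.1 * m (p.2 - p.1 ^ 3))
    (e := fun q : ℝ × ℝ × ℝ ↦ Complex.exp ((q.1 * q.2.1 + t q.1 * q.2.2 : ℝ) * I))
    (κ := fun q ↦ Φ (q.1 - q.2) * ∫⁻ σ, ‖m σ‖ₑ) (by fun_prop)
    (fun q ↦ (Complex.norm_exp_ofReal_mul_I _).le)
    (integrable_mul_comp_sub (f := (· ^ 3)) (by fun_prop) hK.integrable hm)
    (fun p ↦ mul_pos (hw0 _) (hm0 _)) (by fun_prop) hkernel (fun x ↦ ?_) (fun y ↦ ?_) hF hu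
  · rw [lintegral_mul_const _ (by fun_prop), lintegral_sub_left_eq_self Φ]
    gcongr
  · rw [lintegral_mul_const _ (by fun_prop), lintegral_sub_right_eq_self Φ]
    gcongr

end ModulationWeight

section SpaceTimeFourier

open scoped FourierTransform

theorem exists_one_add_norm_pow_mul_norm_le {E F : Type*} [NormedAddCommGroup E] [NormedSpace ℝ E]
    [NormedAddCommGroup F] [NormedSpace ℝ F] (G : SchwartzMap E F) (n : ℕ) :
    ∃ C, ∀ x, (1 + ‖x‖) ^ n * ‖G x‖ ≤ C :=
  ⟨_, fun x ↦ by simpa only [norm_iteratedFDeriv_zero] using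
    SchwartzMap.one_add_le_sup_seminorm_apply (𝕜 := ℝ) (m := (n, 0)) le_rfl le_rfl G x⟩

theorem integrable_mul_norm_sq_of_norm_le_pow {E F : Type*} [NormedAddCommGroup E]
    [NormedSpace ℝ E] [MeasurableSpace E] [BorelSpace E] [SecondCountableTopology E]
    [NormedAddCommGroup F] [NormedSpace ℝ F] {μ : Measure E} [μ.HasTemperateGrowth] {v : E → ℝ}
    {n : ℕ} (hv : AEStronglyMeasurable v μ) (hvn : ∀ x, ‖v x‖ ≤ (1 + ‖x‖) ^ n)
    (G : SchwartzMap E F) : Integrable (fun x ↦ v x * ‖G x‖ ^ 2) μ := by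
  obtain ⟨C, hC⟩ := exists_one_add_norm_pow_mul_norm_le G n
  simp only [sq, ← mul_assoc]
  refine G.integrable.norm.bdd_mul (c := C) (hv.mul G.continuous.aestronglyMeasurable.norm)
    (.of_forall fun x ↦ ?_)
  rw [norm_mul, norm_norm]
  exact (mul_le_mul_of_nonneg_right (hvn x) (norm_nonneg _)).trans (hC x)

theorem one_add_abs_sub_pow_three_le (p : ℝ × ℝ) : 1 + |p.2 - p.1 ^ 3| ≤ (1 + ‖p‖) ^ 3 := by
  have hfst : |p.1| ^ 3 ≤ ‖p‖ ^ 3 := pow_le_pow_left₀ (abs_nonneg _) (norm_fst_le p) 3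
  calc 1 + |p.2 - p.1 ^ 3| ≤ 1 + (|p.2| + |p.1| ^ 3) := by
        rw [← abs_pow]
        gcongr
        exact abs_sub _ _
    _ ≤ 1 + (‖p‖ + ‖p‖ ^ 3) := by
        gcongr
        exact norm_snd_le p
    _ ≤ (1 + ‖p‖) ^ 3 := by nlinarith [norm_nonneg p, sq_nonneg ‖p‖]

theorem exists_bourgain_weight_le_pow {s b : ℝ} (hs : 0 ≤ s) (hb : 0 ≤ b) :
    ∃ n : ℕ, ∀ p : ℝ × ℝ,
      (1 + |p.1|) ^ (2 * s) * (1 + |p.2 - p.1 ^ 3|) ^ (2 * b) ≤ (1 + ‖p‖) ^ n := by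
  obtain ⟨n, hn⟩ := exists_nat_ge (2 * s + 3 * (2 * b))
  refine ⟨n, fun p ↦ ?_⟩
  have hone : 1 ≤ 1 + ‖p‖ := le_add_of_nonneg_right (norm_nonneg p)
  calc (1 + |p.1|) ^ (2 * s) * (1 + |p.2 - p.1 ^ 3|) ^ (2 * b)
      ≤ (1 + ‖p‖) ^ (2 * s) * ((1 + ‖p‖) ^ 3) ^ (2 * b) := by
        gcongr
        exacts [norm_fst_le p, one_add_abs_sub_pow_three_le p]
    _ = (1 + ‖p‖) ^ (2 * s + 3 * (2 * b)) := by
        rw [Real.rpow_add (by positivity), Real.rpow_mul (by positivity) 3, Real.rpow_ofNat]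
    _ ≤ (1 + ‖p‖) ^ (n : ℝ) := Real.rpow_le_rpow_of_exponent_le hone hn
    _ = (1 + ‖p‖) ^ n := Real.rpow_natCast _ _

theorem integrable_bourgain_weight_mul_norm_sq {s b : ℝ} (hs : 0 ≤ s) (hb : 0 ≤ b)
    (G : SchwartzMap (ℝ × ℝ) ℂ) :
    Integrable fun p : ℝ × ℝ ↦ (1 + |p.1|) ^ (2 * s) * (1 + |p.2 - p.1 ^ 3|) ^ (2 * b) *
      ‖G p‖ ^ 2 := by
  obtain ⟨n, hn⟩ := exists_bourgain_weight_le_pow hs hb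
  refine integrable_mul_norm_sq_of_norm_le_pow (n := n) (by fun_prop) (fun p ↦ ?_) G
  rw [Real.norm_of_nonneg (by positivity)]
  exact hn p

theorem integrable_comp_prodMk {t : ℝ → ℝ} (ht : Measurable t) (U : SchwartzMap (ℝ × ℝ) ℂ) :
    Integrable fun x ↦ U (x, t x) := by
  obtain ⟨C, hC⟩ := exists_one_add_norm_pow_mul_norm_le U 2
  refine ((integrable_one_add_norm (E := ℝ) (r := 2) (by simp)).const_mul C).mono'
    (U.continuous.measurable.comp (by fun_prop)).aestronglyMeasurable (.of_forall fun x ↦ ?_)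
  rw [Real.rpow_neg (by positivity), Real.rpow_ofNat, ← div_eq_mul_inv,
    le_div_iff₀' (by positivity)]
  refine (hC (x, t x)).trans' ?_
  gcongr
  exact norm_fst_le (x, t x)

/-- The space-time Fourier transform `Û(ξ, τ) = ∫ e^{-i(xξ + tτ)} U(x, t) dx dt`, obtained from the
transform of Mathlib, which is defined on inner product spaces and has phase `-2πi⟪v, w⟫`. -/
noncomputable def spaceTimeFourier (U : SchwartzMap (ℝ × ℝ) ℂ) : SchwartzMap (ℝ × ℝ) ℂ :=
  SchwartzMap.compCLMOfContinuousLinearEquiv ℂ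
    ((ContinuousLinearEquiv.smulLeft (Units.mk0 (2 * Real.pi)⁻¹ (by positivity))).trans
      (WithLp.prodContinuousLinearEquiv 2 ℝ ℝ ℝ).symm)
    (𝓕 (SchwartzMap.compCLMOfContinuousLinearEquiv ℂ (WithLp.prodContinuousLinearEquiv 2 ℝ ℝ ℝ) U))

theorem integral_comp_toLp {E : Type*} [NormedAddCommGroup E] [NormedSpace ℝ E]
    (f : WithLp 2 (ℝ × ℝ) → E) : ∫ v, f v = ∫ q, f (WithLp.toLp 2 q) :=
  ((WithLp.volume_preserving_toLp ℝ ℝ).integral_comp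
    (MeasurableEquiv.toLp 2 (ℝ × ℝ)).measurableEmbedding f).symm

theorem spaceTimeFourier_eq_fourier (U : SchwartzMap (ℝ × ℝ) ℂ) (p : ℝ × ℝ) :
    spaceTimeFourier U p = 𝓕 (SchwartzMap.compCLMOfContinuousLinearEquiv ℂ
      (WithLp.prodContinuousLinearEquiv 2 ℝ ℝ ℝ) U) (WithLp.toLp 2 ((2 * Real.pi)⁻¹ • p)) := rfl

theorem spaceTimeFourier_apply (U : SchwartzMap (ℝ × ℝ) ℂ) (p : ℝ × ℝ) :
    spaceTimeFourier U p =
      ∫ q : ℝ × ℝ, Complex.exp (-I * (q.1 * p.1 + q.2 * p.2)) * U q := by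
  rw [spaceTimeFourier_eq_fourier, SchwartzMap.fourier_coe, Real.fourier_eq', integral_comp_toLp]
  congr! 3 with q
  simp only [WithLp.prod_inner_apply, Prod.smul_fst, Prod.smul_snd, smul_eq_mul,
    RCLike.inner_apply, conj_trivial]
  push_cast
  field_simp

theorem eq_integral_spaceTimeFourier (U : SchwartzMap (ℝ × ℝ) ℂ) (x t : ℝ) :
    U (x, t) = ∫ p : ℝ × ℝ, Complex.exp ((x * p.1 + t * p.2 : ℝ) * I) *
      ((((2 * Real.pi) ^ 2)⁻¹ : ℝ) * spaceTimeFourier U p) := by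
  set V : SchwartzMap (WithLp 2 (ℝ × ℝ)) ℂ := SchwartzMap.compCLMOfContinuousLinearEquiv ℂ
    (WithLp.prodContinuousLinearEquiv 2 ℝ ℝ ℝ) U with hV
  set f : ℝ × ℝ → ℂ := fun p ↦ Complex.exp ((x * p.1 + t * p.2 : ℝ) * I) * spaceTimeFourier U p
  have hf : ∀ p : ℝ × ℝ, f ((2 * Real.pi) • p) =
      Complex.exp ((2 * Real.pi * (x * p.1 + t * p.2) : ℝ) * I) * 𝓕 V (WithLp.toLp 2 p) := by
    intro p
    have hpi : 2 * Real.pi ≠ 0 := by positivity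
    simp only [f, spaceTimeFourier_eq_fourier, ← hV, inv_smul_smul₀ hpi,
      Prod.smul_fst, Prod.smul_snd, smul_eq_mul]
    ring_nf
  calc U (x, t) = 𝓕⁻ (𝓕 V) (WithLp.toLp 2 (x, t)) := by
        rw [FourierTransform.fourierInv_fourier_eq V]
        rfl
    _ = ∫ p : ℝ × ℝ, f ((2 * Real.pi) • p) := by
        rw [SchwartzMap.fourierInv_coe, Real.fourierInv_eq', integral_comp_toLp]
        simp only [WithLp.prod_inner_apply, smul_eq_mul, hf]
        congr! 4
    _ = (((2 * Real.pi) ^ 2)⁻¹ : ℝ) * ∫ p : ℝ × ℝ, f p := by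
        rw [Measure.integral_comp_smul, Module.finrank_prod, Module.finrank_self,
          abs_of_pos (by positivity), Complex.real_smul]
    _ = _ := by
        rw [← integral_const_mul]
        simp only [f, mul_left_comm]

end SpaceTimeFourier

theorem ofReal_biSup_norm_sq_le {E T : Type*} [NormedAddCommGroup E] (S : Set T) (u : T → E) :
    ENNReal.ofReal ((⨆ t ∈ S, ‖u t‖) ^ 2) ≤ ⨆ t : S, ‖u t‖ₑ ^ 2 := by
  set M := ⨆ t : S, ‖u t‖ₑ ^ 2
  obtain hM | hM := eq_or_ne M ∞
  · exact hM ▸ le_top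
  have hu : ∀ t ∈ S, ‖u t‖ ≤ √M.toReal := fun t ht ↦ Real.le_sqrt_of_sq_le <| by
    simpa using ENNReal.toReal_mono hM (le_iSup (fun t : S ↦ ‖u t‖ₑ ^ 2) ⟨t, ht⟩)
  have hsup : ⨆ t ∈ S, ‖u t‖ ≤ √M.toReal := Real.iSup_le
    (fun t ↦ Real.iSup_le (hu t) (Real.sqrt_nonneg _)) (Real.sqrt_nonneg _)
  have hsup0 : 0 ≤ ⨆ t ∈ S, ‖u t‖ :=
    Real.iSup_nonneg fun t ↦ Real.iSup_nonneg fun _ ↦ norm_nonneg _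
  calc ENNReal.ofReal ((⨆ t ∈ S, ‖u t‖) ^ 2) ≤ ENNReal.ofReal (√M.toReal ^ 2) := by gcongr
    _ = M := by rw [Real.sq_sqrt ENNReal.toReal_nonneg, ENNReal.ofReal_toReal hM]

section MeasurableSelection

variable {X T : Type*} [MeasurableSpace X] [MeasurableSpace T] {f : X → T → ℝ≥0∞}

theorem exists_measurable_forall_le (hf : Measurable f.uncurry) (a : ℕ → T) (N : ℕ) :
    ∃ t : X → T, Measurable t ∧ ∀ x, ∀ n ≤ N, f x (a n) ≤ f x (t x) := by
  induction N with
  | zero => exact ⟨fun _ ↦ a 0, measurable_const, fun x n hn ↦ by rw [Nat.le_zero.mp hn]⟩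
  | succ N ih =>
    obtain ⟨t, ht, hmax⟩ := ih
    have hset : MeasurableSet {x | f x (t x) ≤ f x (a (N + 1))} :=
      measurableSet_le (hf.comp (measurable_id.prodMk ht))
        (hf.comp (measurable_id.prodMk measurable_const))
    refine ⟨fun x ↦ if f x (t x) ≤ f x (a (N + 1)) then a (N + 1) else t x,
      Measurable.ite hset measurable_const ht, fun x n hn ↦ ?_⟩
    beta_reduce
    split_ifs with hx
    · obtain hn | rfl := Nat.le_succ_iff.mp hn
      exacts [(hmax x n hn).trans hx, le_rfl]
    · obtain hn | rfl := Nat.le_succ_iff.mp hn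
      exacts [hmax x n hn, (not_le.mp hx).le]

theorem lintegral_iSup_le_of_forall_measurable {μ : Measure X} [TopologicalSpace T]
    [TopologicalSpace.SeparableSpace T] {B : ℝ≥0∞} (hf : Measurable f.uncurry)
    (hlsc : ∀ x, LowerSemicontinuous (f x))
    (hB : ∀ t : X → T, Measurable t → ∫⁻ x, f x (t x) ∂μ ≤ B) :
    ∫⁻ x, ⨆ t, f x t ∂μ ≤ B := by
  obtain hT | hT := isEmpty_or_nonempty T
  · simp
  set a : ℕ → T := TopologicalSpace.denseSeq T
  have hdense : ∀ x, ⨆ t, f x t = ⨆ n, partialSups (fun n ↦ f x (a n)) n := fun x ↦ by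
    rw [iSup_partialSups_eq]
    refine (iSup_comp_le (f x) a).antisymm' (iSup_le fun t ↦ ?_)
    exact (TopologicalSpace.denseRange_denseSeq T).induction_on t
      ((hlsc x).isClosed_preimage _) fun n ↦ le_iSup (fun n ↦ f x (a n)) n
  have hmono : Monotone fun N x ↦ partialSups (fun n ↦ f x (a n)) N :=
    fun _ _ hNM x ↦ (partialSups _).monotone hNM
  simp only [hdense]
  rw [lintegral_iSup (fun N ↦ ?_) hmono]
  · refine iSup_le fun N ↦ ?_
    obtain ⟨t, ht, hmax⟩ := exists_measurable_forall_le hf a N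
    exact (lintegral_mono fun x ↦ partialSups_le _ _ _ (hmax x)).trans (hB t ht)
  · simp only [partialSups_eq_biSup]
    exact .iSup fun n ↦ .iSup fun _ ↦ hf.comp (measurable_id.prodMk measurable_const)

end MeasurableSelection

section MaximalEstimate

theorem inv_ofReal_weight_mul_le {s b w : ℝ} {p : ℝ × ℝ} (hw : (1 + |p.1|) ^ (-(2 * s)) ≤ w) :
    (ENNReal.ofReal (w * (1 + |p.2 - p.1 ^ 3|) ^ (-(2 * b))))⁻¹ ≤
      ENNReal.ofReal ((1 + |p.1|) ^ (2 * s) * (1 + |p.2 - p.1 ^ 3|) ^ (2 * b)) := by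
  have hpos : 0 < (1 + |p.1|) ^ (2 * s) * (1 + |p.2 - p.1 ^ 3|) ^ (2 * b) := by positivity
  rw [ENNReal.inv_le_iff_inv_le, ← ENNReal.ofReal_inv_of_pos hpos, mul_inv,
    ← Real.rpow_neg (by positivity), ← Real.rpow_neg (by positivity)]
  gcongr

theorem exists_lintegral_enorm_comp_prodMk_sq_le {s b R : ℝ} (hs : 3 / 4 < s) (hb : 1 / 2 < b)
    (hR : 0 ≤ R) : ∃ K ≠ ∞, ∀ t : ℝ → ℝ, Measurable t → (∀ x, |t x| ≤ R) →
      ∀ U : SchwartzMap (ℝ × ℝ) ℂ, ∫⁻ x, ‖U (x, t x)‖ₑ ^ 2 ≤ K * ENNReal.ofReal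
        (∫ p : ℝ × ℝ, (1 + |p.1|) ^ (2 * s) * (1 + |p.2 - p.1 ^ 3|) ^ (2 * b) *
          ‖spaceTimeFourier U p‖ ^ 2) := by
  obtain ⟨w, K, hK, hmaj, hw⟩ := exists_hasKernelMajorant_rpow_le
    (show 3 / 2 < 2 * s by linarith) (show 0 ≤ 2 * R by linarith)
  set m : ℝ → ℝ := fun σ ↦ (1 + |σ|) ^ (-(2 * b))
  have hm : Integrable m := integrable_one_add_norm (by simpa using by linarith)
  set c : ℂ := ((((2 * Real.pi) ^ 2)⁻¹ : ℝ) : ℂ)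
  refine ⟨K * (∫⁻ σ, ‖m σ‖ₑ) * ‖c‖ₑ ^ 2, ENNReal.mul_ne_top (ENNReal.mul_ne_top hK hm.2.ne)
    (by simp), fun t ht htR U ↦ ?_⟩
  have hinv : ∀ x, U (x, t x) = ∫ p : ℝ × ℝ, Complex.exp ((x * p.1 + t x * p.2 : ℝ) * I) *
      (c * spaceTimeFourier U p) := fun x ↦ eq_integral_spaceTimeFourier U x (t x)
  calc ∫⁻ x, ‖U (x, t x)‖ₑ ^ 2
      ≤ (K * ∫⁻ σ, ‖m σ‖ₑ) * ∫⁻ p : ℝ × ℝ, (ENNReal.ofReal (w p.1 * m (p.2 - p.1 ^ 3)))⁻¹ *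
          ‖c * spaceTimeFourier U p‖ₑ ^ 2 := by
        have hu := integrable_comp_prodMk ht U
        simp only [hinv] at hu ⊢
        exact lintegral_enorm_integral_cexp_mul_sq_le hmaj
          (fun ξ ↦ (by positivity : 0 < (1 + |ξ|) ^ (-(2 * s))).trans_le (hw ξ)) hm
          (fun σ ↦ by positivity) ht htR ((spaceTimeFourier U).integrable.const_mul c) hu
    _ ≤ (K * ∫⁻ σ, ‖m σ‖ₑ) * ∫⁻ p : ℝ × ℝ, ENNReal.ofReal
          ((1 + |p.1|) ^ (2 * s) * (1 + |p.2 - p.1 ^ 3|) ^ (2 * b)) *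
            ‖c * spaceTimeFourier U p‖ₑ ^ 2 := by
        gcongr with p
        exact inv_ofReal_weight_mul_le (hw p.1)
    _ = _ := by
        rw [ofReal_integral_eq_lintegral_ofReal
          (integrable_bourgain_weight_mul_norm_sq (by linarith) (by linarith) _)
          (.of_forall fun p ↦ by positivity), mul_assoc (K * _),
          ← lintegral_const_mul' (‖c‖ₑ ^ 2) _ (by simp)]
        congr! 3 with p
        rw [ENNReal.ofReal_mul (q := ‖_‖ ^ 2) (by positivity), ENNReal.ofReal_pow (norm_nonneg _),
          ofReal_norm, enorm_mul, mul_pow, mul_left_comm]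

end MaximalEstimate

end Airy

theorem L2x_LinftyT_est_general (s b R : ℝ) (hs : 3 / 4 < s) (hb : 1 / 2 < b) :
    ∃ C > 0, ∀ S ⊆ Set.Icc (-R) R, ∀ U : SchwartzMap (ℝ × ℝ) ℂ,
      (∫⁻ x : ℝ, ENNReal.ofReal ((⨆ t ∈ S, ‖U (x, t)‖) ^ 2)) ^ ((1 : ℝ) / 2) ≤
      ENNReal.ofReal (C *
        (∫ p : ℝ × ℝ, (1 + |p.1|) ^ (2 * s) * (1 + |p.2 - p.1 ^ 3|) ^ (2 * b) *
          ‖∫ q : ℝ × ℝ, Complex.exp (-Complex.I * (q.1 * p.1 + q.2 * p.2)) * U q‖ ^ 2) ^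
        ((1 : ℝ) / 2)) := by
  obtain ⟨K, hK, hest⟩ := Airy.exists_lintegral_enorm_comp_prodMk_sq_le hs hb (abs_nonneg R)
  refine ⟨(K.toReal + 1) ^ ((1 : ℝ) / 2), by positivity, fun S hS U ↦ ?_⟩
  simp only [← Airy.spaceTimeFourier_apply]
  rw [← Real.mul_rpow (by positivity) (integral_nonneg fun p ↦ by positivity),
    ← ENNReal.ofReal_rpow_of_nonneg (by positivity) (by norm_num),
    ENNReal.ofReal_mul (by positivity)]
  gcongr
  calc ∫⁻ x : ℝ, ENNReal.ofReal ((⨆ t ∈ S, ‖U (x, t)‖) ^ 2)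
      ≤ ∫⁻ x : ℝ, ⨆ t : S, ‖U (x, t)‖ₑ ^ 2 :=
        lintegral_mono fun x ↦ Airy.ofReal_biSup_norm_sq_le S fun t ↦ U (x, t)
    _ ≤ K * ENNReal.ofReal _ := Airy.lintegral_iSup_le_of_forall_measurable
        (f := fun x (t : S) ↦ ‖U (x, t)‖ₑ ^ 2)
        ((U.continuous.comp (by fun_prop)).enorm.measurable.pow_const 2)
        (fun x ↦ (ENNReal.continuous_pow 2 |>.comp
          (U.continuous.comp (by fun_prop)).enorm).lowerSemicontinuous)
        fun t ht ↦ hest (fun x ↦ t x) (by fun_prop)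
          (fun x ↦ (abs_le.mpr (hS (t x).2)).trans (le_abs_self R)) U
    _ ≤ _ := by
        gcongr
        exact (ENNReal.ofReal_toReal hK).ge.trans (ENNReal.ofReal_le_ofReal (by simp))

/-- Estimate (2.2) of Lemma 2.4 of the paper: for `s > 3/4`, `b > 1/2` and `0 < T ≤ 1`,
`‖U‖_{L²ₓ L^∞_{|t|≤T}} ≤ C ‖U‖_{X^{s,b}}`. -/
theorem L2x_LinftyT_est (s b : ℝ) (hs : 3 / 4 < s) (hb : 1 / 2 < b) :
    ∃ C > 0, ∀ T : ℝ, 0 < T → T ≤ 1 → ∀ U : SchwartzMap (ℝ × ℝ) ℂ,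
      (∫⁻ x : ℝ, ENNReal.ofReal
          ((⨆ t ∈ Set.Icc (-T) T, ‖U (x, t)‖) ^ 2)) ^ ((1 : ℝ) / 2) ≤
      ENNReal.ofReal (C *
        (∫ p : ℝ × ℝ, (1 + |p.1|) ^ (2 * s) * (1 + |p.2 - p.1 ^ 3|) ^ (2 * b) *
          ‖∫ q : ℝ × ℝ, Complex.exp (-Complex.I * (q.1 * p.1 + q.2 * p.2)) * U q‖ ^ 2) ^
        ((1 : ℝ) / 2)) := by
  obtain ⟨C, hC, hest⟩ := L2x_LinftyT_est_general s b 1 hs hb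
  exact ⟨C, hC, fun T _ hT ↦ hest _ (Set.Icc_subset_Icc (neg_le_neg hT) hT)⟩
end

section
/- Let b > 1/2. There exists a constant C > 0 such that for every T with 0 < T ≤ 1, every Schwartz function U : ℝ² → ℂ, and every x ∈ ℝ one has ( ∫_{−T}^{T} |(D_x U)(x,t)|² dt )^{1/2} ≤ C · ( ∫_{ℝ²} (1+|τ−ξ³|)^{2b} |Û(ξ,τ)|² dξ dτ )^{1/2}, where D_x is the Fourier multiplier in the x-variable with symbol |ξ|, i.e. (D_x U)(x,t) = (1/(2π)) ∫_ℝ |ξ| e^{ixξ} 𝓕_x U(ξ,t) dξ with 𝓕_x U(ξ,t) = ∫_ℝ e^{−ixξ}U(x,t) dx. -/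
open MeasureTheory ENNReal

/-!
For fixed `x`, the function `t ↦ (m(D) U)(x, t)` has the time Fourier transform
`τ ↦ (2π)⁻¹ ∫ m(ξ) e^{ixξ} Û(ξ, τ) dξ`, so by Plancherel it suffices to bound the latter in `L²_τ`.
Cauchy–Schwarz in `ξ` with the weight `w(τ - φ(ξ))` produces the factor
`∫ |m(ξ)|² / w(τ - φ(ξ)) dξ`. Since `|m|² ≤ |φ'|`, the substitution `u = φ(ξ)` bounds it by
`∫ 1 / w(u) du`, independently of `τ` and `x`; for `w(u) = (1 + |u|)^{2b}` this is finite exactly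
when `b > 1/2`. The Airy equation is the case `φ(ξ) = ξ³`, `m(ξ) = |ξ|`.
-/

open Asymptotics FourierTransform SchwartzMap

section LIntegral

variable {α : Type*} [MeasurableSpace α] {μ : Measure α} {f g w : α → ℝ≥0∞}

theorem sq_lintegral_mul_le (hf : AEMeasurable f μ) (hg : AEMeasurable g μ) :
    (∫⁻ a, f a * g a ∂μ) ^ 2 ≤ (∫⁻ a, f a ^ 2 ∂μ) * ∫⁻ a, g a ^ 2 ∂μ := by
  have holder := ENNReal.lintegral_mul_le_Lp_mul_Lq μ Real.HolderConjugate.two_two hf hg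
  calc (∫⁻ a, f a * g a ∂μ) ^ 2
      ≤ ((∫⁻ a, f a ^ (2 : ℝ) ∂μ) ^ (1 / 2 : ℝ) * (∫⁻ a, g a ^ (2 : ℝ) ∂μ) ^ (1 / 2 : ℝ)) ^ 2 := by
        gcongr
        exact holder
    _ = (∫⁻ a, f a ^ 2 ∂μ) * ∫⁻ a, g a ^ 2 ∂μ := by
        simp only [ENNReal.rpow_ofNat]
        rw [mul_pow, ← ENNReal.rpow_mul_natCast, ← ENNReal.rpow_mul_natCast]
        norm_num

theorem sq_lintegral_mul_le_weighted (hf : AEMeasurable f μ) (hg : AEMeasurable g μ)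
    (hw : AEMeasurable w μ) (hw_zero : ∀ a, w a ≠ 0) (hw_top : ∀ a, w a ≠ ∞) :
    (∫⁻ a, f a * g a ∂μ) ^ 2 ≤
      (∫⁻ a, f a ^ 2 * (w a)⁻¹ ∂μ) * ∫⁻ a, w a * g a ^ 2 ∂μ := by
  have sq_sqrt (y : ℝ≥0∞) : (y ^ (1 / 2 : ℝ)) ^ 2 = y := by
    rw [← ENNReal.rpow_mul_natCast]
    norm_num
  have sqrt_inv_mul_sqrt (a : α) : (w a)⁻¹ ^ (1 / 2 : ℝ) * w a ^ (1 / 2 : ℝ) = 1 := by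
    rw [← ENNReal.mul_rpow_of_nonneg _ _ (by norm_num),
      ENNReal.inv_mul_cancel (hw_zero a) (hw_top a), ENNReal.one_rpow]
  calc (∫⁻ a, f a * g a ∂μ) ^ 2
      = (∫⁻ a, (f a * (w a)⁻¹ ^ (1 / 2 : ℝ)) * (w a ^ (1 / 2 : ℝ) * g a) ∂μ) ^ 2 := by
        congr! 3 with a
        rw [mul_assoc, ← mul_assoc (_ ^ _) (_ ^ _), sqrt_inv_mul_sqrt, one_mul]
    _ ≤ _ := sq_lintegral_mul_le (by fun_prop) (by fun_prop)
    _ = (∫⁻ a, f a ^ 2 * (w a)⁻¹ ∂μ) * ∫⁻ a, w a * g a ^ 2 ∂μ := by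
        simp only [mul_pow, sq_sqrt]

theorem lintegral_abs_deriv_mul_comp_le {φ : ℝ → ℝ} (hφ : Differentiable ℝ φ)
    (hφ_inj : Function.Injective φ) (ρ : ℝ → ℝ≥0∞) :
    ∫⁻ ξ, ENNReal.ofReal |deriv φ ξ| * ρ (φ ξ) ≤ ∫⁻ u, ρ u := by
  have change_of_variables := lintegral_image_eq_lintegral_abs_deriv_mul MeasurableSet.univ
    (fun ξ _ ↦ (hφ ξ).hasDerivAt.hasDerivWithinAt) hφ_inj.injOn ρ
  rw [setLIntegral_univ] at change_of_variables
  rw [← change_of_variables]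
  exact setLIntegral_le_lintegral _ _

theorem lintegral_comp_const_mul {c : ℝ} (hc : c ≠ 0) {ρ : ℝ → ℝ≥0∞} (hρ : Measurable ρ) :
    ∫⁻ s, ρ (c * s) = ENNReal.ofReal |c⁻¹| * ∫⁻ τ, ρ τ := by
  rw [← lintegral_map hρ (measurable_const_mul c), Real.map_volume_mul_left hc,
    lintegral_smul_measure, smul_eq_mul]

theorem exists_pos_lintegral_inv_one_add_abs_rpow {r : ℝ} (hr : 1 < r) :
    ∃ K > 0, ∫⁻ u : ℝ, (ENNReal.ofReal ((1 + |u|) ^ r))⁻¹ = ENNReal.ofReal K := by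
  have inv_weight_integrable : Integrable fun u : ℝ ↦ (1 + ‖u‖) ^ (-r) :=
    integrable_one_add_norm (by simpa using hr)
  have support_eq : Function.support (fun u : ℝ ↦ (1 + ‖u‖) ^ (-r)) = Set.univ :=
    Set.eq_univ_of_forall fun u ↦ (by positivity : (1 + ‖u‖) ^ (-r) ≠ 0)
  refine ⟨∫ u : ℝ, (1 + ‖u‖) ^ (-r),
    (integral_pos_iff_support_of_nonneg (fun u ↦ by positivity) inv_weight_integrable).2 ?_, ?_⟩
  · rw [support_eq]
    simp
  · rw [ofReal_integral_eq_lintegral_ofReal inv_weight_integrable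
      (.of_forall fun u ↦ by positivity)]
    congr! 2 with u
    rw [Real.rpow_neg (by positivity), ENNReal.ofReal_inv_of_pos (by positivity), Real.norm_eq_abs]

end LIntegral

section Plancherel

variable {V E : Type*} [NormedAddCommGroup V] [InnerProductSpace ℝ V] [FiniteDimensional ℝ V]
  [MeasurableSpace V] [BorelSpace V] [NormedAddCommGroup E] [InnerProductSpace ℂ E]
  [CompleteSpace E] {f : V → E}

theorem fourier_ae_eq_fourier_toLp (hf : Integrable f) (hf2 : MemLp f 2) :
    𝓕 f =ᵐ[volume] (𝓕 (hf2.toLp f) : Lp E 2 (volume : Measure V)) := by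
  have fourier_continuous : Continuous (𝓕 f) :=
    VectorFourier.fourierIntegral_continuous Real.continuous_fourierChar
      (by exact continuous_inner) hf
  refine ae_eq_of_integral_contDiff_smul_eq fourier_continuous.locallyIntegrable
    ((Lp.memLp _).locallyIntegrable (by norm_num)) fun g g_smooth g_supp ↦ ?_
  have g_supp' : HasCompactSupport (Complex.ofRealCLM ∘ g) := g_supp.comp_left rfl
  let ψ : 𝓢(V, ℂ) := g_supp'.toSchwartzMap (by fun_prop)
  have smul_eq (F : V → E) : ∫ v, g v • F v = ∫ v, ψ v • F v :=
    integral_congr_ae (.of_forall fun v ↦ (Complex.coe_smul (g v) (F v)).symm)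
  have duality_L2 := congrArg (· ψ) (Lp.fourier_toTemperedDistribution_eq (hf2.toLp f))
  simp only [TemperedDistribution.fourier_apply, Lp.toTemperedDistribution_apply] at duality_L2
  have duality_L1 : ∫ v, (𝓕 ψ) v • f v = ∫ v, ψ v • 𝓕 f v := by
    simpa only [flip_innerₗ] using! VectorFourier.integral_fourierIntegral_smul_eq_flip
      (μ := volume) (ν := volume) (L := innerₗ V) Real.continuous_fourierChar
      (by exact continuous_inner) (ψ.integrable (μ := volume)) hf
  rw [smul_eq, smul_eq, ← duality_L2, ← duality_L1]
  refine integral_congr_ae ?_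
  filter_upwards [hf2.coeFn_toLp] with v hv
  rw [hv]

theorem lintegral_enorm_sq_fourierInv (hf : Integrable f) (hf2 : MemLp f 2) :
    ∫⁻ v, ‖𝓕⁻ f v‖ₑ ^ 2 = ∫⁻ v, ‖f v‖ₑ ^ 2 := by
  have lintegral_eq (g : V → E) : ∫⁻ v, ‖g v‖ₑ ^ 2 = eLpNorm g 2 volume ^ 2 := by
    simpa using (eLpNorm_nnreal_pow_eq_lintegral (μ := volume) (f := g) two_ne_zero).symm
  calc ∫⁻ v, ‖𝓕⁻ f v‖ₑ ^ 2 = ∫⁻ v, ‖𝓕 f v‖ₑ ^ 2 := by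
        simp_rw [Real.fourierInv_eq_fourier_neg]
        exact lintegral_neg_eq_self fun v ↦ ‖𝓕 f v‖ₑ ^ 2
    _ = ‖𝓕 (hf2.toLp f)‖ₑ ^ 2 := by
        rw [lintegral_eq, eLpNorm_congr_ae (fourier_ae_eq_fourier_toLp hf hf2), Lp.enorm_def]
    _ = ‖hf2.toLp f‖ₑ ^ 2 := by
        rw [← ofReal_norm, Lp.norm_fourier_eq, ofReal_norm]
    _ = ∫⁻ v, ‖f v‖ₑ ^ 2 := by
        rw [Lp.enorm_def, eLpNorm_congr_ae hf2.coeFn_toLp, lintegral_eq]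

end Plancherel

section PolynomialGrowth

variable {E F G : Type*} [NormedAddCommGroup E] [NormedAddCommGroup F] [NormedAddCommGroup G]

/-- `f` is bounded by a constant times a power of `1 + ‖x‖`, uniformly in `x`. In contrast to
`Function.HasTemperateGrowth`, no smoothness is required, so that `|ξ|` qualifies. -/
def HasPolynomialGrowth (f : E → F) : Prop :=
  ∃ k : ℕ, f =O[⊤] fun x ↦ (1 + ‖x‖) ^ k

namespace HasPolynomialGrowth

theorem comp_of_norm_le {f : F → G} (hf : HasPolynomialGrowth f) {g : E → F}
    (hg : ∀ x, ‖g x‖ ≤ ‖x‖) : HasPolynomialGrowth (f ∘ g) := by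
  obtain ⟨k, hk⟩ := hf
  refine ⟨k, (hk.comp_tendsto Filter.tendsto_top).trans (.of_bound' (.of_forall fun x ↦ ?_))⟩
  simp only [Function.comp_apply, norm_pow]
  gcongr
  rw [Real.norm_of_nonneg (by positivity), Real.norm_of_nonneg (by positivity)]
  gcongr
  exact hg x

theorem add {f g : E → F} (hf : HasPolynomialGrowth f) (hg : HasPolynomialGrowth g) :
    HasPolynomialGrowth (f + g) := by
  obtain ⟨k, hk⟩ := hf
  obtain ⟨l, hl⟩ := hg
  have pow_le {i j : ℕ} (h : i ≤ j) :
      (fun x : E ↦ (1 + ‖x‖) ^ i) =O[⊤] fun x ↦ (1 + ‖x‖) ^ j := by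
    refine .of_bound' (.of_forall fun x ↦ ?_)
    rw [Real.norm_of_nonneg (by positivity), Real.norm_of_nonneg (by positivity)]
    gcongr
    linarith [norm_nonneg x]
  exact ⟨max k l, (hk.trans (pow_le (le_max_left k l))).add (hl.trans (pow_le (le_max_right k l)))⟩

theorem one_add_norm_rpow {f : E → F} (hf : HasPolynomialGrowth f) (r : ℝ) :
    HasPolynomialGrowth fun x ↦ (1 + ‖f x‖) ^ r := by
  have const_growth : HasPolynomialGrowth fun _ : E ↦ (1 : ℝ) :=
    ⟨0, by simpa only [pow_zero] using isBigO_refl _ _⟩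
  have norm_growth : HasPolynomialGrowth fun x ↦ ‖f x‖ := hf.imp fun _ hk ↦ hk.norm_left
  obtain ⟨k, hk⟩ : HasPolynomialGrowth fun x ↦ 1 + ‖f x‖ := const_growth.add norm_growth
  refine ⟨k * ⌈r⌉₊, IsBigO.trans (.of_bound' (.of_forall fun x ↦ ?_))
    (by simpa only [pow_mul] using hk.pow ⌈r⌉₊)⟩
  rw [Real.norm_of_nonneg (by positivity), Real.norm_of_nonneg (by positivity),
    ← Real.rpow_natCast]
  gcongr
  · linarith [norm_nonneg (f x)]
  · exact Nat.le_ceil r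

theorem integrable_smul [NormedSpace ℝ E] [NormedSpace ℝ F] [MeasurableSpace E] [BorelSpace E]
    [SecondCountableTopology E] {μ : Measure E} [μ.HasTemperateGrowth]
    {𝕜 : Type*} [NormedField 𝕜] [NormedSpace 𝕜 F] {f : E → 𝕜} (hf : HasPolynomialGrowth f)
    (hf_meas : AEStronglyMeasurable f μ) (W : 𝓢(E, F)) : Integrable (fun x ↦ f x • W x) μ := by
  obtain ⟨k, hk⟩ := hf
  obtain ⟨C, hC_pos, hC⟩ := hk.exists_pos
  have bound_integrable :
      Integrable (fun x ↦ C * (2 ^ (k - 1) * (‖x‖ ^ 0 * ‖W x‖ + ‖x‖ ^ k * ‖W x‖))) μ :=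
    (((W.integrable_pow_mul μ 0).add (W.integrable_pow_mul μ k)).const_mul _).const_mul _
  refine bound_integrable.mono' (hf_meas.smul W.continuous.aestronglyMeasurable)
    (.of_forall fun x ↦ ?_)
  have hfx : ‖f x‖ ≤ C * (1 + ‖x‖) ^ k := by
    simpa [abs_of_nonneg (by positivity : 0 ≤ 1 + ‖x‖)] using (isBigOWith_top.mp hC) x
  calc ‖f x • W x‖ = ‖f x‖ * ‖W x‖ := norm_smul _ _
    _ ≤ C * (2 ^ (k - 1) * (1 ^ k + ‖x‖ ^ k)) * ‖W x‖ := by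
        gcongr
        refine hfx.trans ?_
        gcongr
        exact add_pow_le zero_le_one (norm_nonneg x) k
    _ = C * (2 ^ (k - 1) * (‖x‖ ^ 0 * ‖W x‖ + ‖x‖ ^ k * ‖W x‖)) := by ring

end HasPolynomialGrowth

theorem hasPolynomialGrowth_pow {𝕜 : Type*} [NormedField 𝕜] (n : ℕ) :
    HasPolynomialGrowth fun ξ : 𝕜 ↦ ξ ^ n := by
  refine ⟨n, .of_bound' (.of_forall fun ξ ↦ ?_)⟩
  rw [norm_pow, norm_pow, Real.norm_of_nonneg (by positivity)]
  gcongr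
  linarith

end PolynomialGrowth

section SpaceTimeFourier

/-- The partial Fourier transform `𝓕ₓ U(ξ, t) = ∫ e^{-iyξ} U(y, t) dy` in the space variable. -/
noncomputable def spaceFourier (U : 𝓢(ℝ × ℝ, ℂ)) (ξ t : ℝ) : ℂ :=
  ∫ y : ℝ, Complex.exp (-Complex.I * y * ξ) * U (y, t)

/-- The space-time Fourier transform `Û(ξ, τ) = ∫ e^{-i(xξ + tτ)} U(x, t) dx dt`, in the paper's
normalization; Mathlib's `𝓕` has the kernel `e^{-2πi⟨·, ·⟩}` instead. -/
noncomputable def spaceTimeFourier (U : 𝓢(ℝ × ℝ, ℂ)) (p : ℝ × ℝ) : ℂ :=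
  ∫ q : ℝ × ℝ, Complex.exp (-Complex.I * (q.1 * p.1 + q.2 * p.2)) * U q

theorem exists_schwartzMap_eq_spaceTimeFourier (U : 𝓢(ℝ × ℝ, ℂ)) :
    ∃ W : 𝓢(ℝ × ℝ, ℂ), ⇑W = spaceTimeFourier U := by
  let e := WithLp.prodContinuousLinearEquiv 2 ℝ ℝ ℝ
  let V : 𝓢(WithLp 2 (ℝ × ℝ), ℂ) := compCLMOfContinuousLinearEquiv ℂ e U
  let dilation : (ℝ × ℝ) ≃L[ℝ] (ℝ × ℝ) := ContinuousLinearEquiv.smulLeft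
    (Units.mk0 ((2 * Real.pi)⁻¹ : ℝ) (by positivity))
  refine ⟨compCLMOfContinuousLinearEquiv ℂ (dilation.trans e.symm) (𝓕 V), funext fun p ↦ ?_⟩
  rw [compCLMOfContinuousLinearEquiv_apply, Function.comp, fourier_coe, Real.fourier_eq',
    spaceTimeFourier, ← (WithLp.volume_preserving_ofLp ℝ ℝ).integral_comp
      (MeasurableEquiv.toLp 2 (ℝ × ℝ)).symm.measurableEmbedding]
  refine integral_congr_ae (.of_forall fun v ↦ ?_)
  have inner_eq : inner ℝ v ((dilation.trans e.symm) p) =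
      (2 * Real.pi)⁻¹ * (v.ofLp.1 * p.1 + v.ofLp.2 * p.2) := by
    change inner ℝ v (WithLp.toLp 2 ((2 * Real.pi)⁻¹ • p)) = _
    rw [WithLp.prod_inner_apply]
    simp only [Prod.smul_fst, Prod.smul_snd, smul_eq_mul, RCLike.inner_apply, conj_trivial]
    ring
  simp only [smul_eq_mul, inner_eq]
  refine congrArg₂ (· * ·) (congrArg Complex.exp ?_) rfl
  push_cast
  field_simp [Real.pi_ne_zero]

theorem continuous_spaceTimeFourier (U : 𝓢(ℝ × ℝ, ℂ)) : Continuous (spaceTimeFourier U) := by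
  obtain ⟨W, hW⟩ := exists_schwartzMap_eq_spaceTimeFourier U
  exact hW ▸ W.continuous

theorem integrable_spaceTimeFourier_slice (U : 𝓢(ℝ × ℝ, ℂ)) (ξ : ℝ) :
    Integrable fun τ ↦ spaceTimeFourier U (ξ, τ) := by
  obtain ⟨W, hW⟩ := exists_schwartzMap_eq_spaceTimeFourier U
  have slice_growth : (fun τ : ℝ ↦ (ξ, τ)).HasTemperateGrowth := by
    have := ((ContinuousLinearMap.inr ℝ ℝ ℝ).hasTemperateGrowth).add (.const (ξ, (0 : ℝ)))
    convert! this using 2 with τ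
    simp
  have slice_antilipschitz : AntilipschitzWith 1 fun τ : ℝ ↦ (ξ, τ) :=
    .of_le_mul_dist fun s τ ↦ by simp [Prod.dist_eq]
  simpa only [← hW] using! (compCLMOfAntilipschitz ℂ slice_growth slice_antilipschitz W).integrable
    (μ := volume)

theorem integrable_exp_mul_schwartz (U : 𝓢(ℝ × ℝ, ℂ)) (ξ : ℝ) :
    Integrable fun q : ℝ × ℝ ↦ Complex.exp (-Complex.I * q.1 * ξ) * U q := by
  refine U.integrable.bdd_mul (c := 1) (by fun_prop) (.of_forall fun q ↦ ?_)
  simp [Complex.norm_exp]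

theorem integrable_spaceFourier (U : 𝓢(ℝ × ℝ, ℂ)) (ξ : ℝ) : Integrable (spaceFourier U ξ) :=
  (integrable_exp_mul_schwartz U ξ).integral_prod_right

theorem continuous_spaceFourier (U : 𝓢(ℝ × ℝ, ℂ)) (ξ : ℝ) : Continuous (spaceFourier U ξ) := by
  obtain ⟨C, hC⟩ : ∃ C, ∀ q : ℝ × ℝ, (1 + ‖q‖) ^ 2 * ‖U q‖ ≤ C :=
    ⟨_, fun q ↦ by simpa only [norm_iteratedFDeriv_zero] using
      one_add_le_sup_seminorm_apply (𝕜 := ℝ) (m := (2, 0)) le_rfl le_rfl U q⟩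
  refine continuous_of_dominated (bound := fun y ↦ C * (1 + ‖y‖) ^ (-2 : ℝ)) (fun t ↦ by fun_prop)
    (fun t ↦ .of_forall fun y ↦ ?_) ((integrable_one_add_norm (by simp)).const_mul C)
    (.of_forall fun y ↦ by fun_prop)
  have norm_exp : ‖Complex.exp (-Complex.I * y * ξ)‖ = 1 := by simp [Complex.norm_exp]
  rw [norm_mul, norm_exp, one_mul, Real.rpow_neg (by positivity), ← div_eq_mul_inv,
    le_div_iff₀ (by positivity), mul_comm, Real.rpow_two]
  refine le_trans ?_ (hC (y, t))
  gcongr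
  exact norm_fst_le (y, t)

theorem fourier_spaceFourier (U : 𝓢(ℝ × ℝ, ℂ)) (ξ : ℝ) :
    𝓕 (spaceFourier U ξ) = fun s ↦ spaceTimeFourier U (ξ, 2 * Real.pi * s) := by
  ext s
  have kernel_integrable : Integrable fun q : ℝ × ℝ ↦
      Complex.exp (↑(-2 * Real.pi * q.2 * s) * Complex.I) *
        (Complex.exp (-Complex.I * q.1 * ξ) * U q) :=
    (integrable_exp_mul_schwartz U ξ).bdd_mul (c := 1) (by fun_prop)
      (.of_forall fun q ↦ (Complex.norm_exp_ofReal_mul_I _).le)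
  simp only [Real.fourier_real_eq_integral_exp_smul, smul_eq_mul, spaceFourier, spaceTimeFourier,
    ← integral_const_mul]
  rw [← integral_prod_symm _ kernel_integrable]
  congr! 2
  rw [← mul_assoc, ← Complex.exp_add]
  congr 2
  push_cast
  ring

theorem fourierInv_comp_two_pi_mul (f : ℝ → ℂ) (t : ℝ) :
    𝓕⁻ (fun s ↦ f (2 * Real.pi * s)) t =
      (1 / (2 * Real.pi) : ℂ) * ∫ τ : ℝ, Complex.exp (Complex.I * τ * t) * f τ := by
  have dilation := Measure.integral_comp_mul_left
    (fun τ : ℝ ↦ Complex.exp (Complex.I * τ * t) * f τ) (2 * Real.pi)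
  rw [abs_of_pos (by positivity), Complex.real_smul] at dilation
  calc 𝓕⁻ (fun s ↦ f (2 * Real.pi * s)) t
      = ∫ s : ℝ, Complex.exp (Complex.I * ↑(2 * Real.pi * s) * t) * f (2 * Real.pi * s) := by
        rw [Real.fourierInv_eq']
        congr! 3 with s
        congr 1
        simp only [RCLike.inner_apply, conj_trivial]
        push_cast
        ring
    _ = (1 / (2 * Real.pi) : ℂ) * ∫ τ : ℝ, Complex.exp (Complex.I * τ * t) * f τ := by
        rw [dilation]
        push_cast
        rw [one_div]

theorem spaceFourier_eq_integral (U : 𝓢(ℝ × ℝ, ℂ)) (ξ t : ℝ) :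
    spaceFourier U ξ t = (1 / (2 * Real.pi) : ℂ) *
      ∫ τ : ℝ, Complex.exp (Complex.I * τ * t) * spaceTimeFourier U (ξ, τ) := by
  have fourier_integrable : Integrable (𝓕 (spaceFourier U ξ)) := by
    rw [fourier_spaceFourier]
    exact (integrable_spaceTimeFourier_slice U ξ).comp_mul_left' (by positivity)
  rw [← fourierInv_comp_two_pi_mul fun τ ↦ spaceTimeFourier U (ξ, τ), ← fourier_spaceFourier,
    (continuous_spaceFourier U ξ).fourierInv_fourier_eq (integrable_spaceFourier U ξ)
      fourier_integrable]

end SpaceTimeFourier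

section Multiplier

/-- The Fourier multiplier `m(D)` in the space variable,
`(m(D) U)(x, t) = (2π)⁻¹ ∫ m(ξ) e^{ixξ} 𝓕ₓ U(ξ, t) dξ`. -/
noncomputable def spaceMultiplier (m : ℝ → ℂ) (U : 𝓢(ℝ × ℝ, ℂ)) (x t : ℝ) : ℂ :=
  (1 / (2 * Real.pi) : ℂ) * ∫ ξ : ℝ, m ξ * Complex.exp (Complex.I * x * ξ) * spaceFourier U ξ t

/-- The Fourier transform in time of `t ↦ (m(D) U)(x, t)`, expressed through `Û`; see
`spaceMultiplier_eq_fourierInv`. -/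
noncomputable def spaceMultiplierTimeFourier (m : ℝ → ℂ) (U : 𝓢(ℝ × ℝ, ℂ)) (x τ : ℝ) : ℂ :=
  (1 / (2 * Real.pi) : ℂ) *
    ∫ ξ : ℝ, m ξ * Complex.exp (Complex.I * x * ξ) * spaceTimeFourier U (ξ, τ)

variable {m : ℝ → ℂ}

theorem integrable_multiplier_mul_spaceTimeFourier (hm : Measurable m)
    (hm_growth : HasPolynomialGrowth m) (U : 𝓢(ℝ × ℝ, ℂ)) (x : ℝ) :
    Integrable fun p : ℝ × ℝ ↦
      m p.1 * Complex.exp (Complex.I * x * p.1) * spaceTimeFourier U p := by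
  obtain ⟨W, hW⟩ := exists_schwartzMap_eq_spaceTimeFourier U
  have m_mul_integrable : Integrable fun p : ℝ × ℝ ↦ m p.1 * W p :=
    (hm_growth.comp_of_norm_le norm_fst_le).integrable_smul
      (hm.comp measurable_fst).aestronglyMeasurable W
  refine (m_mul_integrable.bdd_mul (c := 1) (f := fun p ↦ Complex.exp (Complex.I * x * p.1))
    (by fun_prop) (.of_forall fun p ↦ by simp [Complex.norm_exp])).congr (.of_forall fun p ↦ ?_)
  simp only [← hW]
  ring

theorem integrable_spaceMultiplierTimeFourier (hm : Measurable m)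
    (hm_growth : HasPolynomialGrowth m) (U : 𝓢(ℝ × ℝ, ℂ)) (x : ℝ) :
    Integrable (spaceMultiplierTimeFourier m U x) :=
  (integrable_multiplier_mul_spaceTimeFourier hm hm_growth U x).integral_prod_right.const_mul _

theorem spaceMultiplier_eq_fourierInv (hm : Measurable m) (hm_growth : HasPolynomialGrowth m)
    (U : 𝓢(ℝ × ℝ, ℂ)) (x t : ℝ) :
    spaceMultiplier m U x t =
      𝓕⁻ (fun s ↦ spaceMultiplierTimeFourier m U x (2 * Real.pi * s)) t := by
  have kernel_integrable : Integrable fun p : ℝ × ℝ ↦ Complex.exp (Complex.I * p.2 * t) *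
      (m p.1 * Complex.exp (Complex.I * x * p.1) * spaceTimeFourier U p) :=
    (integrable_multiplier_mul_spaceTimeFourier hm hm_growth U x).bdd_mul (c := 1) (by fun_prop)
      (.of_forall fun p ↦ by simp [Complex.norm_exp])
  rw [fourierInv_comp_two_pi_mul, spaceMultiplier]
  congr 1
  calc ∫ ξ : ℝ, m ξ * Complex.exp (Complex.I * x * ξ) * spaceFourier U ξ t
      = ∫ ξ : ℝ, (1 / (2 * Real.pi) : ℂ) * ∫ τ : ℝ, Complex.exp (Complex.I * τ * t) *
          (m ξ * Complex.exp (Complex.I * x * ξ) * spaceTimeFourier U (ξ, τ)) := by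
        congr! 2 with ξ
        rw [spaceFourier_eq_integral, mul_left_comm, ← integral_const_mul]
        congr! 3
        ring
    _ = (1 / (2 * Real.pi) : ℂ) * ∫ τ : ℝ, ∫ ξ : ℝ, Complex.exp (Complex.I * τ * t) *
          (m ξ * Complex.exp (Complex.I * x * ξ) * spaceTimeFourier U (ξ, τ)) := by
        rw [integral_const_mul, integral_integral_swap kernel_integrable]
    _ = ∫ τ : ℝ, Complex.exp (Complex.I * τ * t) * spaceMultiplierTimeFourier m U x τ := by
        rw [← integral_const_mul]
        congr! 2
        rw [integral_const_mul, mul_left_comm, spaceMultiplierTimeFourier]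

end Multiplier

section LocalSmoothing

/-- The multipliers `m(D)` to which the Kato smoothing effect of the dispersive group with symbol
`e^{itφ(ξ)}` applies: the gain `|m|²` is bounded by the group velocity `|φ'|`, and `φ` is injective,
so that `u = φ(ξ)` is an admissible substitution. -/
structure IsKatoMultiplier (φ : ℝ → ℝ) (m : ℝ → ℂ) : Prop where
  differentiable : Differentiable ℝ φ
  injective : Function.Injective φ
  measurable : Measurable m
  growth : HasPolynomialGrowth m
  norm_sq_le : ∀ ξ, ‖m ξ‖ ^ 2 ≤ |deriv φ ξ|

variable {φ : ℝ → ℝ} {m : ℝ → ℂ} {w : ℝ → ℝ≥0∞}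

theorem IsKatoMultiplier.lintegral_enorm_sq_mul_comp_sub_le (h : IsKatoMultiplier φ m)
    (ρ : ℝ → ℝ≥0∞) (τ : ℝ) : ∫⁻ ξ, ‖m ξ‖ₑ ^ 2 * ρ (τ - φ ξ) ≤ ∫⁻ u, ρ u := by
  calc ∫⁻ ξ, ‖m ξ‖ₑ ^ 2 * ρ (τ - φ ξ)
      ≤ ∫⁻ ξ, ENNReal.ofReal |deriv φ ξ| * ρ (τ - φ ξ) := by
        gcongr with ξ
        rw [← ofReal_norm, ← ENNReal.ofReal_pow (norm_nonneg _)]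
        exact ENNReal.ofReal_le_ofReal (h.norm_sq_le ξ)
    _ ≤ ∫⁻ u, ρ (τ - u) :=
        lintegral_abs_deriv_mul_comp_le h.differentiable h.injective fun u ↦ ρ (τ - u)
    _ = ∫⁻ u, ρ u := lintegral_sub_left_eq_self ρ τ

theorem IsKatoMultiplier.enorm_sq_spaceMultiplierTimeFourier_le (h : IsKatoMultiplier φ m)
    (hw : Measurable w) (hw_zero : ∀ u, w u ≠ 0) (hw_top : ∀ u, w u ≠ ∞)
    (U : 𝓢(ℝ × ℝ, ℂ)) (x τ : ℝ) :
    ‖spaceMultiplierTimeFourier m U x τ‖ₑ ^ 2 ≤ ENNReal.ofReal (1 / (2 * Real.pi)) ^ 2 *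
      ((∫⁻ u, (w u)⁻¹) * ∫⁻ ξ, w (τ - φ ξ) * ‖spaceTimeFourier U (ξ, τ)‖ₑ ^ 2) := by
  have m_meas := h.measurable
  have w_meas : Measurable fun ξ ↦ w (τ - φ ξ) :=
    hw.comp (h.differentiable.continuous.measurable.const_sub τ)
  have fourier_meas : Measurable fun ξ ↦ spaceTimeFourier U (ξ, τ) :=
    ((continuous_spaceTimeFourier U).comp (by fun_prop)).measurable
  have norm_const : ‖(1 / (2 * Real.pi) : ℂ)‖ₑ = ENNReal.ofReal (1 / (2 * Real.pi)) := by
    rw [← ofReal_norm]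
    simp [abs_of_pos Real.pi_pos]
  have norm_integrand (ξ : ℝ) :
      ‖m ξ * Complex.exp (Complex.I * x * ξ) * spaceTimeFourier U (ξ, τ)‖ₑ =
        ‖m ξ‖ₑ * ‖spaceTimeFourier U (ξ, τ)‖ₑ := by
    have norm_exp : ‖Complex.exp (Complex.I * x * ξ)‖ₑ = 1 := by
      rw [← ofReal_norm]
      simp [Complex.norm_exp]
    rw [enorm_mul, enorm_mul, norm_exp, mul_one]
  rw [spaceMultiplierTimeFourier, enorm_mul, mul_pow, norm_const]
  gcongr
  calc ‖∫ ξ : ℝ, m ξ * Complex.exp (Complex.I * x * ξ) * spaceTimeFourier U (ξ, τ)‖ₑ ^ 2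
      ≤ (∫⁻ ξ, ‖m ξ‖ₑ * ‖spaceTimeFourier U (ξ, τ)‖ₑ) ^ 2 := by
        simp only [← norm_integrand]
        gcongr
        exact enorm_integral_le_lintegral_enorm _
    _ ≤ (∫⁻ ξ, ‖m ξ‖ₑ ^ 2 * (w (τ - φ ξ))⁻¹) *
          ∫⁻ ξ, w (τ - φ ξ) * ‖spaceTimeFourier U (ξ, τ)‖ₑ ^ 2 :=
        sq_lintegral_mul_le_weighted m_meas.enorm.aemeasurable fourier_meas.enorm.aemeasurable
          w_meas.aemeasurable (fun _ ↦ hw_zero _) (fun _ ↦ hw_top _)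
    _ ≤ (∫⁻ u, (w u)⁻¹) * ∫⁻ ξ, w (τ - φ ξ) * ‖spaceTimeFourier U (ξ, τ)‖ₑ ^ 2 := by
        gcongr ?_ * _
        exact h.lintegral_enorm_sq_mul_comp_sub_le (fun u ↦ (w u)⁻¹) τ

theorem IsKatoMultiplier.lintegral_enorm_sq_spaceMultiplierTimeFourier_le
    (h : IsKatoMultiplier φ m) (hw : Measurable w) (hw_zero : ∀ u, w u ≠ 0)
    (hw_top : ∀ u, w u ≠ ∞) (U : 𝓢(ℝ × ℝ, ℂ)) (x : ℝ) :
    ∫⁻ s, ‖spaceMultiplierTimeFourier m U x (2 * Real.pi * s)‖ₑ ^ 2 ≤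
      ENNReal.ofReal (1 / (2 * Real.pi)) ^ 3 *
        ((∫⁻ u, (w u)⁻¹) * ∫⁻ p, w (p.2 - φ p.1) * ‖spaceTimeFourier U p‖ₑ ^ 2) := by
  have φ_meas := h.differentiable.continuous.measurable
  have fourier_meas := (continuous_spaceTimeFourier U).measurable
  have energy_meas :
      Measurable fun p : ℝ × ℝ ↦ w (p.2 - φ p.1) * ‖spaceTimeFourier U p‖ₑ ^ 2 := by
    fun_prop
  have slice_meas := energy_meas.lintegral_prod_left' (μ := volume)
  set c := ENNReal.ofReal (1 / (2 * Real.pi)) with hc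
  calc ∫⁻ s, ‖spaceMultiplierTimeFourier m U x (2 * Real.pi * s)‖ₑ ^ 2
      ≤ ∫⁻ s, (fun τ ↦ c ^ 2 * ((∫⁻ u, (w u)⁻¹) *
          ∫⁻ ξ, w (τ - φ ξ) * ‖spaceTimeFourier U (ξ, τ)‖ₑ ^ 2)) (2 * Real.pi * s) :=
        lintegral_mono fun s ↦
          h.enorm_sq_spaceMultiplierTimeFourier_le hw hw_zero hw_top U x (2 * Real.pi * s)
    _ = c * ∫⁻ τ, c ^ 2 * ((∫⁻ u, (w u)⁻¹) *
          ∫⁻ ξ, w (τ - φ ξ) * ‖spaceTimeFourier U (ξ, τ)‖ₑ ^ 2) := by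
        rw [lintegral_comp_const_mul (by positivity) ((slice_meas.const_mul _).const_mul _),
          abs_of_pos (by positivity), hc, one_div]
    _ = c * (c ^ 2 * ((∫⁻ u, (w u)⁻¹) *
          ∫⁻ p, w (p.2 - φ p.1) * ‖spaceTimeFourier U p‖ₑ ^ 2)) := by
        rw [lintegral_const_mul _ (slice_meas.const_mul _), lintegral_const_mul _ slice_meas,
          Measure.volume_eq_prod, lintegral_prod_symm _ energy_meas.aemeasurable]
    _ = c ^ 3 * ((∫⁻ u, (w u)⁻¹) * ∫⁻ p, w (p.2 - φ p.1) * ‖spaceTimeFourier U p‖ₑ ^ 2) := by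
        ring

theorem IsKatoMultiplier.lintegral_enorm_sq_spaceMultiplier_le (h : IsKatoMultiplier φ m)
    (hw : Measurable w) (hw_zero : ∀ u, w u ≠ 0) (hw_top : ∀ u, w u ≠ ∞)
    (U : 𝓢(ℝ × ℝ, ℂ)) (x : ℝ) :
    ∫⁻ t, ‖spaceMultiplier m U x t‖ₑ ^ 2 ≤ ENNReal.ofReal (1 / (2 * Real.pi)) ^ 3 *
      ((∫⁻ u, (w u)⁻¹) * ∫⁻ p, w (p.2 - φ p.1) * ‖spaceTimeFourier U p‖ₑ ^ 2) := by
  have time_fourier_le := h.lintegral_enorm_sq_spaceMultiplierTimeFourier_le hw hw_zero hw_top U x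
  rcases eq_top_or_lt_top (ENNReal.ofReal (1 / (2 * Real.pi)) ^ 3 *
    ((∫⁻ u, (w u)⁻¹) * ∫⁻ p, w (p.2 - φ p.1) * ‖spaceTimeFourier U p‖ₑ ^ 2)) with h_top | h_fin
  · exact h_top ▸ le_top
  have time_fourier_integrable :
      Integrable fun s ↦ spaceMultiplierTimeFourier m U x (2 * Real.pi * s) :=
    (integrable_spaceMultiplierTimeFourier h.measurable h.growth U x).comp_mul_left' (by positivity)
  have time_fourier_memLp : MemLp (fun s ↦ spaceMultiplierTimeFourier m U x (2 * Real.pi * s)) 2 :=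
    ⟨time_fourier_integrable.aestronglyMeasurable,
      (eLpNorm_lt_top_iff_lintegral_rpow_enorm_lt_top (by norm_num) (by norm_num)).2
        (by simpa using time_fourier_le.trans_lt h_fin)⟩
  simp only [spaceMultiplier_eq_fourierInv h.measurable h.growth]
  exact (lintegral_enorm_sq_fourierInv time_fourier_integrable time_fourier_memLp).trans_le
    time_fourier_le

end LocalSmoothing

section BourgainNorm

variable {φ : ℝ → ℝ}

/-- The Bourgain norm `‖U‖_{X^{0,b}}` associated to the dispersion relation `τ = φ(ξ)`. -/
noncomputable def bourgainNorm (φ : ℝ → ℝ) (b : ℝ) (U : 𝓢(ℝ × ℝ, ℂ)) : ℝ :=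
  (∫ p : ℝ × ℝ, (1 + |p.2 - φ p.1|) ^ (2 * b) * ‖spaceTimeFourier U p‖ ^ 2) ^ ((1 : ℝ) / 2)

theorem integrable_one_add_abs_sub_rpow_mul_norm_sq (hφ : Measurable φ)
    (hφ_growth : HasPolynomialGrowth φ) (b : ℝ) (U : 𝓢(ℝ × ℝ, ℂ)) :
    Integrable fun p : ℝ × ℝ ↦
      (1 + |p.2 - φ p.1|) ^ (2 * b) * ‖spaceTimeFourier U p‖ ^ 2 := by
  obtain ⟨W, hW⟩ := exists_schwartzMap_eq_spaceTimeFourier U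
  have φ_fst_growth : HasPolynomialGrowth fun p : ℝ × ℝ ↦ -φ p.1 :=
    (hφ_growth.comp_of_norm_le norm_fst_le).imp fun _ hk ↦ hk.neg_left
  have snd_growth : HasPolynomialGrowth fun p : ℝ × ℝ ↦ p.2 := by
    simpa only [pow_one] using! (hasPolynomialGrowth_pow (𝕜 := ℝ) 1).comp_of_norm_le norm_snd_le
  have sub_growth : HasPolynomialGrowth fun p : ℝ × ℝ ↦ p.2 - φ p.1 := by
    simpa only [sub_eq_add_neg] using! snd_growth.add φ_fst_growth
  have weight_meas : Measurable fun p : ℝ × ℝ ↦ (1 + |p.2 - φ p.1|) ^ (2 * b) := by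
    fun_prop
  have weight_mul_integrable :=
    (sub_growth.one_add_norm_rpow (2 * b)).integrable_smul
      (μ := volume) weight_meas.aestronglyMeasurable W
  refine (weight_mul_integrable.norm.mul_bdd
    (c := SchwartzMap.seminorm ℝ 0 0 W) W.continuous.norm.aestronglyMeasurable
    (.of_forall fun p ↦ by simpa using SchwartzMap.norm_le_seminorm ℝ W p)).congr
    (.of_forall fun p ↦ ?_)
  have weight_nonneg : 0 ≤ (1 + |p.2 - φ p.1|) ^ (2 * b) := by positivity
  simp only [← hW, norm_smul, Real.norm_eq_abs, abs_of_nonneg weight_nonneg]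
  ring

theorem ofReal_bourgainNorm (hφ : Measurable φ) (hφ_growth : HasPolynomialGrowth φ) (b : ℝ)
    (U : 𝓢(ℝ × ℝ, ℂ)) :
    ENNReal.ofReal (bourgainNorm φ b U) =
      (∫⁻ p : ℝ × ℝ, ENNReal.ofReal ((1 + |p.2 - φ p.1|) ^ (2 * b)) *
        ‖spaceTimeFourier U p‖ₑ ^ 2) ^ ((1 : ℝ) / 2) := by
  have integrand_nonneg (p : ℝ × ℝ) :
      0 ≤ (1 + |p.2 - φ p.1|) ^ (2 * b) * ‖spaceTimeFourier U p‖ ^ 2 := by positivity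
  rw [bourgainNorm, ← ENNReal.ofReal_rpow_of_nonneg (integral_nonneg integrand_nonneg)
    (by norm_num), ofReal_integral_eq_lintegral_ofReal
      (integrable_one_add_abs_sub_rpow_mul_norm_sq hφ hφ_growth b U) (.of_forall integrand_nonneg)]
  congr! 3 with p
  rw [ENNReal.ofReal_mul (by positivity), ENNReal.ofReal_pow (norm_nonneg _), ofReal_norm]

end BourgainNorm

theorem LinftyX_L2T_est_general {φ : ℝ → ℝ} {m : ℝ → ℂ} (h : IsKatoMultiplier φ m)
    (hφ_growth : HasPolynomialGrowth φ) {b : ℝ} (hb : 1 / 2 < b) :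
    ∃ C > 0, ∀ (U : 𝓢(ℝ × ℝ, ℂ)) (x : ℝ),
      (∫⁻ t, ‖spaceMultiplier m U x t‖ₑ ^ 2) ^ ((1 : ℝ) / 2) ≤
        ENNReal.ofReal (C * bourgainNorm φ b U) := by
  obtain ⟨K, K_pos, lintegral_inv_weight⟩ :=
    exists_pos_lintegral_inv_one_add_abs_rpow (by linarith : 1 < 2 * b)
  refine ⟨((1 / (2 * Real.pi)) ^ 3 * K) ^ ((1 : ℝ) / 2), by positivity, fun U x ↦ ?_⟩
  have sq_bound := h.lintegral_enorm_sq_spaceMultiplier_le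
    (w := fun u ↦ ENNReal.ofReal ((1 + |u|) ^ (2 * b))) (by fun_prop)
    (fun u ↦ (ENNReal.ofReal_pos.2 (by positivity)).ne') (fun u ↦ ENNReal.ofReal_ne_top) U x
  rw [ENNReal.ofReal_mul (by positivity),
    ofReal_bourgainNorm h.differentiable.continuous.measurable hφ_growth,
    ← ENNReal.ofReal_rpow_of_nonneg (by positivity) (by norm_num),
    ← ENNReal.mul_rpow_of_nonneg _ _ (by norm_num), ENNReal.ofReal_mul (by positivity),
    ENNReal.ofReal_pow (by positivity), ← lintegral_inv_weight, mul_assoc]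
  gcongr

theorem isKatoMultiplier_cube_abs :
    IsKatoMultiplier (fun ξ ↦ ξ ^ 3) fun ξ ↦ ((|ξ| : ℝ) : ℂ) where
  differentiable := by fun_prop
  injective := (Odd.strictMono_pow (by decide)).injective
  measurable := by fun_prop
  growth := ⟨1, .of_bound' (.of_forall fun ξ ↦ by
    rw [Complex.norm_real, norm_abs_eq_norm, pow_one,
      Real.norm_of_nonneg (by positivity : 0 ≤ 1 + ‖ξ‖)]
    linarith)⟩
  norm_sq_le ξ := by
    have deriv_cube : deriv (fun ξ : ℝ ↦ ξ ^ 3) ξ = 3 * ξ ^ 2 := by simp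
    rw [Complex.norm_real, norm_abs_eq_norm, Real.norm_eq_abs, sq_abs, deriv_cube,
      abs_of_nonneg (by positivity)]
    nlinarith [sq_nonneg ξ]

/-- Estimate (2.3) of Lemma 2.4 of the paper: for `b > 1/2` and `0 < T ≤ 1`,
`‖D_x U‖_{L^∞ₓ L²_{|t|≤T}} ≤ C ‖U‖_{X^{0,b}}`, where `D_x` is the Fourier multiplier
in the space variable with symbol `|ξ|`. -/
theorem LinftyX_L2T_est (b : ℝ) (hb : 1 / 2 < b) :
    ∃ C > 0, ∀ T : ℝ, 0 < T → T ≤ 1 → ∀ U : SchwartzMap (ℝ × ℝ) ℂ, ∀ x : ℝ,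
      (∫⁻ t in Set.Icc (-T) T,
          (‖(1 / (2 * Real.pi) : ℂ) *
              ∫ ξ : ℝ, ((|ξ| : ℝ) : ℂ) * Complex.exp (Complex.I * x * ξ) *
                ∫ y : ℝ, Complex.exp (-Complex.I * y * ξ) * U (y, t)‖₊ : ℝ≥0∞) ^ 2) ^
        ((1 : ℝ) / 2) ≤
      ENNReal.ofReal (C *
        (∫ p : ℝ × ℝ, (1 + |p.2 - p.1 ^ 3|) ^ (2 * b) *
          ‖∫ q : ℝ × ℝ, Complex.exp (-Complex.I * (q.1 * p.1 + q.2 * p.2)) * U q‖ ^ 2) ^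
        ((1 : ℝ) / 2)) := by
  obtain ⟨C, hC, global_bound⟩ :=
    LinftyX_L2T_est_general isKatoMultiplier_cube_abs (hasPolynomialGrowth_pow 3) hb
  exact ⟨C, hC, fun T _ _ U x ↦ (ENNReal.rpow_le_rpow (setLIntegral_le_lintegral _ _)
    (by norm_num)).trans (global_bound U x)⟩
end

section
/- Let σ > 0 and b > 1/2. There exists a constant C > 0, independent of σ, such that for every Schwartz function u : ℝ² → ℂ the function G : ℝ² → ℂ defined by G(ξ,τ) = ξ · ∫_{ℝ⁴} [1 − cosh(σ|ξ|)·sech(σ|ξ₁|)·sech(σ|ξ₂|)·sech(σ|ξ−ξ₁−ξ₂|)] · û(ξ₁,τ₁)·û(ξ₂,τ₂)·û(ξ−ξ₁−ξ₂, τ−τ₁−τ₂) dξ₁ dξ₂ dτ₁ dτ₂ satisfies ‖G‖_{L²(ℝ²)} ≤ C σ² · ( ∫_{ℝ²} (1+|ξ|)^{4} (1+|τ−ξ³|)^{2b} |û(ξ,τ)|² dξ dτ )^{3/2}. -/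
open MeasureTheory ENNReal

/-!
When `ξ = x + y + z`, the addition formulas turn the symbol `1 - cosh ξ sech x sech y sech z` into
`-(tanh x tanh y + tanh x tanh z + tanh y tanh z)`, which is quadratically small because
`|tanh x| ≤ |x|`. This is the gain of `σ²`. Distributing the remaining factor
`|ξ| ≤ |x| + |y| + |z|` over the inputs, one of them carries a weight `⟨·⟩²` and the other two
`⟨·⟩`. Hence `|G| ≤ 3σ² g ⋆ g ⋆ h` with `g = ⟨ξ⟩|û|` and `h = ⟨ξ⟩²|û|`, and Young's inequality gives
`‖G‖₂ ≤ 3σ² ‖g‖₁² ‖h‖₂`. Here `‖h‖₂ ≤ ‖u‖_{X^{2,b}}`, and `‖g‖₁ ≲ ‖u‖_{X^{2,b}}` by Cauchy-Schwarz,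
since `⟨ξ⟩⁻¹ ⟨τ - φ(ξ)⟩⁻ᵇ` is square integrable for `b > 1/2`, whatever the dispersion relation `φ`.
-/

section Tanh

lemma abs_tanh_le (x : ℝ) : |Real.tanh x| ≤ |x| := by
  have hderiv : ∀ y ∈ Metric.closedBall (0 : ℝ) |x|, ‖deriv Real.sinh y‖ ≤ Real.cosh x := by
    intro y hy
    rw [Real.deriv_sinh, Real.norm_eq_abs, abs_of_pos (Real.cosh_pos y)]
    exact Real.cosh_le_cosh.2 (by simpa using hy)
  have hsinh : |Real.sinh x| ≤ Real.cosh x * |x| := by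
    simpa using (convex_closedBall (0 : ℝ) |x|).norm_image_sub_le_of_norm_deriv_le
      (fun y _ ↦ Real.differentiable_sinh y) hderiv (Metric.mem_closedBall_self (abs_nonneg x))
      (show x ∈ Metric.closedBall (0 : ℝ) |x| by simp)
  rwa [Real.tanh_eq_sinh_div_cosh, abs_div, abs_of_pos (Real.cosh_pos x),
    div_le_iff₀' (Real.cosh_pos x)]

lemma one_sub_cosh_add_add_div (x y z : ℝ) :
    1 - Real.cosh (x + y + z) * (Real.cosh x)⁻¹ * (Real.cosh y)⁻¹ * (Real.cosh z)⁻¹ =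
      -(Real.tanh x * Real.tanh y + Real.tanh x * Real.tanh z + Real.tanh y * Real.tanh z) := by
  have hx := (Real.cosh_pos x).ne'
  have hy := (Real.cosh_pos y).ne'
  have hz := (Real.cosh_pos z).ne'
  simp only [Real.tanh_eq_sinh_div_cosh, Real.cosh_add, Real.sinh_add]
  field_simp
  ring

lemma abs_one_sub_cosh_add_add_div_le (x y z : ℝ) :
    |1 - Real.cosh (x + y + z) * (Real.cosh x)⁻¹ * (Real.cosh y)⁻¹ * (Real.cosh z)⁻¹| ≤
      |x| * |y| + |x| * |z| + |y| * |z| := by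
  rw [one_sub_cosh_add_add_div, abs_neg]
  calc _ ≤ |Real.tanh x| * |Real.tanh y| + |Real.tanh x| * |Real.tanh z| +
        |Real.tanh y| * |Real.tanh z| := by
          simpa only [abs_mul] using abs_add_three (Real.tanh x * Real.tanh y)
            (Real.tanh x * Real.tanh z) (Real.tanh y * Real.tanh z)
    _ ≤ |x| * |y| + |x| * |z| + |y| * |z| := by
          gcongr ?_ * ?_ + ?_ * ?_ + ?_ * ?_ <;> exact abs_tanh_le _

end Tanh

section Convolution

lemma lintegral_mul_rpow_le {α : Type*} [MeasurableSpace α] {μ : Measure α} {p : ℝ} (hp : 1 ≤ p)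
    {k h : α → ℝ≥0∞} (hk : AEMeasurable k μ) (hh : AEMeasurable h μ) :
    (∫⁻ x, k x * h x ∂μ) ^ p ≤ (∫⁻ x, k x ∂μ) ^ (p - 1) * ∫⁻ x, k x * h x ^ p ∂μ := by
  have hp₀ : p ≠ 0 := by positivity
  have hh' : AEMeasurable h (μ.withDensity k) := hh.mono_ac (withDensity_absolutelyContinuous μ k)
  have hJensen := ENNReal.rpow_le_rpow (eLpNorm'_le_eLpNorm'_mul_rpow_measure_univ one_pos hp
    hh'.aestronglyMeasurable) (zero_le_one.trans hp)
  simp only [eLpNorm', enorm_eq_self, ENNReal.rpow_one, div_one] at hJensen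
  rw [ENNReal.mul_rpow_of_nonneg _ _ (by positivity), ← ENNReal.rpow_mul, ← ENNReal.rpow_mul,
    one_div_mul_cancel hp₀, ENNReal.rpow_one, sub_mul, one_div_mul_cancel hp₀, one_mul,
    withDensity_apply _ .univ, setLIntegral_univ,
    lintegral_withDensity_eq_lintegral_mul₀ hk hh,
    lintegral_withDensity_eq_lintegral_mul₀ hk (hh.pow_const p)] at hJensen
  simpa only [Pi.mul_apply, mul_comm] using hJensen

variable {G : Type*} [AddGroup G] [MeasurableSpace G] [MeasurableAdd₂ G] [MeasurableNeg G]
  {μ : Measure G} [SFinite μ] [μ.IsAddLeftInvariant]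

lemma lintegral_lconvolution {k h : G → ℝ≥0∞} (hk : AEMeasurable k μ) (hh : AEMeasurable h μ) :
    ∫⁻ x, (k ⋆ₗ[μ] h) x ∂μ = (∫⁻ x, k x ∂μ) * ∫⁻ x, h x ∂μ := by
  simp only [lconvolution_def]
  rw [lintegral_lintegral_swap (by fun_prop), ← lintegral_mul_const'' _ hk]
  refine lintegral_congr fun y ↦ ?_
  have hshift : AEMeasurable (fun x ↦ h (-y + x)) μ :=
    hh.comp_quasiMeasurePreserving (measurePreserving_add_left μ (-y)).quasiMeasurePreserving
  rw [lintegral_const_mul'' _ hshift, lintegral_add_left_eq_self]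

lemma lintegral_lconvolution_rpow_le {p : ℝ} (hp : 1 ≤ p) {k h : G → ℝ≥0∞}
    (hk : AEMeasurable k μ) (hh : AEMeasurable h μ) :
    ∫⁻ x, (k ⋆ₗ[μ] h) x ^ p ∂μ ≤ (∫⁻ x, k x ∂μ) ^ p * ∫⁻ x, h x ^ p ∂μ := by
  calc ∫⁻ x, (k ⋆ₗ[μ] h) x ^ p ∂μ
      ≤ ∫⁻ x, (∫⁻ y, k y ∂μ) ^ (p - 1) * (k ⋆ₗ[μ] fun y ↦ h y ^ p) x ∂μ :=
        lintegral_mono fun x ↦ lintegral_mul_rpow_le hp hk (by fun_prop)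
    _ = (∫⁻ y, k y ∂μ) ^ (p - 1) * ((∫⁻ y, k y ∂μ) * ∫⁻ x, h x ^ p ∂μ) := by
        rw [lintegral_const_mul'' _ (by fun_prop), lintegral_lconvolution hk (by fun_prop)]
    _ = (∫⁻ y, k y ∂μ) ^ p * ∫⁻ x, h x ^ p ∂μ := by
        rw [← mul_assoc]
        nth_rw 2 [← ENNReal.rpow_one (∫⁻ y, k y ∂μ)]
        rw [← ENNReal.rpow_add_of_nonneg _ _ (sub_nonneg.2 hp) zero_le_one, sub_add_cancel]

theorem eLpNorm_lconvolution_le {p : ℝ≥0∞} (hp : 1 ≤ p) {k h : G → ℝ≥0∞}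
    (hk : AEMeasurable k μ) (hh : AEMeasurable h μ) :
    eLpNorm (k ⋆ₗ[μ] h) p μ ≤ eLpNorm k 1 μ * eLpNorm h p μ := by
  rw [eLpNorm_one_eq_lintegral_enorm]
  simp only [enorm_eq_self]
  obtain rfl | hp_top := eq_or_ne p ∞
  · refine eLpNormEssSup_le_of_ae_enorm_bound (.of_forall fun x ↦ ?_)
    have hreflect : Measure.QuasiMeasurePreserving (fun y ↦ -y + x) μ μ :=
      (quasiMeasurePreserving_add_right μ x).comp (quasiMeasurePreserving_neg μ)
    have hbound : ∀ᵐ y ∂μ, h (-y + x) ≤ eLpNorm h ∞ μ := by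
      simpa using hreflect.ae (enorm_ae_le_eLpNormEssSup h μ)
    rw [enorm_eq_self, lconvolution_def, ← lintegral_mul_const'' _ hk]
    exact lintegral_mono_ae (hbound.mono fun y hy ↦ by gcongr)
  · have hp₁ : 1 ≤ p.toReal := by simpa using ENNReal.toReal_mono hp_top hp
    have hp₀ : p ≠ 0 := (zero_lt_one.trans_le hp).ne'
    rw [eLpNorm_eq_lintegral_rpow_enorm_toReal hp₀ hp_top,
      eLpNorm_eq_lintegral_rpow_enorm_toReal hp₀ hp_top, one_div,
      ENNReal.rpow_inv_le_iff (by positivity), ENNReal.mul_rpow_of_nonneg _ _ (by positivity),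
      ENNReal.rpow_inv_rpow (by positivity)]
    exact lintegral_lconvolution_rpow_le hp₁ hk hh

variable {H : Type*} [AddCommGroup H] [MeasurableSpace H] [MeasurableAdd₂ H] [MeasurableNeg H]
  {ν : Measure H} [SFinite ν] [ν.IsAddLeftInvariant]

lemma quasiMeasurePreserving_sub_sub (p : H) :
    Measure.QuasiMeasurePreserving (fun z : H × H ↦ p - z.1 - z.2) (ν.prod ν) ν := by
  simp only [sub_sub]
  exact (quasiMeasurePreserving_sub_left ν p).comp (quasiMeasurePreserving_add ν ν)

lemma aemeasurable_mul_mul_sub_sub {f g h : H → ℝ≥0∞} (hf : AEMeasurable f ν)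
    (hg : AEMeasurable g ν) (hh : AEMeasurable h ν) (p : H) :
    AEMeasurable (fun z : H × H ↦ f z.1 * g z.2 * h (p - z.1 - z.2)) (ν.prod ν) :=
  (hf.comp_fst.mul hg.comp_snd).mul
    (hh.comp_quasiMeasurePreserving (quasiMeasurePreserving_sub_sub p))

lemma lintegral_mul_mul_sub_sub {f g h : H → ℝ≥0∞} (hf : AEMeasurable f ν)
    (hg : AEMeasurable g ν) (hh : AEMeasurable h ν) (p : H) :
    ∫⁻ z, f z.1 * g z.2 * h (p - z.1 - z.2) ∂(ν.prod ν) = (f ⋆ₗ[ν] g ⋆ₗ[ν] h) p := by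
  rw [lintegral_prod _ (aemeasurable_mul_mul_sub_sub hf hg hh p)]
  simp only [lconvolution_def]
  refine lintegral_congr fun x ↦ ?_
  rw [← lintegral_const_mul'' _ (by fun_prop)]
  refine lintegral_congr fun y ↦ ?_
  rw [mul_assoc, neg_add_eq_sub, neg_add_eq_sub]

lemma lintegral_mul_mul_sub_sub_symm [ν.IsNegInvariant] {g h : H → ℝ≥0∞}
    (hg : AEMeasurable g ν) (hh : AEMeasurable h ν) (p : H) :
    ∫⁻ z, (h z.1 * g z.2 * g (p - z.1 - z.2) + g z.1 * h z.2 * g (p - z.1 - z.2) +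
      g z.1 * g z.2 * h (p - z.1 - z.2)) ∂(ν.prod ν) = 3 * (g ⋆ₗ[ν] g ⋆ₗ[ν] h) p := by
  have hcomm : g ⋆ₗ[ν] h ⋆ₗ[ν] g = g ⋆ₗ[ν] g ⋆ₗ[ν] h := by rw [lconvolution_comm (f := h)]
  have hrotate : h ⋆ₗ[ν] g ⋆ₗ[ν] g = g ⋆ₗ[ν] g ⋆ₗ[ν] h := by
    rw [lconvolution_comm, lconvolution_assoc₀ hg hg hh]
  rw [lintegral_add_right' _ (aemeasurable_mul_mul_sub_sub hg hg hh p),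
    lintegral_add_right' _ (aemeasurable_mul_mul_sub_sub hg hh hg p),
    lintegral_mul_mul_sub_sub hh hg hg, lintegral_mul_mul_sub_sub hg hh hg,
    lintegral_mul_mul_sub_sub hg hg hh, hcomm, hrotate]
  ring

end Convolution

section Rearrangement

variable {α β γ δ : Type*} [MeasurableSpace α] [MeasurableSpace β] [MeasurableSpace γ]
  [MeasurableSpace δ] {μ : Measure α} {ν : Measure β} {κ : Measure γ} {ρ : Measure δ}
  [SFinite μ] [SFinite ν] [SFinite κ] [SFinite ρ]

lemma lintegral_prod_prod_prod_comm (F : (α × γ) × β × δ → ℝ≥0∞) :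
    ∫⁻ w, F ((w.1, w.2.2.1), (w.2.1, w.2.2.2)) ∂(μ.prod (ν.prod (κ.prod ρ))) =
      ∫⁻ z, F z ∂((μ.prod κ).prod (ν.prod ρ)) := by
  let swapMiddle : β × γ × δ ≃ᵐ γ × β × δ := MeasurableEquiv.prodAssoc.symm.trans
    ((MeasurableEquiv.prodComm.prodCongr (.refl δ)).trans .prodAssoc)
  have hswapMiddle : MeasurePreserving swapMiddle (ν.prod (κ.prod ρ)) (κ.prod (ν.prod ρ)) :=
    ((measurePreserving_prodAssoc ν κ ρ).symm _).trans
      ((Measure.measurePreserving_swap.prod (.id ρ)).trans (measurePreserving_prodAssoc κ ν ρ))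
  let e : α × β × γ × δ ≃ᵐ (α × γ) × β × δ :=
    ((MeasurableEquiv.refl α).prodCongr swapMiddle).trans MeasurableEquiv.prodAssoc.symm
  have he : MeasurePreserving e (μ.prod (ν.prod (κ.prod ρ))) ((μ.prod κ).prod (ν.prod ρ)) :=
    ((MeasurePreserving.id μ).prod hswapMiddle).trans
      ((measurePreserving_prodAssoc μ κ (ν.prod ρ)).symm _)
  exact he.lintegral_comp_emb e.measurableEmbedding F

end Rearrangement

section BourgainWeight

/-- The weight `⟨ξ⟩ ^ s * ⟨τ - φ ξ⟩ ^ b` at `p = (ξ, τ)`, with `⟨x⟩ = 1 + |x|`, that defines the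
Bourgain space `X^{s,b}` of the dispersion relation `τ = φ ξ`. -/
noncomputable def bourgainWeight (φ : ℝ → ℝ) (s b : ℝ) (p : ℝ × ℝ) : ℝ :=
  (1 + |p.1|) ^ s * (1 + |p.2 - φ p.1|) ^ b

/-- The Bourgain norm `‖·‖_{X^{s,b}}` on the Fourier side, as a functional of `f = û` with values in
`[0, ∞]`. -/
noncomputable def bourgainENorm (φ : ℝ → ℝ) (s b : ℝ) (f : ℝ × ℝ → ℂ) : ℝ≥0∞ :=
  eLpNorm (bourgainWeight φ s b • f) 2 volume

variable {φ : ℝ → ℝ} {s b : ℝ}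

lemma bourgainWeight_pos (p : ℝ × ℝ) : 0 < bourgainWeight φ s b p := by
  unfold bourgainWeight
  positivity

lemma bourgainWeight_add (s s' b b' : ℝ) :
    bourgainWeight φ (s + s') (b + b') = bourgainWeight φ s b * bourgainWeight φ s' b' := by
  ext p
  simp only [bourgainWeight, Pi.mul_apply]
  rw [Real.rpow_add (by positivity), Real.rpow_add (by positivity)]
  ring

lemma bourgainWeight_mono {s' b' : ℝ} (hs : s ≤ s') (hb : b ≤ b') (p : ℝ × ℝ) :
    bourgainWeight φ s b p ≤ bourgainWeight φ s' b' p := by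
  unfold bourgainWeight
  gcongr <;> simp

@[fun_prop]
lemma measurable_bourgainWeight (hφ : Measurable φ) : Measurable (bourgainWeight φ s b) := by
  unfold bourgainWeight
  fun_prop

lemma lintegral_bourgainWeight (hφ : Measurable φ) (s b : ℝ) :
    ∫⁻ p, ENNReal.ofReal (bourgainWeight φ s b p) =
      (∫⁻ x : ℝ, ENNReal.ofReal ((1 + |x|) ^ s)) * ∫⁻ x : ℝ, ENNReal.ofReal ((1 + |x|) ^ b) := by
  have hfiber (ξ : ℝ) : ∫⁻ τ, ENNReal.ofReal (bourgainWeight φ s b (ξ, τ)) =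
      ENNReal.ofReal ((1 + |ξ|) ^ s) * ∫⁻ τ : ℝ, ENNReal.ofReal ((1 + |τ|) ^ b) := by
    rw [← lintegral_sub_right_eq_self (fun τ : ℝ ↦ ENNReal.ofReal ((1 + |τ|) ^ b)) (φ ξ),
      ← lintegral_const_mul _ (by fun_prop)]
    refine lintegral_congr fun τ ↦ ?_
    rw [← ENNReal.ofReal_mul (by positivity), bourgainWeight]
  rw [Measure.volume_eq_prod, lintegral_prod _ (by fun_prop)]
  simp only [hfiber]
  exact lintegral_mul_const _ (by fun_prop)

lemma eLpNorm_two_bourgainWeight_lt_top (hφ : Measurable φ) (hs : s < -(1 / 2))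
    (hb : b < -(1 / 2)) : eLpNorm (bourgainWeight φ s b) 2 volume < ∞ := by
  rw [eLpNorm_lt_top_iff_lintegral_rpow_enorm_lt_top two_ne_zero ofNat_ne_top]
  have hsq (p : ℝ × ℝ) : ‖bourgainWeight φ s b p‖ₑ ^ (2 : ℝ≥0∞).toReal =
      ENNReal.ofReal (bourgainWeight φ (s + s) (b + b) p) := by
    rw [Real.enorm_of_nonneg (bourgainWeight_pos p).le, bourgainWeight_add, Pi.mul_apply,
      ENNReal.ofReal_mul (bourgainWeight_pos p).le, toReal_ofNat, ENNReal.rpow_two, sq]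
  have hfinite {r : ℝ} (hr : r < -1) : ∫⁻ x : ℝ, ENNReal.ofReal ((1 + |x|) ^ r) < ∞ := by
    simpa using finite_integral_one_add_norm (E := ℝ) (μ := volume) (r := -r)
      (by simpa using lt_neg_of_lt_neg hr)
  simp only [hsq]
  rw [lintegral_bourgainWeight hφ]
  exact ENNReal.mul_lt_top (hfinite (by linarith)) (hfinite (by linarith))

lemma bourgainENorm_mono {s' b' : ℝ} (hs : s ≤ s') (hb : b ≤ b') (f : ℝ × ℝ → ℂ) :
    bourgainENorm φ s b f ≤ bourgainENorm φ s' b' f := by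
  refine eLpNorm_mono fun p ↦ ?_
  simp only [Pi.smul_apply', norm_smul, Real.norm_of_nonneg (bourgainWeight_pos p).le]
  gcongr
  exact bourgainWeight_mono hs hb p

lemma bourgainENorm_pow_eq_ofReal_integral_rpow {f : ℝ × ℝ → ℂ}
    (hf : MemLp (bourgainWeight φ s b • f) 2) (n : ℕ) :
    bourgainENorm φ s b f ^ n = ENNReal.ofReal
      ((∫ p, bourgainWeight φ (2 * s) (2 * b) p * ‖f p‖ ^ 2) ^ (n / 2 : ℝ)) := by
  have hsq (p : ℝ × ℝ) : ‖(bourgainWeight φ s b • f) p‖ ^ (2 : ℝ) =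
      bourgainWeight φ (2 * s) (2 * b) p * ‖f p‖ ^ 2 := by
    rw [two_mul, two_mul, bourgainWeight_add, Pi.smul_apply', norm_smul,
      Real.norm_of_nonneg (bourgainWeight_pos p).le, Real.rpow_two, Pi.mul_apply]
    ring
  have hnonneg : 0 ≤ ∫ p, bourgainWeight φ (2 * s) (2 * b) p * ‖f p‖ ^ 2 :=
    integral_nonneg fun p ↦ mul_nonneg (bourgainWeight_pos p).le (sq_nonneg _)
  rw [bourgainENorm, hf.eLpNorm_eq_integral_rpow_norm two_ne_zero ofNat_ne_top, toReal_ofNat]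
  simp only [hsq]
  rw [← ENNReal.ofReal_pow (by positivity), ← Real.rpow_mul_natCast hnonneg, inv_mul_eq_div]

lemma eLpNorm_one_bourgainWeight_smul_le (hφ : Measurable φ) (r c s b : ℝ) {f : ℝ × ℝ → ℂ}
    (hf : AEStronglyMeasurable f volume) :
    eLpNorm (bourgainWeight φ r c • f) 1 volume ≤
      eLpNorm (bourgainWeight φ (r - s) (c - b)) 2 volume * bourgainENorm φ s b f := by
  have hsplit : bourgainWeight φ r c • f =
      bourgainWeight φ (r - s) (c - b) • (bourgainWeight φ s b • f) := by
    rw [smul_smul, ← bourgainWeight_add, sub_add_cancel, sub_add_cancel]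
  rw [hsplit]
  exact eLpNorm_smul_le_mul_eLpNorm (by fun_prop) (by fun_prop)

end BourgainWeight

section Commutator

/-- The symbol `1 - cosh (σ|ξ|) sech (σ|x|) sech (σ|y|) sech (σ|ξ - x - y|)` of the trilinear form
`U³ - cosh (σ|D|) (sech (σ|D|) U)³`, where `x`, `y` and `ξ - x - y` are the input frequencies. -/
noncomputable def commutatorSymbol (σ ξ x y : ℝ) : ℝ :=
  1 - Real.cosh (σ * |ξ|) * (Real.cosh (σ * |x|))⁻¹ * (Real.cosh (σ * |y|))⁻¹ *
    (Real.cosh (σ * |ξ - x - y|))⁻¹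

/-- The space-time Fourier transform, up to a constant, of the commutator term
`∂ₓ (U³ - cosh (σ|D|) (sech (σ|D|) U)³)`, in terms of `f = Û`. The integration variable is
`w = (ξ₁, ξ₂, τ₁, τ₂)`. -/
noncomputable def commutatorFourier (σ : ℝ) (f : ℝ × ℝ → ℂ) (p : ℝ × ℝ) : ℂ :=
  (p.1 : ℂ) * ∫ w : ℝ × ℝ × ℝ × ℝ, (commutatorSymbol σ p.1 w.1 w.2.1 : ℂ) *
    f (w.1, w.2.2.1) * f (w.2.1, w.2.2.2) * f (p.1 - w.1 - w.2.1, p.2 - w.2.2.1 - w.2.2.2)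

/-- The size of `(1 + |D|) ^ n U` on the Fourier side, in terms of `f = Û`. -/
noncomputable def weightedENorm (n : ℕ) (f : ℝ × ℝ → ℂ) (p : ℝ × ℝ) : ℝ≥0∞ :=
  ‖(1 + |p.1|) ^ n • f p‖ₑ

lemma abs_commutatorSymbol_le (σ ξ x y : ℝ) :
    |commutatorSymbol σ ξ x y| ≤
      σ ^ 2 * (|x| * |y| + |x| * |ξ - x - y| + |y| * |ξ - x - y|) := by
  have hcosh (z : ℝ) : Real.cosh (σ * |z|) = Real.cosh (σ * z) := by
    rw [← Real.cosh_abs, abs_mul, abs_abs, ← abs_mul, Real.cosh_abs]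
  have hsum : σ * ξ = σ * x + σ * y + σ * (ξ - x - y) := by ring
  simp only [commutatorSymbol, hcosh]
  rw [hsum]
  refine (abs_one_sub_cosh_add_add_div_le _ _ _).trans_eq ?_
  rw [← sq_abs σ]
  simp only [abs_mul]
  ring

lemma abs_mul_abs_commutatorSymbol_le (σ ξ x y : ℝ) :
    |ξ| * |commutatorSymbol σ ξ x y| ≤
      σ ^ 2 * ((1 + |x|) ^ 2 * (1 + |y|) * (1 + |ξ - x - y|) +
        (1 + |x|) * (1 + |y|) ^ 2 * (1 + |ξ - x - y|) +
        (1 + |x|) * (1 + |y|) * (1 + |ξ - x - y|) ^ 2) := by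
  have htriangle : |ξ| ≤ |x| + |y| + |ξ - x - y| := by
    simpa using abs_add_three x y (ξ - x - y)
  have hpoly {r s t : ℝ} (hr : 0 ≤ r) (hs : 0 ≤ s) (ht : 0 ≤ t) :
      (r + s + t) * (r * s + r * t + s * t) ≤ (1 + r) ^ 2 * (1 + s) * (1 + t) +
        (1 + r) * (1 + s) ^ 2 * (1 + t) + (1 + r) * (1 + s) * (1 + t) ^ 2 := by
    rw [← sub_nonneg]
    ring_nf
    positivity
  calc |ξ| * |commutatorSymbol σ ξ x y|
      ≤ (|x| + |y| + |ξ - x - y|) *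
          (σ ^ 2 * (|x| * |y| + |x| * |ξ - x - y| + |y| * |ξ - x - y|)) := by
        gcongr
        exact abs_commutatorSymbol_le σ ξ x y
    _ = σ ^ 2 * ((|x| + |y| + |ξ - x - y|) *
          (|x| * |y| + |x| * |ξ - x - y| + |y| * |ξ - x - y|)) := by ring
    _ ≤ _ := by
        gcongr
        exact hpoly (abs_nonneg _) (abs_nonneg _) (abs_nonneg _)

lemma enorm_mul_commutatorSymbol_mul_le (σ : ℝ) (f : ℝ × ℝ → ℂ) (p q r : ℝ × ℝ) :
    ‖(p.1 : ℂ)‖ₑ * ‖(commutatorSymbol σ p.1 q.1 r.1 : ℂ) * f q * f r * f (p - q - r)‖ₑ ≤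
      ENNReal.ofReal (σ ^ 2) *
        (weightedENorm 2 f q * weightedENorm 1 f r * weightedENorm 1 f (p - q - r) +
          weightedENorm 1 f q * weightedENorm 2 f r * weightedENorm 1 f (p - q - r) +
          weightedENorm 1 f q * weightedENorm 1 f r * weightedENorm 2 f (p - q - r)) := by
  simp only [weightedENorm, enorm, ENNReal.ofReal]
  norm_cast
  rw [← NNReal.coe_le_coe]
  push_cast
  rw [Real.coe_toNNReal _ (sq_nonneg σ)]
  simp only [norm_smul, norm_mul, norm_pow, Complex.norm_real, Real.norm_eq_abs,
    abs_of_pos (show (0 : ℝ) < 1 + |_| by positivity)]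
  have hsymbol := mul_le_mul_of_nonneg_right (abs_mul_abs_commutatorSymbol_le σ p.1 q.1 r.1)
    (show 0 ≤ ‖f q‖ * ‖f r‖ * ‖f (p - q - r)‖ by positivity)
  calc |p.1| * (|commutatorSymbol σ p.1 q.1 r.1| * ‖f q‖ * ‖f r‖ * ‖f (p - q - r)‖)
      = |p.1| * |commutatorSymbol σ p.1 q.1 r.1| * (‖f q‖ * ‖f r‖ * ‖f (p - q - r)‖) := by ring
    _ ≤ _ := hsymbol
    _ = _ := by
        simp only [Prod.fst_sub]
        ring

@[fun_prop]
lemma aemeasurable_weightedENorm {n : ℕ} {f : ℝ × ℝ → ℂ} (hf : AEStronglyMeasurable f volume) :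
    AEMeasurable (weightedENorm n f) volume := by
  unfold weightedENorm
  fun_prop

lemma enorm_commutatorFourier_le (σ : ℝ) {f : ℝ × ℝ → ℂ} (hf : AEStronglyMeasurable f volume)
    (p : ℝ × ℝ) :
    ‖commutatorFourier σ f p‖ₑ ≤ ENNReal.ofReal (3 * σ ^ 2) *
      (weightedENorm 1 f ⋆ₗ weightedENorm 1 f ⋆ₗ weightedENorm 2 f) p := by
  rw [commutatorFourier, enorm_mul]
  calc ‖(p.1 : ℂ)‖ₑ * ‖∫ w : ℝ × ℝ × ℝ × ℝ, _‖ₑ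
      ≤ ‖(p.1 : ℂ)‖ₑ * ∫⁻ z : (ℝ × ℝ) × ℝ × ℝ,
          ‖(commutatorSymbol σ p.1 z.1.1 z.2.1 : ℂ) * f z.1 * f z.2 * f (p - z.1 - z.2)‖ₑ := by
        gcongr
        exact (enorm_integral_le_lintegral_enorm _).trans_eq
          (lintegral_prod_prod_prod_comm fun z : (ℝ × ℝ) × ℝ × ℝ ↦
            ‖(commutatorSymbol σ p.1 z.1.1 z.2.1 : ℂ) * f z.1 * f z.2 * f (p - z.1 - z.2)‖ₑ)
    _ = ∫⁻ z : (ℝ × ℝ) × ℝ × ℝ, ‖(p.1 : ℂ)‖ₑ *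
          ‖(commutatorSymbol σ p.1 z.1.1 z.2.1 : ℂ) * f z.1 * f z.2 * f (p - z.1 - z.2)‖ₑ :=
        (lintegral_const_mul' _ _ enorm_ne_top).symm
    _ ≤ ∫⁻ z : (ℝ × ℝ) × ℝ × ℝ, ENNReal.ofReal (σ ^ 2) * _ :=
        lintegral_mono fun z ↦ enorm_mul_commutatorSymbol_mul_le σ f p z.1 z.2
    _ = _ := by
        rw [lintegral_const_mul' _ _ ofReal_ne_top, Measure.volume_eq_prod,
          lintegral_mul_mul_sub_sub_symm (by fun_prop) (by fun_prop), ← mul_assoc,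
          mul_comm (ENNReal.ofReal _), ENNReal.ofReal_mul zero_le_three, ENNReal.ofReal_ofNat]

lemma eLpNorm_commutatorFourier_le (σ : ℝ) {f : ℝ × ℝ → ℂ} (hf : AEStronglyMeasurable f volume)
    {p : ℝ≥0∞} (hp : 1 ≤ p) :
    eLpNorm (commutatorFourier σ f) p volume ≤ ENNReal.ofReal (3 * σ ^ 2) *
      (eLpNorm (weightedENorm 1 f) 1 volume ^ 2 * eLpNorm (weightedENorm 2 f) p volume) := by
  calc eLpNorm (commutatorFourier σ f) p volume
      ≤ ENNReal.ofReal (3 * σ ^ 2) *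
          eLpNorm (weightedENorm 1 f ⋆ₗ weightedENorm 1 f ⋆ₗ weightedENorm 2 f) p volume :=
        eLpNorm_le_mul_eLpNorm_of_ae_le_mul'' _ (by fun_prop)
          (.of_forall fun p ↦ enorm_commutatorFourier_le σ hf p)
    _ ≤ ENNReal.ofReal (3 * σ ^ 2) * (eLpNorm (weightedENorm 1 f) 1 volume *
          (eLpNorm (weightedENorm 1 f) 1 volume * eLpNorm (weightedENorm 2 f) p volume)) := by
        gcongr
        refine (eLpNorm_lconvolution_le hp (by fun_prop) (by fun_prop)).trans ?_
        gcongr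
        exact eLpNorm_lconvolution_le hp (by fun_prop) (by fun_prop)
    _ = _ := by ring

lemma eLpNorm_weightedENorm (φ : ℝ → ℝ) (n : ℕ) (f : ℝ × ℝ → ℂ) (p : ℝ≥0∞) :
    eLpNorm (weightedENorm n f) p volume = eLpNorm (bourgainWeight φ n 0 • f) p volume := by
  rw [← eLpNorm_enorm (bourgainWeight φ n 0 • f)]
  congr with q
  simp [bourgainWeight, weightedENorm]

theorem commutator_L2_est_general {φ : ℝ → ℝ} (hφ : Measurable φ) {b : ℝ} (hb : 1 / 2 < b) :
    ∃ C > 0, ∀ (σ : ℝ) (f : ℝ × ℝ → ℂ), AEStronglyMeasurable f volume →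
      eLpNorm (commutatorFourier σ f) 2 volume ≤
        ENNReal.ofReal (C * σ ^ 2) * bourgainENorm φ 2 b f ^ 3 := by
  set K := eLpNorm (bourgainWeight φ (1 - 2) (0 - b)) 2 volume
  have hK : K ≠ ∞ := (eLpNorm_two_bourgainWeight_lt_top hφ (by norm_num) (by linarith)).ne
  refine ⟨3 * K.toReal ^ 2 + 1, by positivity, fun σ f hf ↦ ?_⟩
  have hL1 : eLpNorm (weightedENorm 1 f) 1 volume ≤ K * bourgainENorm φ 2 b f := by
    rw [eLpNorm_weightedENorm φ, Nat.cast_one]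
    exact eLpNorm_one_bourgainWeight_smul_le hφ 1 0 2 b hf
  have hL2 : eLpNorm (weightedENorm 2 f) 2 volume ≤ bourgainENorm φ 2 b f := by
    rw [eLpNorm_weightedENorm φ, Nat.cast_ofNat]
    exact bourgainENorm_mono le_rfl (by linarith) f
  have hconst : ENNReal.ofReal (3 * σ ^ 2) * K ^ 2 ≤
      ENNReal.ofReal ((3 * K.toReal ^ 2 + 1) * σ ^ 2) := by
    rw [← ENNReal.ofReal_toReal hK, ← ENNReal.ofReal_pow toReal_nonneg,
      ← ENNReal.ofReal_mul (by positivity), ENNReal.toReal_ofReal toReal_nonneg]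
    exact ENNReal.ofReal_le_ofReal (by nlinarith [sq_nonneg σ])
  calc eLpNorm (commutatorFourier σ f) 2 volume
      ≤ ENNReal.ofReal (3 * σ ^ 2) *
          (eLpNorm (weightedENorm 1 f) 1 volume ^ 2 * eLpNorm (weightedENorm 2 f) 2 volume) :=
        eLpNorm_commutatorFourier_le σ hf one_le_two
    _ ≤ ENNReal.ofReal (3 * σ ^ 2) *
          ((K * bourgainENorm φ 2 b f) ^ 2 * bourgainENorm φ 2 b f) := by gcongr
    _ = ENNReal.ofReal (3 * σ ^ 2) * K ^ 2 * bourgainENorm φ 2 b f ^ 3 := by ring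
    _ ≤ _ := by gcongr

end Commutator

section Schwartz

open scoped SchwartzMap

/-- The space-time Fourier transform `û(ξ, τ) = ∫ exp (-i (x ξ + t τ)) u(x, t) dx dt` of a Schwartz
function. Mathlib's `𝓕` has phase `exp (-2πi ⟨x, ξ⟩)` and needs an inner product, so it is
transported from `WithLp 2 (ℝ × ℝ)` and rescaled. -/
noncomputable def spacetimeFourier (u : 𝓢(ℝ × ℝ, ℂ)) : 𝓢(ℝ × ℝ, ℂ) :=
  let e := WithLp.prodContinuousLinearEquiv 2 ℝ ℝ ℝ
  let scaling : (ℝ × ℝ) ≃L[ℝ] ℝ × ℝ :=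
    .smulLeft (Units.mk0 (2 * Real.pi)⁻¹ (inv_ne_zero Real.two_pi_pos.ne'))
  .compCLMOfContinuousLinearEquiv ℂ (scaling.trans e.symm)
    (FourierTransform.fourier (SchwartzMap.compCLMOfContinuousLinearEquiv ℂ e u))

lemma spacetimeFourier_apply (u : 𝓢(ℝ × ℝ, ℂ)) (p : ℝ × ℝ) :
    spacetimeFourier u p =
      ∫ q : ℝ × ℝ, Complex.exp (-Complex.I * (q.1 * p.1 + q.2 * p.2)) * u q := by
  change FourierTransform.fourier (SchwartzMap.compCLMOfContinuousLinearEquiv ℂ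
    (WithLp.prodContinuousLinearEquiv 2 ℝ ℝ ℝ) u) (WithLp.toLp 2 ((2 * Real.pi)⁻¹ • p)) = _
  rw [SchwartzMap.fourier_coe, Real.fourier_eq', ← (WithLp.volume_preserving_ofLp ℝ ℝ).integral_comp
    (MeasurableEquiv.toLp 2 (ℝ × ℝ)).symm.measurableEmbedding]
  refine integral_congr_ae (.of_forall fun x ↦ congrArg (Complex.exp · * u x.ofLp) ?_)
  simp only [neg_mul, mul_inv_rev, WithLp.toLp_smul, WithLp.prod_inner_apply, WithLp.ofLp_fst,
    WithLp.ofLp_smul, Prod.smul_fst, smul_eq_mul, RCLike.inner_apply, Real.ringHom_apply,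
    WithLp.ofLp_snd, Prod.smul_snd, Complex.ofReal_neg, Complex.ofReal_mul, Complex.ofReal_ofNat,
    Complex.ofReal_add, Complex.ofReal_inv, neg_inj]
  field_simp

lemma memLp_bourgainWeight_smul {φ : ℝ → ℝ} (hφ : φ.HasTemperateGrowth) (s b : ℝ)
    (u : 𝓢(ℝ × ℝ, ℂ)) (p : ℝ≥0∞) : MemLp (bourgainWeight φ s b • ⇑u) p := by
  obtain ⟨m, hm⟩ := exists_nat_ge s
  obtain ⟨n, hn⟩ := exists_nat_ge b
  have hφ_meas : Measurable φ := hφ.1.continuous.measurable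
  let P : ℝ × ℝ → ℝ := fun q ↦ (2 * (1 + q.1 ^ 2)) ^ m * (2 * (1 + (q.2 - φ q.1) ^ 2)) ^ n
  have hP : P.HasTemperateGrowth := by
    have hfst : Function.HasTemperateGrowth fun q : ℝ × ℝ ↦ q.1 :=
      (ContinuousLinearMap.fst ℝ ℝ ℝ).hasTemperateGrowth
    have hsnd : Function.HasTemperateGrowth fun q : ℝ × ℝ ↦ q.2 :=
      (ContinuousLinearMap.snd ℝ ℝ ℝ).hasTemperateGrowth
    unfold P
    fun_prop
  have hbracket (x : ℝ) : 1 + |x| ≤ 2 * (1 + x ^ 2) := by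
    nlinarith [sq_nonneg (|x| - 1), sq_abs x]
  have hmeas : AEStronglyMeasurable (bourgainWeight φ s b • ⇑u) :=
    (measurable_bourgainWeight hφ_meas).aestronglyMeasurable.smul
      u.continuous.aestronglyMeasurable
  refine ((SchwartzMap.smulLeftCLM ℂ P u).memLp p).mono hmeas (.of_forall fun q ↦ ?_)
  rw [SchwartzMap.smulLeftCLM_apply_apply hP, Pi.smul_apply', norm_smul, norm_smul,
    Real.norm_of_nonneg (bourgainWeight_pos q).le, Real.norm_of_nonneg (by positivity)]
  gcongr
  calc bourgainWeight φ s b q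
      ≤ bourgainWeight φ m n q := bourgainWeight_mono hm hn q
    _ = (1 + |q.1|) ^ m * (1 + |q.2 - φ q.1|) ^ n := by
        rw [bourgainWeight, Real.rpow_natCast, Real.rpow_natCast]
    _ ≤ (2 * (1 + q.1 ^ 2)) ^ m * (2 * (1 + (q.2 - φ q.1) ^ 2)) ^ n := by
        gcongr <;> exact hbracket _

end Schwartz

/-- Estimate (2.7) of Lemma 2.6 of the paper: `‖F(U)‖_{L²_{x,t}} ≤ C σ² ‖U‖³_{X^{2,b}}`,
stated on the Fourier side. `G` is (up to constants) the space-time Fourier transform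
of the commutator term `F(U)`, and the constant `C` is independent of `σ`. -/
theorem commutator_L2_est (b : ℝ) (hb : 1 / 2 < b) :
    ∃ C > 0, ∀ σ : ℝ, 0 < σ → ∀ u : SchwartzMap (ℝ × ℝ) ℂ, ∀ uhat G : ℝ × ℝ → ℂ,
      (∀ p : ℝ × ℝ,
        uhat p = ∫ q : ℝ × ℝ, Complex.exp (-Complex.I * (q.1 * p.1 + q.2 * p.2)) * u q) →
      (∀ ξ τ : ℝ,
        G (ξ, τ) = (ξ : ℂ) * ∫ w : ℝ × ℝ × ℝ × ℝ,
          (((1 - Real.cosh (σ * |ξ|) * (Real.cosh (σ * |w.1|))⁻¹ *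
              (Real.cosh (σ * |w.2.1|))⁻¹ *
              (Real.cosh (σ * |ξ - w.1 - w.2.1|))⁻¹ : ℝ) : ℂ) *
            uhat (w.1, w.2.2.1) * uhat (w.2.1, w.2.2.2) *
            uhat (ξ - w.1 - w.2.1, τ - w.2.2.1 - w.2.2.2))) →
      eLpNorm G 2 volume ≤
        ENNReal.ofReal (C * σ ^ 2 *
          (∫ p : ℝ × ℝ, (1 + |p.1|) ^ 4 * (1 + |p.2 - p.1 ^ 3|) ^ (2 * b) *
            ‖uhat p‖ ^ 2) ^ ((3 : ℝ) / 2)) := by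
  obtain ⟨C, hC, hest⟩ :=
    commutator_L2_est_general (φ := (· ^ 3)) (measurable_id.pow_const 3) hb
  refine ⟨C, hC, fun σ _ u uhat G huhat hG ↦ ?_⟩
  obtain rfl : uhat = spacetimeFourier u :=
    funext fun p ↦ (huhat p).trans (spacetimeFourier_apply u p).symm
  obtain rfl : G = commutatorFourier σ (spacetimeFourier u) := funext fun p ↦ hG p.1 p.2
  refine (hest σ _ (spacetimeFourier u).continuous.aestronglyMeasurable).trans_eq ?_
  rw [bourgainENorm_pow_eq_ofReal_integral_rpow (memLp_bourgainWeight_smul (by fun_prop) _ _ _ _),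
    ← ENNReal.ofReal_mul (by positivity)]
  norm_num [bourgainWeight]
end
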